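/- Let (ρ, u, π) be a smooth solution of the stationary inhomogeneous Navier–Stokes system −Δu + ρ(u·∇)u + ∇π = 0, div u = 0, div(ρu) = 0 in ℝ³, with ρ ∈ L^∞, ∇u ∈ L²(ℝ³) and u ∈ L^p_loc with ∇u ∈ L^{p/2}_loc for some 3 ≤ p < ∞. Then for all R > 1 the Caccioppoli-type estimate ∫_{B_{R/2}} |∇u|² dx ≤ C (∫_{C(R/2,R)} |∇u|^{p/2} dx + ∫_{C(R/2,R)} |u|^p dx)^{2/p} R^{2 - 9/p} (∫_{C(R/2,R)} |u|^p dx)^{1/p} holds, with C independent of R. -/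

import Mathlib

open MeasureTheory ENNReal

/-- The open annulus `C(R/2, R) = {x ∈ ℝ³ : R/2 < |x| < R}`. -/
def annulus (R : ℝ) : Set (EuclideanSpace ℝ (Fin 3)) :=
  {x | R / 2 < ‖x‖ ∧ ‖x‖ < R}

/-- The `i`-th standard basis vector of `ℝ³`. -/
noncomputable def e (i : Fin 3) : EuclideanSpace ℝ (Fin 3) := EuclideanSpace.single i 1

namespace NSC

/-- Three dimensional Euclidean space. -/
abbrev E3 := EuclideanSpace ℝ (Fin 3)

/-- Partial derivative in direction `i`. -/
noncomputable def D (i : Fin 3) (h : E3 → ℝ) (x : E3) : ℝ := fderiv ℝ h x (e i)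

/-- Smooth compactly supported functions. -/
structure Cc (h : E3 → ℝ) : Prop where
  smooth : ContDiff ℝ (⊤ : ℕ∞) h
  supp : HasCompactSupport h

lemma norm_e (i : Fin 3) : ‖e i‖ = 1 := by simp [e]

lemma sum_e (y : E3) : y = ∑ i, y i • e i := by
  ext j
  simp [e, Fin.sum_univ_three]
  fin_cases j <;> simp

lemma fderiv_eq_sum (h : E3 → ℝ) (x y : E3) : fderiv ℝ h x y = ∑ i, y i * D i h x := by
  conv_lhs => rw [sum_e y]
  simp [D]

lemma abs_coord_le (y : E3) (i : Fin 3) : |y i| ≤ ‖y‖ := by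
  simpa using PiLp.norm_apply_le y i

lemma norm_le_sum (y : E3) : ‖y‖ ≤ ∑ i, |y i| := by
  conv_lhs => rw [sum_e y]
  refine (norm_sum_le _ _).trans ?_
  simp [norm_smul, norm_e]

lemma smooth_D {h : E3 → ℝ} (hh : ContDiff ℝ (⊤ : ℕ∞) h) (i : Fin 3) :
    ContDiff ℝ (⊤ : ℕ∞) (D i h) := by
  have := hh.fderiv_right (m := (⊤ : ℕ∞)) (by simp)
  exact this.clm_apply contDiff_const

lemma smooth_diff {h : E3 → ℝ} (hh : ContDiff ℝ (⊤ : ℕ∞) h) : Differentiable ℝ h :=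
  hh.differentiable (by simp)

lemma D_line {h : E3 → ℝ} {x : E3} (hh : DifferentiableAt ℝ h x) (i : Fin 3) :
    HasLineDerivAt ℝ h (D i h x) x (e i) :=
  hh.hasFDerivAt.hasLineDerivAt _

lemma D_mul {f g : E3 → ℝ} {x : E3} (hf : DifferentiableAt ℝ f x) (hg : DifferentiableAt ℝ g x)
    (i : Fin 3) : D i (fun y => f y * g y) x = D i f x * g x + f x * D i g x := by
  unfold D
  rw [fderiv_fun_mul hf hg]
  simp
  ring

lemma D_add {f g : E3 → ℝ} {x : E3} (hf : DifferentiableAt ℝ f x) (hg : DifferentiableAt ℝ g x)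
    (i : Fin 3) : D i (fun y => f y + g y) x = D i f x + D i g x := by
  unfold D
  rw [fderiv_fun_add hf hg]
  simp

lemma D_sub {f g : E3 → ℝ} {x : E3} (hf : DifferentiableAt ℝ f x) (hg : DifferentiableAt ℝ g x)
    (i : Fin 3) : D i (fun y => f y - g y) x = D i f x - D i g x := by
  unfold D
  rw [fderiv_fun_sub hf hg]
  simp

lemma D_const_mul {f : E3 → ℝ} {x : E3} (hf : DifferentiableAt ℝ f x) (c : ℝ)
    (i : Fin 3) : D i (fun y => c * f y) x = c * D i f x := by
  unfold D
  rw [fderiv_const_mul hf]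
  simp

lemma D_congr {f g : E3 → ℝ} {x : E3} (h : f =ᶠ[nhds x] g) (i : Fin 3) : D i f x = D i g x := by
  unfold D; rw [h.fderiv_eq]

lemma D_sum {f : Fin 3 → E3 → ℝ} {x : E3} (hf : ∀ j, DifferentiableAt ℝ (f j) x)
    (i : Fin 3) : D i (fun y => ∑ j, f j y) x = ∑ j, D i (f j) x := by
  unfold D
  rw [fderiv_fun_sum (fun j _ => hf j)]
  simp

lemma D_comm {h : E3 → ℝ} (hh : ContDiff ℝ (⊤ : ℕ∞) h) (i j : Fin 3) (x : E3) :
    D i (D j h) x = D j (D i h) x := by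
  have hd : Differentiable ℝ (fderiv ℝ h) :=
    (hh.fderiv_right (m := (⊤ : ℕ∞)) (by simp)).differentiable (by simp)
  have key : ∀ i j, D i (D j h) x = fderiv ℝ (fderiv ℝ h) x (e i) (e j) := by
    intro i j
    unfold D
    rw [fderiv_clm_apply (hd x) (differentiableAt_const _)]
    simp
  rw [key, key]
  exact second_derivative_symmetric (f := h) (fun y => (smooth_diff hh y).hasFDerivAt)
    (hd x).hasFDerivAt _ _

namespace Cc
variable {h g : E3 → ℝ}

lemma cont (hh : Cc h) : Continuous h := hh.smooth.continuous
lemma diff (hh : Cc h) : Differentiable ℝ h := smooth_diff hh.smooth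
lemma integrable (hh : Cc h) : Integrable h := hh.cont.integrable_of_hasCompactSupport hh.supp
lemma D (hh : Cc h) (i : Fin 3) : Cc (D i h) :=
  ⟨smooth_D hh.smooth i, hh.supp.fderiv_apply ℝ _⟩
lemma bdd (hh : Cc h) : ∃ C, 0 ≤ C ∧ ∀ x, |h x| ≤ C := by
  obtain ⟨C, hC⟩ := hh.supp.exists_bound_of_continuous hh.cont
  exact ⟨C, (norm_nonneg _).trans (hC 0), hC⟩
lemma mul_left (hh : Cc h) (hg : ContDiff ℝ (⊤ : ℕ∞) g) : Cc (fun x => g x * h x) :=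
  ⟨hg.mul hh.smooth, hh.supp.mul_left⟩
lemma mul_right (hh : Cc h) (hg : ContDiff ℝ (⊤ : ℕ∞) g) : Cc (fun x => h x * g x) :=
  ⟨hh.smooth.mul hg, hh.supp.mul_right⟩
lemma add (hh : Cc h) (hg : Cc g) : Cc (fun x => h x + g x) :=
  ⟨hh.smooth.add hg.smooth, hh.supp.add hg.supp⟩
lemma fbdd (hh : Cc h) : ∃ C, 0 ≤ C ∧ ∀ x, ‖fderiv ℝ h x‖ ≤ C := by
  obtain ⟨C, hC⟩ := (hh.supp.fderiv ℝ).exists_bound_of_continuous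
    (hh.smooth.continuous_fderiv (by simp))
  exact ⟨C, (norm_nonneg _).trans (hC 0), hC⟩
end Cc

/-- Integral of a derivative of a smooth function times a compactly supported one. -/
lemma ibp {f g : E3 → ℝ} (hf : ContDiff ℝ (⊤ : ℕ∞) f) (hg : Cc g) (i : Fin 3) :
    ∫ x, f x * D i g x = - ∫ x, D i f x * g x := by
  unfold D
  exact integral_mul_fderiv_eq_neg_fderiv_mul_of_integrable
    (hg.mul_left (smooth_D hf i)).integrable ((hg.D i).mul_left hf).integrable
    (hg.mul_left hf).integrable (fun x _ => smooth_diff hf x) (fun x _ => hg.diff x)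

lemma integral_D {g : E3 → ℝ} (hg : Cc g) (i : Fin 3) : ∫ x, D i g x = 0 := by
  have := ibp (f := fun _ => (1:ℝ)) contDiff_const hg i
  simpa [D] using this

/-- decaying weight -/
noncomputable def wt (x : E3) : ℝ := ((1 + ‖x‖) ^ 4)⁻¹

lemma wt_pos (x : E3) : 0 < wt x := by unfold wt; positivity

lemma wt_le_one (x : E3) : wt x ≤ 1 := by
  unfold wt
  apply inv_le_one_of_one_le₀
  exact one_le_pow₀ (by linarith [norm_nonneg x])

lemma wt_integrable : Integrable wt := by
  have := integrable_one_add_norm (E := E3) (μ := volume) (r := 4) (by simp; norm_num)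
  refine this.congr (Filter.Eventually.of_forall fun x => ?_)
  simp only [wt]
  rw [Real.rpow_neg (by positivity)]
  norm_cast

lemma gauss_decay (r : ℝ) (hr : 0 ≤ r) :
    (1 + r) ^ 8 * Real.exp (-(r ^ 2) / 2) ≤ 6144 * Real.exp (1 / 2) := by
  have h1 : (1 + r) ^ 2 ≤ 2 * (1 + r ^ 2) := by nlinarith [sq_nonneg (1 - r)]
  have h2 : (1 + r) ^ 8 ≤ (2 * (1 + r ^ 2)) ^ 4 := by
    calc (1 + r) ^ 8 = ((1 + r) ^ 2) ^ 4 := by ring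
      _ ≤ _ := by gcongr
  have h3 := Real.pow_div_factorial_le_exp ((1 + r ^ 2) / 2) (by positivity) 4
  have h4 : Real.exp ((1 + r ^ 2) / 2) = Real.exp (1 / 2) * Real.exp (r ^ 2 / 2) := by
    rw [← Real.exp_add]; ring_nf
  have h5 : Real.exp (r ^ 2 / 2) * Real.exp (-(r ^ 2) / 2) = 1 := by
    rw [← Real.exp_add]; ring_nf; simp
  have h6 : (1 + r) ^ 8 ≤ 6144 * (Real.exp (1 / 2) * Real.exp (r ^ 2 / 2)) := by
    rw [← h4]
    simp [Nat.factorial] at h3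
    nlinarith
  calc _ ≤ 6144 * (Real.exp (1 / 2) * Real.exp (r ^ 2 / 2)) * Real.exp (-(r ^ 2) / 2) := by gcongr
    _ = 6144 * Real.exp (1 / 2) * (Real.exp (r ^ 2 / 2) * Real.exp (-(r ^ 2) / 2)) := by ring
    _ = _ := by rw [h5, mul_one]

/-- unnormalized Gaussian -/
noncomputable def G0 (y : E3) : ℝ := Real.exp (-(‖y‖ ^ 2) / 2)

lemma G0_pos (y : E3) : 0 < G0 y := Real.exp_pos _

lemma G0_cont : Continuous G0 := by unfold G0; fun_prop

lemma G0_smooth : ContDiff ℝ (⊤ : ℕ∞) G0 := by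
  unfold G0
  exact ((contDiff_norm_sq ℝ).neg.div_const _).exp

lemma G0_wt (y : E3) : (1 + ‖y‖) ^ 4 * G0 y ≤ 6144 * Real.exp (1 / 2) * wt y := by
  have := gauss_decay ‖y‖ (norm_nonneg y)
  unfold wt G0
  rw [← div_eq_mul_inv, le_div_iff₀ (by positivity)]
  calc _ = (1 + ‖y‖) ^ 8 * Real.exp (-(‖y‖ ^ 2) / 2) := by ring
    _ ≤ _ := this

lemma G0_int4 : Integrable (fun y => (1 + ‖y‖) ^ 4 * G0 y) := by
  refine (wt_integrable.const_mul (6144 * Real.exp (1 / 2))).mono'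
    (by have := G0_cont; exact (by fun_prop : Continuous _).aestronglyMeasurable)
    (Filter.Eventually.of_forall fun y => ?_)
  rw [Real.norm_of_nonneg (by have := G0_pos y; positivity)]
  exact G0_wt y

lemma G0_int : Integrable G0 := by
  refine G0_int4.mono' G0_cont.aestronglyMeasurable (Filter.Eventually.of_forall fun y => ?_)
  rw [Real.norm_of_nonneg (G0_pos y).le]
  have : 1 ≤ (1 + ‖y‖) ^ 4 := one_le_pow₀ (by linarith [norm_nonneg y])
  nlinarith [G0_pos y]

lemma G0_integral_pos : 0 < ∫ y, G0 y := by
  rw [integral_pos_iff_support_of_nonneg (fun y => (G0_pos y).le) G0_int]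
  have : Function.support G0 = Set.univ := by
    ext y; simp [(G0_pos y).ne']
  rw [this]; simp

/-- normalized Gaussian -/
noncomputable def c0 : ℝ := (∫ y, G0 y)⁻¹

lemma c0_pos : 0 < c0 := inv_pos.2 G0_integral_pos

/-- standard Gaussian density -/
noncomputable def G (y : E3) : ℝ := c0 * G0 y

lemma G_pos (y : E3) : 0 < G y := mul_pos c0_pos (G0_pos y)
lemma G_cont : Continuous G := G0_cont.const_mul _ 
lemma G_smooth : ContDiff ℝ (⊤ : ℕ∞) G := contDiff_const.mul G0_smooth
lemma G_int : Integrable G := G0_int.const_mul _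
lemma G_int4 : Integrable (fun y => (1 + ‖y‖) ^ 4 * G y) := by
  refine (G0_int4.const_mul c0).congr (Filter.Eventually.of_forall fun y => ?_)
  simp [G]; ring
lemma G_integral : ∫ y, G y = 1 := by
  simp only [G]
  rw [integral_const_mul, c0, inv_mul_cancel₀ G0_integral_pos.ne']
lemma G_neg (y : E3) : G (-y) = G y := by simp [G, G0]
lemma G_int1 : Integrable (fun y => ‖y‖ * G y) := by
  refine G_int4.mono' (by have := G_cont; exact (by fun_prop : Continuous _).aestronglyMeasurable)
    (Filter.Eventually.of_forall fun y => ?_)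
  rw [Real.norm_of_nonneg (by have := G_pos y; positivity)]
  have h0 := norm_nonneg y
  have : 1 + ‖y‖ ≤ (1 + ‖y‖) ^ 4 := le_self_pow₀ (by linarith) (by norm_num)
  nlinarith [G_pos y]

lemma G0_D (i : Fin 3) (y : E3) : D i G0 y = - (y i) * G0 y := by
  have h1 : HasFDerivAt (fun y : E3 => ‖y‖ ^ 2) (2 • (innerSL ℝ y)) y :=
    (hasStrictFDerivAt_norm_sq y).hasFDerivAt
  have h2 : HasFDerivAt G0 _ y := ((h1.neg).mul_const (2⁻¹ : ℝ)).exp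
  unfold D
  rw [h2.fderiv]
  have : inner ℝ y (e i) = y i := by simp [e, EuclideanSpace.inner_single_right]
  simp [G0, this, div_eq_mul_inv]
  ring

lemma G_D (i : Fin 3) (y : E3) : D i G y = - (y i) * G y := by
  have := D_const_mul (f := G0) (x := y) (smooth_diff G0_smooth y) c0 i
  simp only [G0_D] at this
  unfold G
  rw [this]; ring

/-- The averaging operator. -/
noncomputable def T (K : E3 → ℝ) (s : ℝ) (w : E3 → ℝ) (x : E3) : ℝ := ∫ y, K y * w (x + s • y)

lemma bdd_mul_int {K w : E3 → ℝ} (hK : Integrable K) (hw : Continuous w) {C : ℝ}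
    (hC : ∀ x, |w x| ≤ C) : Integrable (fun y => K y * w y) := by
  exact hK.mul_bdd (c := C) hw.aestronglyMeasurable (Filter.Eventually.of_forall hC)

lemma T_int {K w : E3 → ℝ} (hK : Integrable K) (hw : Cc w) (s : ℝ) (x : E3) :
    Integrable (fun y => K y * w (x + s • y)) := by
  obtain ⟨C, _, hC⟩ := hw.bdd
  exact bdd_mul_int hK (w := fun y => w (x + s • y)) (by have := hw.cont; fun_prop) (fun y => hC _)

lemma T_hasFDeriv {K w : E3 → ℝ} (hK : Integrable K) (hw : Cc w) (s : ℝ) (x : E3) :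
    HasFDerivAt (T K s w) (∫ y, K y • fderiv ℝ w (x + s • y)) x := by
  obtain ⟨C, hC0, hC⟩ := hw.fbdd
  have hc : Continuous (fderiv ℝ w) := hw.smooth.continuous_fderiv (by simp)
  have hwc := hw.cont
  refine hasFDerivAt_integral_of_dominated_of_fderiv_le (bound := fun y => |K y| * C)
    (F' := fun x y => K y • fderiv ℝ w (x + s • y)) Filter.univ_mem ?_
    (T_int hK hw s x) ?_ ?_ (hK.abs.mul_const C) ?_
  · exact Filter.Eventually.of_forall fun x => (T_int hK hw s x).aestronglyMeasurable
  · exact hK.aestronglyMeasurable.smul (by fun_prop : Continuous fun y =>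
      fderiv ℝ w (x + s • y)).aestronglyMeasurable
  · refine Filter.Eventually.of_forall fun y z _ => ?_
    rw [norm_smul, Real.norm_eq_abs]
    gcongr
    exact hC _
  · refine Filter.Eventually.of_forall fun y z _ => ?_
    have h1 : HasFDerivAt (fun z => w (z + s • y)) (fderiv ℝ w (z + s • y)) z :=
      (hasFDerivAt_comp_add_right (s • y)).2 (hw.diff (z + s • y)).hasFDerivAt
    exact h1.const_mul (K y)

lemma T_diff {K w : E3 → ℝ} (hK : Integrable K) (hw : Cc w) (s : ℝ) :
    Differentiable ℝ (T K s w) := fun x => (T_hasFDeriv hK hw s x).differentiableAt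

lemma T_D {K w : E3 → ℝ} (hK : Integrable K) (hw : Cc w) (s : ℝ) (i : Fin 3) :
    D i (T K s w) = T K s (D i w) := by
  ext x
  have hc : Continuous (fderiv ℝ w) := hw.smooth.continuous_fderiv (by simp)
  obtain ⟨C, hC0, hC⟩ := hw.fbdd
  unfold D
  rw [(T_hasFDeriv hK hw s x).fderiv, ContinuousLinearMap.integral_apply]
  · simp [T]
  · refine (hK.abs.mul_const C).mono' (hK.aestronglyMeasurable.smul (by fun_prop : Continuous fun y =>
      fderiv ℝ w (x + s • y)).aestronglyMeasurable) (Filter.Eventually.of_forall fun y => ?_)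
    rw [norm_smul, Real.norm_eq_abs]
    gcongr
    exact hC _

lemma T_cont {K w : E3 → ℝ} (hK : Integrable K) (hw : Cc w) (s : ℝ) :
    Continuous (T K s w) := (T_diff hK hw s).continuous

lemma T_hasDeriv {K w : E3 → ℝ} (hK : Integrable K) (hK1 : Integrable (fun y => ‖y‖ * K y))
    (hw : Cc w) (s : ℝ) (x : E3) :
    HasDerivAt (fun s => T K s w x) (∫ y, K y * fderiv ℝ w (x + s • y) y) s := by
  obtain ⟨C, hC0, hC⟩ := hw.fbdd
  have hc : Continuous (fderiv ℝ w) := hw.smooth.continuous_fderiv (by simp)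
  have hwc := hw.cont
  refine (hasDerivAt_integral_of_dominated_loc_of_deriv_le (bound := fun y => |‖y‖ * K y| * C)
    (F' := fun s y => K y * fderiv ℝ w (x + s • y) y) Filter.univ_mem ?_
    (T_int hK hw s x) ?_ ?_ (hK1.abs.mul_const C) ?_).2
  · exact Filter.Eventually.of_forall fun s => (T_int hK hw s x).aestronglyMeasurable
  · exact hK.aestronglyMeasurable.mul (by fun_prop : Continuous fun y =>
      fderiv ℝ w (x + s • y) y).aestronglyMeasurable
  · refine Filter.Eventually.of_forall fun y z _ => ?_
    rw [norm_mul, Real.norm_eq_abs, abs_mul, abs_of_nonneg (norm_nonneg y), mul_comm ‖y‖, mul_assoc]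
    gcongr
    refine (ContinuousLinearMap.le_opNorm _ _).trans ?_
    rw [mul_comm]; gcongr; exact hC _
  · refine Filter.Eventually.of_forall fun y z _ => ?_
    have h2 : HasDerivAt (fun s : ℝ => x + s • y) y z := by
      simpa using ((hasDerivAt_id z).smul_const y).const_add x
    have h1 : HasDerivAt (fun z : ℝ => w (x + z • y)) (fderiv ℝ w (x + z • y) y) z :=
      (hw.diff (x + z • y)).hasFDerivAt.comp_hasDerivAt z h2
    exact h1.const_mul (K y)

/-- Heat operator. -/
noncomputable abbrev P (s : ℝ) (w : E3 → ℝ) (x : E3) : ℝ := T G s w x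

lemma gauss_ibp {w : E3 → ℝ} (hw : Cc w) (s : ℝ) (x : E3) (i : Fin 3) :
    ∫ y, y i * G y * w (x + s • y) = s * P s (D i w) x := by
  obtain ⟨C, hC0, hC⟩ := hw.bdd
  have hcomp : ∀ y, HasLineDerivAt ℝ (fun y => w (x + s • y)) (s * D i w (x + s • y)) y (e i) := by
    intro y
    have h1 : HasFDerivAt (fun y : E3 => x + s • y) (s • ContinuousLinearMap.id ℝ E3) y :=
      ((hasFDerivAt_id y).const_smul s).const_add x
    have := ((hw.diff (x + s • y)).hasFDerivAt.comp y h1).hasLineDerivAt (e i)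
    simpa [D] using! this
  have hGi : Integrable (fun y : E3 => y i * G y) := by
    refine G_int1.mono' (by have := G_cont; exact (by fun_prop : Continuous _).aestronglyMeasurable)
      (Filter.Eventually.of_forall fun y => ?_)
    rw [norm_mul, Real.norm_of_nonneg (G_pos y).le]
    have := G_pos y
    gcongr
    exact abs_coord_le y i
  have hwc : Continuous (fun y => w (x + s • y)) := by have := hw.cont; fun_prop
  have hi1 : Integrable (fun y => D i G y * w (x + s • y)) := by
    simp only [G_D]
    refine (bdd_mul_int hGi hwc (fun y => hC _)).neg.congr (Filter.Eventually.of_forall fun y => ?_)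
    simp
  have := integral_bilinear_hasLineDerivAt_right_eq_neg_left_of_integrable (μ := (volume : Measure E3))
    (f := G) (f' := D i G) (g := fun y => w (x + s • y)) (g' := fun y => s * D i w (x + s • y))
    (v := e i) (B := ContinuousLinearMap.mul ℝ ℝ) hi1 ?_ (T_int G_int hw s x)
    (fun y _ => D_line (smooth_diff G_smooth y) i) (fun y _ => hcomp y)
  · simp only [ContinuousLinearMap.mul_apply', G_D] at this
    unfold P T
    rw [← integral_const_mul]
    calc ∫ y, y i * G y * w (x + s • y) = - ∫ y, -(y i) * G y * w (x + s • y) := by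
          rw [← integral_neg]; congr 1; ext y; ring
      _ = _ := by rw [← this]; congr 1; ext y; ring
  · refine ((T_int G_int (hw.D i) s x).const_mul s).congr (Filter.Eventually.of_forall fun y => ?_)
    simp; ring

lemma P_hasDeriv {w : E3 → ℝ} (hw : Cc w) (s : ℝ) (x : E3) :
    HasDerivAt (fun s => P s w x) (s * ∑ i, P s (D i (D i w)) x) s := by
  have h := T_hasDeriv G_int G_int1 hw s x
  convert h using 1
  rw [Finset.mul_sum]
  have : ∀ y, G y * fderiv ℝ w (x + s • y) y = ∑ i, y i * G y * D i w (x + s • y) := by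
    intro y
    rw [fderiv_eq_sum, Finset.mul_sum]
    refine Finset.sum_congr rfl fun i _ => by ring
  simp only [this]
  rw [integral_finsetSum]
  · refine Finset.sum_congr rfl fun i _ => (gauss_ibp (hw.D i) s x i).symm
  · intro i _
    have hGi : Integrable (fun y : E3 => y i * G y) := by
      refine G_int1.mono' (by have := G_cont; exact (by fun_prop : Continuous _).aestronglyMeasurable)
        (Filter.Eventually.of_forall fun y => ?_)
      rw [norm_mul, Real.norm_of_nonneg (G_pos y).le]
      have := G_pos y
      gcongr
      exact abs_coord_le y i
    exact T_int hGi (hw.D i) s x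

lemma P_decay {w : E3 → ℝ} (hw : Cc w) :
    ∃ C, 0 ≤ C ∧ ∀ s, |s| ≤ 2 → ∀ x, |P s w x| ≤ C * wt x := by
  have hc : HasCompactSupport (fun x => (1 + ‖x‖) ^ 4 * w x) := hw.supp.mul_left
  obtain ⟨C, hC⟩ := hc.exists_bound_of_continuous (by have := hw.cont; fun_prop)
  have hC0 : 0 ≤ C := (norm_nonneg _).trans (hC 0)
  refine ⟨16 * C * ∫ y, (1 + ‖y‖) ^ 4 * G y, mul_nonneg (by positivity)
    (integral_nonneg fun y => by have := G_pos y; positivity), fun s hs x => ?_⟩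
  unfold P T wt
  rw [← div_eq_mul_inv, le_div_iff₀ (by positivity)]
  have hx0 : (0:ℝ) ≤ (1 + ‖x‖) ^ 4 := by positivity
  have hkey : ‖∫ y, G y * w (x + s • y) * (1 + ‖x‖) ^ 4‖ ≤ ∫ y, 16 * C * ((1 + ‖y‖) ^ 4 * G y) := by
    refine norm_integral_le_of_norm_le (G_int4.const_mul (16 * C))
      (Filter.Eventually.of_forall fun y => ?_)
    have h1 : 1 + ‖x‖ ≤ (1 + ‖x + s • y‖) * (2 * (1 + ‖y‖)) := by
      have : ‖x‖ ≤ ‖x + s • y‖ + 2 * ‖y‖ := by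
        calc ‖x‖ = ‖(x + s • y) - s • y‖ := by simp
          _ ≤ ‖x + s • y‖ + ‖s • y‖ := norm_sub_le _ _
          _ ≤ _ := by rw [norm_smul, Real.norm_eq_abs]; gcongr
      nlinarith [norm_nonneg (x + s • y), norm_nonneg y, mul_nonneg (norm_nonneg (x + s • y)) (norm_nonneg y)]
    have h2 : (1 + ‖x‖) ^ 4 ≤ (1 + ‖x + s • y‖) ^ 4 * (16 * (1 + ‖y‖) ^ 4) := by
      calc (1 + ‖x‖) ^ 4 ≤ ((1 + ‖x + s • y‖) * (2 * (1 + ‖y‖))) ^ 4 := by gcongr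
        _ = _ := by ring
    have h3 := hC (x + s • y)
    rw [norm_mul, Real.norm_of_nonneg (by positivity), Real.norm_eq_abs] at h3
    rw [norm_mul, norm_mul, Real.norm_of_nonneg (G_pos y).le, Real.norm_of_nonneg (by positivity : 0 ≤ (1 + ‖x‖) ^ 4), Real.norm_eq_abs]
    have hG := G_pos y
    calc G y * |w (x + s • y)| * (1 + ‖x‖) ^ 4
        ≤ G y * |w (x + s • y)| * ((1 + ‖x + s • y‖) ^ 4 * (16 * (1 + ‖y‖) ^ 4)) := by gcongr
      _ = G y * (16 * (1 + ‖y‖) ^ 4) * ((1 + ‖x + s • y‖) ^ 4 * |w (x + s • y)|) := by ring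
      _ ≤ G y * (16 * (1 + ‖y‖) ^ 4) * C := by gcongr
      _ = _ := by ring
  rw [integral_mul_const, norm_mul, Real.norm_of_nonneg hx0, Real.norm_eq_abs, integral_const_mul] at hkey
  exact hkey

lemma P_zero {w : E3 → ℝ} (x : E3) : P 0 w x = w x := by
  simp [P, T, integral_mul_const, G_integral]

end NSC

namespace NSC

/-- continuous bounded functions -/
def Bd (h : E3 → ℝ) : Prop := Continuous h ∧ ∃ C, 0 ≤ C ∧ ∀ x, |h x| ≤ C
/-- continuous decaying functions -/
def Dec (h : E3 → ℝ) : Prop := Continuous h ∧ ∃ C, 0 ≤ C ∧ ∀ x, |h x| ≤ C * wt x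

lemma wt_cont : Continuous wt := by
  unfold wt
  refine Continuous.inv₀ (by fun_prop) fun x => by positivity

lemma Dec.bd {h : E3 → ℝ} (hh : Dec h) : Bd h := by
  obtain ⟨h1, C, h0, h2⟩ := hh
  refine ⟨h1, C, h0, fun x => (h2 x).trans ?_⟩
  have := wt_le_one x
  nlinarith

lemma Dec.int {h : E3 → ℝ} (hh : Dec h) : Integrable h := by
  obtain ⟨h1, C, h0, h2⟩ := hh
  exact (wt_integrable.const_mul C).mono' h1.aestronglyMeasurable (Filter.Eventually.of_forall h2)

lemma Bd.mul_dec {h k : E3 → ℝ} (hh : Bd h) (hk : Dec k) : Dec (fun x => h x * k x) := by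
  obtain ⟨h1, C, h0, h2⟩ := hh
  obtain ⟨k1, C', k0, k2⟩ := hk
  refine ⟨h1.mul k1, C * C', by positivity, fun x => ?_⟩
  rw [abs_mul, mul_assoc]
  exact mul_le_mul (h2 x) (k2 x) (abs_nonneg _) h0

lemma Bd.mul {h k : E3 → ℝ} (hh : Bd h) (hk : Bd k) : Bd (fun x => h x * k x) := by
  obtain ⟨h1, C, h0, h2⟩ := hh
  obtain ⟨k1, C', k0, k2⟩ := hk
  refine ⟨h1.mul k1, C * C', by positivity, fun x => ?_⟩
  rw [abs_mul]
  exact mul_le_mul (h2 x) (k2 x) (abs_nonneg _) h0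

lemma Dec.add {h k : E3 → ℝ} (hh : Dec h) (hk : Dec k) : Dec (fun x => h x + k x) := by
  obtain ⟨h1, C, h0, h2⟩ := hh
  obtain ⟨k1, C', k0, k2⟩ := hk
  refine ⟨h1.add k1, C + C', by positivity, fun x => ?_⟩
  rw [add_mul]
  exact (abs_add_le _ _).trans (add_le_add (h2 x) (k2 x))

lemma Bd.const (c : ℝ) : Bd (fun _ => c) := ⟨continuous_const, |c|, abs_nonneg _, fun _ => le_rfl⟩

lemma Dec.const_mul {h : E3 → ℝ} (hh : Dec h) (c : ℝ) : Dec (fun x => c * h x) :=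
  (Bd.const c).mul_dec hh

lemma Dec.sum {h : Fin 3 → E3 → ℝ} (hh : ∀ l, Dec (h l)) : Dec (fun x => ∑ l, h l x) := by
  simp only [Fin.sum_univ_three]
  exact ((hh 0).add (hh 1)).add (hh 2)

lemma P_dec {w : E3 → ℝ} (hw : Cc w) {s : ℝ} (hs : |s| ≤ 2) : Dec (P s w) := by
  obtain ⟨C, h0, h⟩ := P_decay hw
  exact ⟨T_cont G_int hw s, C, h0, h s hs⟩

lemma ibp_dec {F F' h h' : E3 → ℝ} (v : E3) (hF : Bd F) (hF' : Dec F') (hh : Dec h) (hh' : Dec h')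
    (dF : ∀ x, HasLineDerivAt ℝ F (F' x) x v) (dh : ∀ x, HasLineDerivAt ℝ h (h' x) x v) :
    ∫ x, F x * h' x = - ∫ x, F' x * h x := by
  have := integral_bilinear_hasLineDerivAt_right_eq_neg_left_of_integrable (μ := (volume : Measure E3))
    (f := F) (f' := F') (g := h) (g' := h')
    (v := v) (B := ContinuousLinearMap.mul ℝ ℝ) (hF'.bd.mul_dec hh).int (hF.mul_dec hh').int
    (hF.mul_dec hh).int (fun y _ => dF y) (fun y _ => dh y)
  simpa using this

/-- regularized modulus -/
noncomputable def kk (ε b : ℝ) : ℝ := √(b ^ 2 + ε ^ 2)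
/-- regularized sum -/
noncomputable def SS (ε a b : ℝ) : ℝ := a ^ 2 + kk ε b
/-- Bellman function -/
noncomputable def qq (ε a b : ℝ) : ℝ := SS ε a b * √(SS ε a b) - ε * √ε


lemma kk_pos {ε : ℝ} (hε : 0 < ε) (b : ℝ) : 0 < kk ε b := by unfold kk; positivity
lemma kk_ge {ε : ℝ} (_hε : 0 < ε) (b : ℝ) : ε ≤ kk ε b := by
  unfold kk; apply Real.le_sqrt_of_sq_le; nlinarith [sq_nonneg b]
lemma kk_le {ε : ℝ} (hε : 0 < ε) (b : ℝ) : kk ε b ≤ |b| + ε := by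
  unfold kk; rw [Real.sqrt_le_left (by positivity)]
  rw [← sq_abs b]; nlinarith [abs_nonneg b]
lemma kk_abs {ε : ℝ} (_hε : 0 < ε) (b : ℝ) : |b| ≤ kk ε b := by
  unfold kk; apply Real.le_sqrt_of_sq_le; rw [sq_abs]; nlinarith
lemma kk_sq {ε : ℝ} (hε : 0 < ε) (b : ℝ) : kk ε b ^ 2 = b ^ 2 + ε ^ 2 := by
  unfold kk; rw [Real.sq_sqrt (by positivity)]
lemma SS_pos {ε : ℝ} (hε : 0 < ε) (a b : ℝ) : 0 < SS ε a b := by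
  unfold SS; have := kk_pos hε b; positivity
lemma SS_ge {ε : ℝ} (hε : 0 < ε) (a b : ℝ) : ε ≤ SS ε a b := by
  unfold SS; have := kk_ge hε b; nlinarith [sq_nonneg a]
lemma SS_le {ε : ℝ} (hε : 0 < ε) (a b : ℝ) : SS ε a b ≤ a ^ 2 + |b| + ε := by
  unfold SS; have := kk_le hε b; linarith

lemma qq_nonneg {ε : ℝ} (hε : 0 < ε) (a b : ℝ) : 0 ≤ qq ε a b := by
  unfold qq
  have h := SS_ge hε a b
  have := SS_pos hε a b
  have h2 := Real.sqrt_le_sqrt h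
  have := mul_le_mul h h2 (Real.sqrt_nonneg _) this.le
  linarith

lemma qq_le {ε : ℝ} (hε : 0 < ε) (a b : ℝ) : qq ε a b ≤ 2 * (a ^ 2 + |b|) * √(SS ε a b) := by
  unfold qq
  have hS := SS_pos hε a b
  have h := SS_le hε a b
  have h2 := Real.sqrt_le_sqrt (SS_ge hε a b)
  have e1 := Real.sq_sqrt hS.le
  have e2 := Real.sq_sqrt hε.le
  have p1 := Real.sqrt_pos.2 hS
  have p2 := Real.sqrt_pos.2 hε
  set σ := √(SS ε a b)
  set τ := √ε
  rw [← e1, ← e2] at h ⊢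
  have h3 : σ ^ 2 - τ ^ 2 ≤ a ^ 2 + |b| := by linarith
  have h4 : σ ^ 2 * σ - τ ^ 2 * τ ≤ 2 * (σ ^ 2 - τ ^ 2) * σ := by
    have : 0 ≤ (σ - τ) * (σ * σ + σ * τ - τ * τ) :=
      mul_nonneg (by linarith) (by nlinarith)
    nlinarith
  nlinarith

lemma kk_deriv {ε : ℝ} (hε : 0 < ε) {b : ℝ → ℝ} {b' t : ℝ} (hb : HasDerivAt b b' t) :
    HasDerivAt (fun t => kk ε (b t)) (b t / kk ε (b t) * b') t := by
  have h1 : HasDerivAt (fun t => b t ^ 2 + ε ^ 2) (2 * b t * b') t := by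
    have := (hb.pow 2).add_const (ε ^ 2); simpa using! this
  have := h1.sqrt (by positivity)
  refine this.congr_deriv ?_
  unfold kk
  have : 0 < √(b t ^ 2 + ε ^ 2) := by positivity
  field_simp

lemma SS_deriv {ε : ℝ} (hε : 0 < ε) {a b : ℝ → ℝ} {a' b' t : ℝ} (ha : HasDerivAt a a' t) (hb : HasDerivAt b b' t) :
    HasDerivAt (fun t => SS ε (a t) (b t)) (2 * a t * a' + b t / kk ε (b t) * b') t := by
  have h1 : HasDerivAt (fun t => a t ^ 2) (2 * a t * a') t := by
    simpa using! ha.pow 2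
  exact h1.add (kk_deriv hε hb)

lemma sS_deriv {ε : ℝ} (hε : 0 < ε) {a b : ℝ → ℝ} {a' b' t : ℝ} (ha : HasDerivAt a a' t) (hb : HasDerivAt b b' t) :
    HasDerivAt (fun t => √(SS ε (a t) (b t)))
      ((2 * a t * a' + b t / kk ε (b t) * b') / (2 * √(SS ε (a t) (b t)))) t :=
  (SS_deriv hε ha hb).sqrt (SS_pos hε _ _).ne'

lemma qq_deriv {ε : ℝ} (hε : 0 < ε) {a b : ℝ → ℝ} {a' b' t : ℝ} (ha : HasDerivAt a a' t) (hb : HasDerivAt b b' t) :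
    HasDerivAt (fun t => qq ε (a t) (b t))
      (3 * a t * √(SS ε (a t) (b t)) * a' +
        3 / 2 * √(SS ε (a t) (b t)) * (b t / kk ε (b t)) * b') t := by
  have := ((SS_deriv hε ha hb).mul (sS_deriv hε ha hb)).sub_const (ε * √ε)
  refine this.congr_deriv ?_
  have hS := SS_pos hε (a t) (b t)
  have e1 := Real.sq_sqrt hS.le
  have p1 := Real.sqrt_pos.2 hS
  set σ := √(SS ε (a t) (b t))
  rw [← e1]
  field_simp
  ring

lemma Qa_deriv {ε : ℝ} (hε : 0 < ε) {a b : ℝ → ℝ} {a' b' t : ℝ} (ha : HasDerivAt a a' t) (hb : HasDerivAt b b' t) :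
    HasDerivAt (fun t => 3 * a t * √(SS ε (a t) (b t)))
      (3 * a' * √(SS ε (a t) (b t)) + 3 * a t *
      ((2 * a t * a' + b t / kk ε (b t) * b') / (2 * √(SS ε (a t) (b t))))) t :=
  (ha.const_mul 3).mul (sS_deriv hε ha hb)

lemma Qb_deriv {ε : ℝ} (hε : 0 < ε) {a b : ℝ → ℝ} {a' b' t : ℝ} (ha : HasDerivAt a a' t) (hb : HasDerivAt b b' t) :
    HasDerivAt (fun t => 3 / 2 * √(SS ε (a t) (b t)) * (b t / kk ε (b t)))
      (3 / 2 * ((2 * a t * a' + b t / kk ε (b t) * b') / (2 * √(SS ε (a t) (b t))))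
        * (b t / kk ε (b t)) + 3 / 2 * √(SS ε (a t) (b t)) * (ε ^ 2 / kk ε (b t) ^ 3 * b')) t := by
  have h1 : HasDerivAt (fun t => b t / kk ε (b t)) (ε ^ 2 / kk ε (b t) ^ 3 * b') t := by
    have := hb.div (kk_deriv hε hb) (kk_pos hε _).ne'
    refine this.congr_deriv ?_
    have hk := kk_pos hε (b t)
    have hs := kk_sq hε (b t)
    have : ε ^ 2 = kk ε (b t) ^ 2 - b t ^ 2 := by linarith
    rw [this]
    field_simp
  exact ((sS_deriv hε ha hb).const_mul (3 / 2)).mul h1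

/-- Hessian form -/
lemma hess_bounds {ε : ℝ} (hε : 0 < ε) (a b α β : ℝ) :
    0 ≤ (3 * α * √(SS ε a b) + 3 * a * ((2 * a * α + b / kk ε b * β) / (2 * √(SS ε a b)))) * α +
      (3 / 2 * ((2 * a * α + b / kk ε b * β) / (2 * √(SS ε a b))) * (b / kk ε b)
        + 3 / 2 * √(SS ε a b) * (ε ^ 2 / kk ε b ^ 3 * β)) * β ∧
    3 * (√(SS ε a b) * α ^ 2) ≤
      (3 * α * √(SS ε a b) + 3 * a * ((2 * a * α + b / kk ε b * β) / (2 * √(SS ε a b)))) * α +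
      (3 / 2 * ((2 * a * α + b / kk ε b * β) / (2 * √(SS ε a b))) * (b / kk ε b)
        + 3 / 2 * √(SS ε a b) * (ε ^ 2 / kk ε b ^ 3 * β)) * β ∧
    (β ^ 2 / √(SS ε a b)) ≤ 8 / 3 * (
      (3 * α * √(SS ε a b) + 3 * a * ((2 * a * α + b / kk ε b * β) / (2 * √(SS ε a b)))) * α +
      (3 / 2 * ((2 * a * α + b / kk ε b * β) / (2 * √(SS ε a b))) * (b / kk ε b)
        + 3 / 2 * √(SS ε a b) * (ε ^ 2 / kk ε b ^ 3 * β)) * β) := by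
  have hS := SS_pos hε a b
  have e1 := Real.sq_sqrt hS.le
  have p1 := Real.sqrt_pos.2 hS
  have hk := kk_pos hε b
  have hs := kk_sq hε b
  have hSd : SS ε a b = a ^ 2 + kk ε b := rfl
  set σ := √(SS ε a b)
  set k := kk ε b
  rw [hSd] at e1
  obtain ⟨m, hm⟩ : ∃ m, m = b / k := ⟨_, rfl⟩
  obtain ⟨n, hn⟩ : ∃ n, n = ε ^ 2 / k ^ 3 := ⟨_, rfl⟩
  obtain ⟨τ, hτ⟩ : ∃ τ, τ = 1 / σ := ⟨_, rfl⟩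
  have hn0 : 0 < n := by rw [hn]; positivity
  have hτ0 : 0 < τ := by rw [hτ]; positivity
  have hmn : m ^ 2 + k * n = 1 := by
    rw [hm, hn]
    have : ε ^ 2 = k ^ 2 - b ^ 2 := by linarith
    rw [this]; field_simp; ring
  have hH : (3 * α * σ + 3 * a * ((2 * a * α + b / k * β) / (2 * σ))) * α +
      (3 / 2 * ((2 * a * α + b / k * β) / (2 * σ)) * (b / k)
        + 3 / 2 * σ * (ε ^ 2 / k ^ 3 * β)) * β =
      3 * σ * α ^ 2 + 3 / 4 * τ * (2 * a * α + m * β) ^ 2 + 3 / 2 * σ * (n * β ^ 2) := by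
    rw [← hm, ← hn, hτ]; field_simp; ring
  rw [hH]
  have t1 : 0 ≤ σ * α ^ 2 := by positivity
  have t2 : 0 ≤ τ * (2 * a * α + m * β) ^ 2 := by positivity
  have t3 : 0 ≤ σ * (n * β ^ 2) := by positivity
  refine ⟨by linarith, by linarith, ?_⟩
  have hst : τ * σ ^ 2 = σ := by rw [hτ]; field_simp
  have hb : β ^ 2 / σ = τ * β ^ 2 := by rw [hτ]; ring
  rw [hb]
  have f1 : β ^ 2 ≤ 2 * (2 * a * α + m * β) ^ 2 + 8 * (σ ^ 2 * α ^ 2) + σ ^ 2 * (n * β ^ 2) := by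
    have : β ^ 2 = m ^ 2 * β ^ 2 + k * n * β ^ 2 := by rw [← add_mul, hmn, one_mul]
    rw [e1]
    have g1 : k * n * β ^ 2 ≤ (a ^ 2 + k) * (n * β ^ 2) := by
      have : 0 ≤ a ^ 2 * (n * β ^ 2) := by positivity
      nlinarith
    have g2 : m ^ 2 * β ^ 2 ≤ 2 * (2 * a * α + m * β) ^ 2 + 8 * (a ^ 2 * α ^ 2) := by
      nlinarith [sq_nonneg (4 * a * α + m * β)]
    have g3 : 0 ≤ k * α ^ 2 := by positivity
    nlinarith
  have f2 := mul_le_mul_of_nonneg_left f1 hτ0.le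
  have f3 : τ * (σ ^ 2 * α ^ 2) = σ * α ^ 2 := by rw [← mul_assoc, hst]
  have f4 : τ * (σ ^ 2 * (n * β ^ 2)) = σ * (n * β ^ 2) := by rw [← mul_assoc, hst]
  nlinarith

end NSC

namespace NSC

/-- Bellman functional along the heat flow. -/
noncomputable def Phi (ε : ℝ) (g f : E3 → ℝ) (r : ℝ) : ℝ := ∫ x, qq ε (P r g x) (P r f x)

lemma SS_cont (ε : ℝ) {a b : E3 → ℝ} (ha : Continuous a) (hb : Continuous b) :
    Continuous (fun x => SS ε (a x) (b x)) := by
  unfold SS kk; fun_prop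

lemma bk_cont {ε : ℝ} (hε : 0 < ε) {b : E3 → ℝ} (hb : Continuous b) :
    Continuous (fun x => b x / kk ε (b x)) := by
  refine hb.div ?_ (fun x => (kk_pos hε _).ne')
  unfold kk; fun_prop

lemma bk_abs {ε : ℝ} (hε : 0 < ε) (b : ℝ) : |b / kk ε b| ≤ 1 := by
  rw [abs_div, abs_of_pos (kk_pos hε b)]
  exact div_le_one_of_le₀ (kk_abs hε b) (kk_pos hε b).le

lemma sS_le {ε : ℝ} (hε : 0 < ε) {a b A B : ℝ} (ha : |a| ≤ A) (hb : |b| ≤ B) :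
    √(SS ε a b) ≤ √(A ^ 2 + B + ε) := by
  apply Real.sqrt_le_sqrt
  refine (SS_le hε a b).trans ?_
  have : a ^ 2 ≤ A ^ 2 := by rw [← sq_abs]; gcongr
  linarith

lemma sS_bd {ε : ℝ} (hε : 0 < ε) {a b : E3 → ℝ} (ha : Bd a) (hb : Bd b) :
    Bd (fun x => √(SS ε (a x) (b x))) := by
  obtain ⟨ca, A, hA, ha⟩ := ha
  obtain ⟨cb, B, hB, hb⟩ := hb
  refine ⟨(SS_cont ε ca cb).sqrt, √(A ^ 2 + B + ε), by positivity, fun x => ?_⟩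
  rw [abs_of_nonneg (Real.sqrt_nonneg _)]
  exact sS_le hε (ha x) (hb x)

lemma bk_bd {ε : ℝ} (hε : 0 < ε) {b : E3 → ℝ} (hb : Bd b) :
    Bd (fun x => b x / kk ε (b x)) :=
  ⟨bk_cont hε hb.1, 1, zero_le_one, fun _ => bk_abs hε _⟩

lemma isS_bd {ε : ℝ} (hε : 0 < ε) {a b : E3 → ℝ} (ha : Bd a) (hb : Bd b) :
    Bd (fun x => 1 / (2 * √(SS ε (a x) (b x)))) := by
  have h : ∀ x, 0 < √(SS ε (a x) (b x)) := fun x => Real.sqrt_pos.2 (SS_pos hε _ _)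
  refine ⟨continuous_const.div (continuous_const.mul (SS_cont ε ha.1 hb.1).sqrt)
    (fun x => by have := h x; positivity), 1 / (2 * √ε), by positivity, fun x => ?_⟩
  rw [abs_of_pos (by have := h x; positivity)]
  have : 0 < √ε := Real.sqrt_pos.2 hε
  exact one_div_le_one_div_of_le (by positivity)
    (by have := Real.sqrt_le_sqrt (SS_ge hε (a x) (b x)); linarith)

lemma ek_bd {ε : ℝ} (hε : 0 < ε) {b : E3 → ℝ} (hb : Bd b) :
    Bd (fun x => ε ^ 2 / kk ε (b x) ^ 3) := by
  have hc : Continuous (fun x => kk ε (b x)) := by have := hb.1; unfold kk; fun_prop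
  refine ⟨continuous_const.div (hc.pow 3) (fun x => (pow_pos (kk_pos hε _) 3).ne'),
    ε ^ 2 / ε ^ 3, by positivity, fun x => ?_⟩
  have := kk_pos hε (b x)
  rw [abs_of_pos (by positivity)]
  exact div_le_div_of_nonneg_left (by positivity) (by positivity)
    (pow_le_pow_left₀ hε.le (kk_ge hε _) 3)

lemma qq_dec {ε : ℝ} (hε : 0 < ε) {a b : E3 → ℝ} (ha : Dec a) (hb : Dec b) :
    Dec (fun x => qq ε (a x) (b x)) := by
  have hB : Dec (fun x => √(SS ε (a x) (b x)) * (2 * (a x * a x + |b x|))) := by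
    refine (sS_bd hε ha.bd hb.bd).mul_dec (Dec.const_mul ((ha.bd.mul_dec ha).add ?_) 2)
    obtain ⟨h1, C, h0, h2⟩ := hb
    exact ⟨h1.abs, C, h0, fun x => by rw [abs_abs]; exact h2 x⟩
  obtain ⟨_, C, h0, h2⟩ := hB
  refine ⟨?_, C, h0, fun x => ?_⟩
  · unfold qq
    exact ((SS_cont ε ha.1 hb.1).mul (SS_cont ε ha.1 hb.1).sqrt).sub continuous_const
  · refine le_trans ?_ (h2 x)
    rw [abs_of_nonneg (qq_nonneg hε _ _), abs_of_nonneg (mul_nonneg (Real.sqrt_nonneg _)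
      (by linarith [mul_self_nonneg (a x), abs_nonneg (b x)]))]
    refine (qq_le hε _ _).trans (le_of_eq (by ring))

lemma Phi_nonneg {ε : ℝ} (hε : 0 < ε) (g f : E3 → ℝ) (r : ℝ) : 0 ≤ Phi ε g f r :=
  integral_nonneg fun _ => qq_nonneg hε _ _

lemma lap_decay {w : E3 → ℝ} (hw : Cc w) :
    ∃ C, 0 ≤ C ∧ ∀ s, |s| ≤ 2 → ∀ x, |s * ∑ l, P s (D l (D l w)) x| ≤ C * wt x := by
  have h := fun l => P_decay ((hw.D l).D l)
  choose C h0 hC using h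
  refine ⟨2 * ∑ l, C l, mul_nonneg zero_le_two (Finset.sum_nonneg fun l _ => h0 l), fun s hs x => ?_⟩
  rw [abs_mul, mul_assoc, Finset.sum_mul]
  refine mul_le_mul hs ((Finset.abs_sum_le_sum_abs _ _).trans
    (Finset.sum_le_sum fun l _ => hC l s hs x)) (abs_nonneg _) zero_le_two

lemma Phi_hasDeriv {ε : ℝ} (hε : 0 < ε) {g f : E3 → ℝ} (hg : Cc g) (hf : Cc f) {r : ℝ}
    (hr : |r| < 2) :
    HasDerivAt (Phi ε g f) (∫ x, (3 * P r g x * √(SS ε (P r g x) (P r f x)) *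
        (r * ∑ l, P r (D l (D l g)) x) +
        3 / 2 * √(SS ε (P r g x) (P r f x)) * (P r f x / kk ε (P r f x)) *
        (r * ∑ l, P r (D l (D l f)) x))) r := by
  obtain ⟨Cg, hg0, hCg⟩ := P_decay hg
  obtain ⟨Cf, hf0, hCf⟩ := P_decay hf
  obtain ⟨Lg, hLg0, hLg⟩ := lap_decay hg
  obtain ⟨Lf, hLf0, hLf⟩ := lap_decay hf
  have b1 : ∀ s, |s| ≤ 2 → ∀ x, |P s g x| ≤ Cg := fun s hs x =>
    (hCg s hs x).trans (mul_le_of_le_one_right hg0 (wt_le_one x))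
  have b2 : ∀ s, |s| ≤ 2 → ∀ x, |P s f x| ≤ Cf := fun s hs x =>
    (hCf s hs x).trans (mul_le_of_le_one_right hf0 (wt_le_one x))
  set M := √(Cg ^ 2 + Cf + ε) with hM
  have hs : {s : ℝ | |s| < 2} ∈ nhds r := (isOpen_lt continuous_abs continuous_const).mem_nhds hr
  have cg : ∀ {w : E3 → ℝ}, Cc w → ∀ s, Continuous (P s w) := fun hw s => T_cont G_int hw s
  refine (hasDerivAt_integral_of_dominated_loc_of_deriv_le
    (bound := fun x => (3 * Cg * M * Lg + 3 / 2 * M * 1 * Lf) * wt x)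
    (F' := fun r x => 3 * P r g x * √(SS ε (P r g x) (P r f x)) *
        (r * ∑ l, P r (D l (D l g)) x) +
        3 / 2 * √(SS ε (P r g x) (P r f x)) * (P r f x / kk ε (P r f x)) *
        (r * ∑ l, P r (D l (D l f)) x)) hs ?_
    (qq_dec hε (P_dec hg hr.le) (P_dec hf hr.le)).int ?_ ?_ (wt_integrable.const_mul _) ?_).2
  · filter_upwards [hs] with s hs
    exact (qq_dec hε (P_dec hg (le_of_lt hs)) (P_dec hf (le_of_lt hs))).int.aestronglyMeasurable
  · have c1 := (SS_cont ε (cg hg r) (cg hf r)).sqrt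
    have c2 := bk_cont hε (cg hf r)
    have c3 : ∀ {w : E3 → ℝ}, Cc w → Continuous (fun x => r * ∑ l, P r (D l (D l w)) x) := fun hw =>
      continuous_const.mul (continuous_finsetSum _ fun l _ => cg ((hw.D l).D l) r)
    exact ((((continuous_const.mul (cg hg r)).mul c1).mul (c3 hg)).add
      (((continuous_const.mul c1).mul c2).mul (c3 hf))).aestronglyMeasurable
  · refine Filter.Eventually.of_forall fun x s hs => ?_
    have hs' : |s| ≤ 2 := le_of_lt hs
    have hsS := sS_le hε (b1 s hs' x) (b2 s hs' x)
    have hw := (wt_pos x).le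
    rw [Real.norm_eq_abs, add_mul]
    refine (abs_add_le _ _).trans (add_le_add ?_ ?_)
    · rw [abs_mul, abs_mul, abs_mul, mul_assoc _ Lg, abs_of_nonneg (Real.sqrt_nonneg _),
        abs_of_pos (by norm_num : (0:ℝ) < 3)]
      gcongr
      · exact b1 s hs' x
      · exact hLg s hs' x
    · rw [abs_mul, abs_mul, abs_mul, mul_assoc _ Lf, abs_of_nonneg (Real.sqrt_nonneg _),
        abs_of_pos (by norm_num : (0:ℝ) < 3 / 2)]
      gcongr
      · exact bk_abs hε _
      · exact hLf s hs' x
  · refine Filter.Eventually.of_forall fun x s _ => ?_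
    exact qq_deriv hε (P_hasDeriv hg s x) (P_hasDeriv hf s x)

/-- Hessian form. -/
noncomputable def HH (ε a b α β : ℝ) : ℝ :=
  (3 * α * √(SS ε a b) + 3 * a * ((2 * a * α + b / kk ε b * β) / (2 * √(SS ε a b)))) * α +
      (3 / 2 * ((2 * a * α + b / kk ε b * β) / (2 * √(SS ε a b))) * (b / kk ε b)
        + 3 / 2 * √(SS ε a b) * (ε ^ 2 / kk ε b ^ 3 * β)) * β

lemma HH_ge {ε : ℝ} (hε : 0 < ε) (a b : ℝ) (α β : Fin 3 → ℝ) (i j : Fin 3) :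
    |α i * β j| ≤ 3 / 2 * ∑ l, HH ε a b (α l) (β l) := by
  have h0 : ∀ l, 0 ≤ HH ε a b (α l) (β l) := fun l => (hess_bounds hε a b (α l) (β l)).1
  have h1 := (hess_bounds hε a b (α i) (β i)).2.1
  have h2 := (hess_bounds hε a b (α j) (β j)).2.2
  change _ ≤ HH ε a b (α i) (β i) at h1
  change _ ≤ 8 / 3 * HH ε a b (α j) (β j) at h2
  have s1 : HH ε a b (α i) (β i) ≤ ∑ l, HH ε a b (α l) (β l) :=
    Finset.single_le_sum (f := fun l => HH ε a b (α l) (β l)) (fun l _ => h0 l) (Finset.mem_univ i)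
  have s2 : HH ε a b (α j) (β j) ≤ ∑ l, HH ε a b (α l) (β l) :=
    Finset.single_le_sum (f := fun l => HH ε a b (α l) (β l)) (fun l _ => h0 l) (Finset.mem_univ j)
  have p1 := Real.sqrt_pos.2 (SS_pos hε a b)
  set σ := √(SS ε a b)
  have : 2 * |α i * β j| ≤ σ * α i ^ 2 + β j ^ 2 / σ := by
    have e1 : σ * α i ^ 2 + β j ^ 2 / σ - 2 * |α i * β j| = (σ * |α i| - |β j|) ^ 2 / σ := by
      rw [abs_mul, ← sq_abs (α i), ← sq_abs (β j)]; field_simp; ring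
    have : 0 ≤ (σ * |α i| - |β j|) ^ 2 / σ := by positivity
    linarith
  linarith

lemma Phi_deriv {ε : ℝ} (hε : 0 < ε) {g f : E3 → ℝ} (hg : Cc g) (hf : Cc f) {r : ℝ}
    (hr0 : 0 ≤ r) (hr : r < 2) :
    ∃ d, HasDerivAt (Phi ε g f) d r ∧ ∀ i j,
      r * |∫ x, P r (D i g) x * P r (D j f) x| ≤ 3 / 2 * (-d) := by
  have hr2 : |r| < 2 := by rwa [abs_of_nonneg hr0]
  refine ⟨_, Phi_hasDeriv hε hg hf hr2, fun i j => ?_⟩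
  have dP : ∀ {w : E3 → ℝ}, Cc w → Dec (P r w) := fun hw => P_dec hw hr2.le
  have lP : ∀ {w : E3 → ℝ}, Cc w → ∀ l x, HasLineDerivAt ℝ (P r w) (P r (D l w) x) x (e l) := by
    intro w hw l x
    have := D_line (T_diff G_int hw r x) l
    rwa [T_D G_int hw] at this
  set σ := fun x => √(SS ε (P r g x) (P r f x)) with hσ
  set m := fun x => P r f x / kk ε (P r f x) with hm
  have bσ : Bd σ := sS_bd hε (dP hg).bd (dP hf).bd
  have bm : Bd m := bk_bd hε (dP hf).bd
  have bi := isS_bd hε (dP hg).bd (dP hf).bd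
  have be := ek_bd hε (dP hf).bd
  have bQa : Bd (fun x => 3 * P r g x * σ x) := ((Bd.const 3).mul (dP hg).bd).mul bσ
  have bQb : Bd (fun x => 3 / 2 * σ x * m x) := ((Bd.const (3 / 2)).mul bσ).mul bm
  -- derivative of sqrt S
  have dJ : ∀ l, Dec (fun x => (2 * P r g x * P r (D l g) x + m x * P r (D l f) x) / (2 * σ x)) := by
    intro l
    have := bi.mul_dec ((((Bd.const 2).mul (dP hg).bd).mul_dec (dP (hg.D l))).add
      (bm.mul_dec (dP (hf.D l))))
    refine ⟨?_, ?_⟩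
    · convert this.1 using 2 with x; ring
    · obtain ⟨C, h0, h⟩ := this.2
      refine ⟨C, h0, fun x => ?_⟩
      convert h x using 2; ring
  have dQa : ∀ l, Dec (fun x => 3 * P r (D l g) x * σ x + 3 * P r g x *
      ((2 * P r g x * P r (D l g) x + m x * P r (D l f) x) / (2 * σ x))) := by
    intro l
    refine Dec.add ?_ (((Bd.const 3).mul (dP hg).bd).mul_dec (dJ l))
    have := bσ.mul_dec ((dP (hg.D l)).const_mul 3)
    simpa only [mul_comm (σ _)] using this
  have dQb : ∀ l, Dec (fun x => 3 / 2 * ((2 * P r g x * P r (D l g) x + m x * P r (D l f) x)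
      / (2 * σ x)) * m x + 3 / 2 * σ x * (ε ^ 2 / kk ε (P r f x) ^ 3 * P r (D l f) x)) := by
    intro l
    refine Dec.add ?_ (((Bd.const (3 / 2)).mul bσ).mul_dec (be.mul_dec (dP (hf.D l))))
    have := bm.mul_dec ((dJ l).const_mul (3 / 2))
    simpa only [mul_comm (m _)] using this
  have ia : ∀ l, ∫ x, 3 * P r g x * σ x * P r (D l (D l g)) x = - ∫ x,
      (3 * P r (D l g) x * σ x + 3 * P r g x *
      ((2 * P r g x * P r (D l g) x + m x * P r (D l f) x) / (2 * σ x))) * P r (D l g) x := by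
    intro l
    refine ibp_dec (e l) bQa (dQa l) (dP (hg.D l)) (dP ((hg.D l).D l)) (fun x => ?_)
      (fun x => lP (hg.D l) l x)
    have := Qa_deriv hε (lP hg l x) (lP hf l x)
    simp only [zero_smul, add_zero] at this
    exact this
  have ib : ∀ l, ∫ x, 3 / 2 * σ x * m x * P r (D l (D l f)) x = - ∫ x,
      (3 / 2 * ((2 * P r g x * P r (D l g) x + m x * P r (D l f) x)
      / (2 * σ x)) * m x + 3 / 2 * σ x * (ε ^ 2 / kk ε (P r f x) ^ 3 * P r (D l f) x))
      * P r (D l f) x := by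
    intro l
    refine ibp_dec (e l) bQb (dQb l) (dP (hf.D l)) (dP ((hf.D l).D l)) (fun x => ?_)
      (fun x => lP (hf.D l) l x)
    have := Qb_deriv hε (lP hg l x) (lP hf l x)
    simp only [zero_smul, add_zero] at this
    exact this
  have key : ∫ x, (3 * P r g x * σ x * (r * ∑ l, P r (D l (D l g)) x) +
        3 / 2 * σ x * m x * (r * ∑ l, P r (D l (D l f)) x)) =
      - (r * ∫ x, ∑ l, HH ε (P r g x) (P r f x) (P r (D l g) x) (P r (D l f) x)) := by
    have e1 : ∀ x, (3 * P r g x * σ x * (r * ∑ l, P r (D l (D l g)) x) +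
        3 / 2 * σ x * m x * (r * ∑ l, P r (D l (D l f)) x)) =
        r * ∑ l, (3 * P r g x * σ x * P r (D l (D l g)) x +
          3 / 2 * σ x * m x * P r (D l (D l f)) x) := by
      intro x; simp only [Fin.sum_univ_three]; ring
    simp only [e1]
    rw [integral_const_mul, ← mul_neg]
    congr 1
    rw [integral_finsetSum, integral_finsetSum, ← Finset.sum_neg_distrib]
    · refine Finset.sum_congr rfl fun l _ => ?_
      rw [integral_add (bQa.mul_dec (dP ((hg.D l).D l))).int
        (bQb.mul_dec (dP ((hf.D l).D l))).int, ia, ib, ← neg_add]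
      congr 1
      rw [← integral_add ((dQa l).bd.mul_dec (dP (hg.D l))).int
        ((dQb l).bd.mul_dec (dP (hf.D l))).int]
      rfl
    · intro l _
      exact (((dQa l).bd.mul_dec (dP (hg.D l))).add ((dQb l).bd.mul_dec (dP (hf.D l)))).int
    · intro l _
      exact ((bQa.mul_dec (dP ((hg.D l).D l))).add (bQb.mul_dec (dP ((hf.D l).D l)))).int
  have hHint : Integrable (fun x => ∑ l, HH ε (P r g x) (P r f x) (P r (D l g) x) (P r (D l f) x)) :=
    (Dec.sum fun l => ((dQa l).bd.mul_dec (dP (hg.D l))).add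
      ((dQb l).bd.mul_dec (dP (hf.D l)))).int
  rw [key, neg_neg, mul_left_comm]
  refine mul_le_mul_of_nonneg_left ?_ hr0
  rw [← integral_const_mul]
  exact norm_integral_le_of_norm_le (f := fun x => P r (D i g) x * P r (D j f) x)
    (hHint.const_mul (3 / 2))
    (Filter.Eventually.of_forall fun x => HH_ge hε _ _ (fun l => P r (D l g) x)
      (fun l => P r (D l f) x) i j)

end NSC

namespace NSC

lemma three_half {x y z : ℝ} (hx : 0 ≤ x) (hy : 0 ≤ y) (hz : 0 ≤ z) :
    (x + y + z) * √(x + y + z) ≤ 6 * (x * √x + y * √y + z * √z) := by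
  have aux : ∀ m : ℝ, 0 ≤ m → x + y + z ≤ 3 * m → (x + y + z) * √(x + y + z) ≤ 6 * (m * √m) := by
    intro m hm h
    have h1 : √(x + y + z) ≤ 2 * √m := by
      rw [Real.sqrt_le_left (by positivity), mul_pow, Real.sq_sqrt hm]; linarith
    calc _ ≤ (3 * m) * (2 * √m) := mul_le_mul h h1 (Real.sqrt_nonneg _) (by positivity)
      _ = _ := by ring
  have px : 0 ≤ x * √x := by positivity
  have py : 0 ≤ y * √y := by positivity
  have pz : 0 ≤ z * √z := by positivity
  rcases le_total x y with h1 | h1 <;> rcases le_total y z with h2 | h2 <;>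
    rcases le_total x z with h3 | h3
  all_goals first
    | (have := aux x hx (by linarith); linarith)
    | (have := aux y hy (by linarith); linarith)
    | (have := aux z hz (by linarith); linarith)

lemma qq_zero {ε : ℝ} (hε : 0 < ε) : qq ε 0 0 = 0 := by
  simp [qq, SS, kk, Real.sqrt_sq hε.le]

lemma qq_le' {ε : ℝ} (hε : 0 < ε) (a b : ℝ) :
    qq ε a b ≤ 6 * (|a| ^ 3 + |b| * √|b| + ε * √ε) := by
  have h := SS_le hε a b
  have hS := SS_pos hε a b
  have h3 := three_half (sq_nonneg a) (abs_nonneg b) hε.le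
  have : a ^ 2 * √(a ^ 2) = |a| ^ 3 := by rw [Real.sqrt_sq_eq_abs, ← sq_abs]; ring
  rw [this] at h3
  have h4 : SS ε a b * √(SS ε a b) ≤ (a ^ 2 + |b| + ε) * √(a ^ 2 + |b| + ε) :=
    mul_le_mul h (Real.sqrt_le_sqrt h) (Real.sqrt_nonneg _) (by positivity)
  have : 0 ≤ ε * √ε := by positivity
  unfold qq
  linarith

lemma cube_int {g : E3 → ℝ} (hg : Continuous g) (hs : HasCompactSupport g) :
    Integrable (fun x => |g x| ^ 3) := by
  refine Continuous.integrable_of_hasCompactSupport (by fun_prop) ?_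
  exact hs.comp_left (g := fun t : ℝ => |t| ^ 3) (by simp)

lemma th_int {g : E3 → ℝ} (hg : Continuous g) (hs : HasCompactSupport g) :
    Integrable (fun x => |g x| * √|g x|) := by
  refine Continuous.integrable_of_hasCompactSupport (by fun_prop) ?_
  exact hs.comp_left (g := fun t : ℝ => |t| * √|t|) (by simp)

/-- vanishing outside the unit ball -/
def Sup1 (g : E3 → ℝ) : Prop := ∀ x, 1 < ‖x‖ → g x = 0

/-- volume of unit ball -/
noncomputable def V1 : ℝ := (volume (Metric.closedBall (0 : E3) 1)).toReal

lemma Phi_zero_le {ε : ℝ} (hε : 0 < ε) {g f : E3 → ℝ} (hg : Cc g) (hf : Cc f) (sg : Sup1 g)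
    (sf : Sup1 f) :
    Phi ε g f 0 ≤ 6 * ((∫ x, |g x| ^ 3) + (∫ x, |f x| * √|f x|) + V1 * (ε * √ε)) := by
  unfold Phi
  simp only [P_zero]
  have i1 := cube_int hg.cont hg.supp
  have i2 := th_int hf.cont hf.supp
  have i3 : Integrable ((Metric.closedBall (0 : E3) 1).indicator (fun _ => ε * √ε)) := by
    rw [integrable_indicator_iff measurableSet_closedBall]
    exact integrableOn_const (measure_closedBall_lt_top.ne)
  have e3 : ∫ x, (Metric.closedBall (0 : E3) 1).indicator (fun _ => ε * √ε) x = V1 * (ε * √ε) := by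
    rw [integral_indicator measurableSet_closedBall, setIntegral_const]; rfl
  rw [← e3, ← integral_add i1 i2, ← integral_add (f := fun x => |g x| ^ 3 + |f x| * √|f x|)
    (i1.add i2) i3, ← integral_const_mul]
  refine integral_mono_of_nonneg (Filter.Eventually.of_forall fun x => qq_nonneg hε _ _)
    (((i1.add i2).add i3).const_mul 6) (Filter.Eventually.of_forall fun x => ?_)
  show qq ε (g x) (f x) ≤ 6 * (|g x| ^ 3 + |f x| * √|f x| + _)
  by_cases hx : ‖x‖ ≤ 1
  · rw [Set.indicator_of_mem (by simpa using hx)]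
    exact qq_le' hε _ _
  · push Not at hx
    rw [sg x hx, sf x hx, qq_zero hε, Set.indicator_of_notMem (by simpa using hx)]
    simp

lemma fub {K1 K2 : E3 → ℝ} (h1 : Integrable K1) (h2 : Integrable K2) {W : E3 → E3 → ℝ}
    (hW : Continuous (Function.uncurry W)) {C : ℝ} (hC : ∀ y z, |W y z| ≤ C) :
    ∫ y, K1 y * ∫ z, K2 z * W y z = ∫ z, K2 z * ∫ y, K1 y * W y z := by
  simp only [← integral_const_mul]
  rw [integral_integral_swap]
  · congr 1; ext z; congr 1; ext y; ring
  · have := (h1.mul_prod h2).mul_bdd (c := C) (f := fun p => K1 p.1 * K2 p.2)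
      (g := Function.uncurry W) hW.aestronglyMeasurable
      (Filter.Eventually.of_forall fun p => hC p.1 p.2)
    refine this.congr (Filter.Eventually.of_forall fun p => ?_)
    simp [Function.uncurry]; ring

lemma P_selfadj {a w : E3 → ℝ} (ha : Cc a) (hw : Dec w) (r : ℝ) :
    ∫ x, P r a x * w x = ∫ x, a x * P r w x := by
  obtain ⟨A, _, hA⟩ := ha.bdd
  obtain ⟨hwc, C, _, hC⟩ := hw.bd
  have hac := ha.cont
  have e1 : ∫ x, w x * ∫ y, G y * a (x + r • y) = ∫ y, G y * ∫ x, w x * a (x + r • y) :=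
    fub hw.int G_int (by fun_prop) (fun y z => hA _)
  have e2 : ∀ y, ∫ x, w x * a (x + r • y) = ∫ x, a x * w (x - r • y) := by
    intro y
    rw [← integral_add_right_eq_self (fun x => a x * w (x - r • y)) (r • y)]
    congr 1; ext x; simp; ring
  have e3 : ∫ y, G y * ∫ x, a x * w (x - r • y) = ∫ x, a x * ∫ y, G y * w (x - r • y) :=
    fub G_int ha.integrable (W := fun y x => w (x - r • y)) (by fun_prop) (fun y z => hC _)
  have e4 : ∀ x, ∫ y, G y * w (x - r • y) = P r w x := by
    intro x
    rw [← integral_neg_eq_self]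
    unfold P T
    congr 1; ext y; simp [G_neg]
  calc _ = ∫ x, w x * ∫ y, G y * a (x + r • y) := by
        congr 1; ext x; rw [mul_comm]; rfl
    _ = _ := by rw [e1]; simp only [e2]; rw [e3]; simp only [e4]

lemma G_conv (w : E3) : ∫ y, G y * G (w - y) = (√2 ^ 3)⁻¹ * G ((√2)⁻¹ • w) := by
  have s2 : (√2 : ℝ) ^ 2 = 2 := Real.sq_sqrt (by norm_num)
  have s0 : (0:ℝ) < √2 := by positivity
  rw [← integral_add_right_eq_self (fun y => G y * G (w - y)) ((1 / 2 : ℝ) • w)]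
  have : ∀ y, G (y + (1 / 2 : ℝ) • w) * G (w - (y + (1 / 2 : ℝ) • w)) =
      c0 * G ((√2)⁻¹ • w) * G0 (√2 • y) := by
    intro y
    have e1 : ‖y + (1 / 2 : ℝ) • w‖ ^ 2 + ‖w - (y + (1 / 2 : ℝ) • w)‖ ^ 2 =
        2 * ‖y‖ ^ 2 + ‖w‖ ^ 2 / 2 := by
      have := parallelogram_law_with_norm ℝ ((1 / 2 : ℝ) • w) y
      have h1 : w - (y + (1 / 2 : ℝ) • w) = (1 / 2 : ℝ) • w - y := by
        rw [sub_add_eq_sub_sub, sub_right_comm]; congr 1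
        rw [sub_eq_iff_eq_add, ← add_smul]; norm_num
      rw [h1, add_comm y, this, norm_smul]; norm_num; ring
    unfold G G0
    rw [norm_smul, norm_smul, mul_pow, mul_pow, Real.norm_of_nonneg s0.le, norm_inv,
      Real.norm_of_nonneg s0.le, inv_pow, s2]
    calc _ = c0 * c0 * (Real.exp (-‖y + (1 / 2 : ℝ) • w‖ ^ 2 / 2) *
          Real.exp (-‖w - (y + (1 / 2 : ℝ) • w)‖ ^ 2 / 2)) := by ring
      _ = c0 * c0 * (Real.exp (-(2⁻¹ * ‖w‖ ^ 2) / 2) * Real.exp (-(2 * ‖y‖ ^ 2) / 2)) := by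
        rw [← Real.exp_add, ← Real.exp_add]; congr 2; linarith
      _ = _ := by ring
  simp only [this]
  rw [integral_const_mul, Measure.integral_comp_smul]
  simp only [finrank_euclideanSpace, Fintype.card_fin, smul_eq_mul]
  have : c0 * ∫ y, G0 y = 1 := by rw [c0, inv_mul_cancel₀ G0_integral_pos.ne']
  rw [abs_of_pos (by positivity)]
  calc _ = (√2 ^ 3)⁻¹ * G ((√2)⁻¹ • w) * (c0 * ∫ y, G0 y) := by ring
    _ = _ := by rw [this, mul_one]

lemma P_P {b : E3 → ℝ} (hb : Cc b) (r : ℝ) (x : E3) :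
    P r (P r b) x = P (√2 * r) b x := by
  obtain ⟨B, _, hB⟩ := hb.bdd
  have hbc := hb.cont
  have s0 : (0:ℝ) < √2 := by positivity
  have e1 : ∀ y, P r b (x + r • y) = ∫ w, G (w - y) * b (x + r • w) := by
    intro y
    rw [← integral_add_right_eq_self (fun w => G (w - y) * b (x + r • w)) y]
    unfold P T
    congr 1; ext z; simp [smul_add, add_assoc, add_comm (r • y)]
  have e2 : P r (P r b) x = ∫ y, ∫ w, G y * G (w - y) * b (x + r • w) := by
    have e0 : P r (P r b) x = ∫ y, G y * P r b (x + r • y) := rfl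
    rw [e0]
    congr 1; ext y
    rw [e1, ← integral_const_mul]
    congr 1; ext w; ring
  rw [e2, integral_integral_swap]
  · have : ∀ w, ∫ y, G y * G (w - y) * b (x + r • w) =
        (√2 ^ 3)⁻¹ * (G ((√2)⁻¹ • w) * b (x + (√2 * r) • ((√2)⁻¹ • w))) := by
      intro w
      have hc : √2 * r * (√2)⁻¹ = r := by field_simp
      rw [integral_mul_const, G_conv, smul_smul, hc]
      ring
    simp only [this]
    rw [integral_const_mul, Measure.integral_comp_smul volume
      (fun w => G w * b (x + (√2 * r) • w)) (√2)⁻¹]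
    simp only [finrank_euclideanSpace, Fintype.card_fin, smul_eq_mul]
    rw [abs_of_pos (by positivity), ← mul_assoc]
    have : (√2 ^ 3)⁻¹ * ((√2)⁻¹ ^ 3)⁻¹ = (1:ℝ) := by
      rw [inv_pow, inv_inv, inv_mul_cancel₀ (by positivity)]
    rw [this, one_mul]
    rfl
  · have hintg : Integrable (fun p : E3 × E3 => G p.2 * G (p.1 - p.2)) :=
      G_int.convolution_integrand (ContinuousLinearMap.mul ℝ ℝ) G_int
    have := (hintg.mul_bdd (c := B) (g := fun p : E3 × E3 => b (x + r • p.1))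
      (by fun_prop : Continuous _).aestronglyMeasurable
      (Filter.Eventually.of_forall fun p => hB _)).swap
    exact this

lemma semigroup {a b : E3 → ℝ} (ha : Cc a) (hb : Cc b) {r : ℝ} (hr : |r| ≤ 2) :
    ∫ x, a x * P (√2 * r) b x = ∫ x, P r a x * P r b x := by
  rw [P_selfadj ha (P_dec hb hr)]
  simp only [P_P hb]

lemma T_Cc {K w : E3 → ℝ} (hK : Continuous K) (hs : HasCompactSupport K) (hw : Cc w) :
    Cc (T K 1 w) := by
  have e1 : T K 1 w = convolution (fun x => K (-x)) w (ContinuousLinearMap.mul ℝ ℝ) volume := by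
    ext y
    unfold T convolution
    rw [← integral_neg_eq_self]
    congr 1; ext x; simp [sub_eq_add_neg]
  have hs' : HasCompactSupport (fun x => K (-x)) := by
    have := hs.comp_homeomorph (Homeomorph.neg E3)
    simpa [Function.comp_def] using this
  rw [e1]
  refine ⟨hw.supp.contDiff_convolution_right _ ?_ hw.smooth, hs'.convolution _ hw.supp⟩
  exact (by fun_prop : Continuous (fun x => K (-x))).locallyIntegrable

lemma corr_heat {g f : E3 → ℝ} (hg : Cc g) (hf : Cc f) {r : ℝ} (hr : |r| ≤ 2) (i j : Fin 3) :
    P (√2 * r) (D i (D j (T g 1 f))) 0 = - ∫ x, P r (D i g) x * P r (D j f) x := by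
  have gi := hg.integrable
  obtain ⟨B, _, hB⟩ := ((hf.D j).D i).bdd
  have hbc := ((hf.D j).D i).cont
  rw [T_D gi hf, T_D gi (hf.D j)]
  have e1 : P (√2 * r) (T g 1 (D i (D j f))) 0 = ∫ x, g x * P (√2 * r) (D i (D j f)) x := by
    unfold P T
    rw [fub G_int gi (W := fun y x => D i (D j f) (0 + (√2 * r) • y + (1:ℝ) • x))
      (by fun_prop) (fun y z => hB _)]
    congr 1; ext x; congr 2; ext y; congr 2; simp [add_comm]
  rw [e1, semigroup hg ((hf.D j).D i) hr]
  refine ibp_dec (e i) (P_dec hg hr).bd (P_dec (hg.D i) hr) (P_dec (hf.D j) hr)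
    (P_dec ((hf.D j).D i) hr) (fun x => ?_) (fun x => ?_)
  · have := D_line (T_diff G_int hg r x) i
    rwa [T_D G_int hg] at this
  · have := D_line (T_diff G_int (hf.D j) r x) i
    rwa [T_D G_int (hf.D j)] at this

end NSC

namespace NSC

/-- scaled Gaussian -/
noncomputable def gam (s : ℝ) (y : E3) : ℝ := (s ^ 3)⁻¹ * G (s⁻¹ • y)

lemma gam_smooth (s : ℝ) : ContDiff ℝ (⊤ : ℕ∞) (gam s) := by
  unfold gam
  exact contDiff_const.mul (G_smooth.comp (contDiff_const_smul s⁻¹))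

lemma gam_pos {s : ℝ} (hs : 0 < s) (y : E3) : 0 < gam s y := by
  unfold gam; have := G_pos (s⁻¹ • y); positivity

lemma P_gam {h : E3 → ℝ} {s : ℝ} (hs : 0 < s) : P s h 0 = ∫ y, gam s y * h y := by
  unfold P T gam
  have := Measure.integral_comp_smul (μ := (volume : Measure E3))
    (fun y => (G (s⁻¹ • y)) * h y) s
  simp only [smul_smul, inv_mul_cancel₀ hs.ne', one_smul, finrank_euclideanSpace,
    Fintype.card_fin, smul_eq_mul] at this
  simp only [zero_add]
  rw [this, abs_of_pos (by positivity), ← integral_const_mul]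
  congr 1; ext y; ring

lemma coord_diff (i : Fin 3) : Differentiable ℝ (fun y : E3 => y i) := by fun_prop

lemma D_coord (i j : Fin 3) (y : E3) : D j (fun y : E3 => y i) y = if i = j then 1 else 0 := by
  unfold D
  have : (fun y : E3 => y i) = (EuclideanSpace.proj i : E3 →L[ℝ] ℝ) := rfl
  rw [this, ContinuousLinearMap.fderiv]
  simp [e]

lemma gam_D {s : ℝ} (i : Fin 3) : D i (gam s) = fun y => -(s ^ 2)⁻¹ * (y i * gam s y) := by
  ext y
  have h1 : HasFDerivAt (fun y : E3 => s⁻¹ • y) (s⁻¹ • ContinuousLinearMap.id ℝ E3) y :=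
      (hasFDerivAt_id y).const_smul s⁻¹
  have h2 := (((smooth_diff G_smooth (s⁻¹ • y)).hasFDerivAt.comp y h1).const_mul (s ^ 3)⁻¹)
  have h3 : D i (gam s) y = (s ^ 3)⁻¹ * (s⁻¹ * D i G (s⁻¹ • y)) := by
    unfold D
    have h4 : HasFDerivAt (gam s) _ y := h2
    rw [h4.fderiv]
    simp
  rw [h3, G_D]
  unfold gam
  simp
  ring

lemma gam_DD {s : ℝ} (i j : Fin 3) (y : E3) : D j (D i (gam s)) y =
    -(s ^ 2)⁻¹ * ((if i = j then 1 else 0) * gam s y + y i * (-(s ^ 2)⁻¹ * (y j * gam s y))) := by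
  rw [gam_D, D_const_mul ((coord_diff i y).fun_mul (smooth_diff (gam_smooth s) y)),
    D_mul (coord_diff i y) (smooth_diff (gam_smooth s) y), D_coord, gam_D]

/-- kernel constant -/
noncomputable def CK : ℝ := c0 * (100 ^ 5 * (6144 * Real.exp (1 / 2)))

lemma CK_pos : 0 < CK := by have := c0_pos; unfold CK; positivity

lemma gam_bounds {s : ℝ} (hs : 0 < s) {y : E3} (hy : 1 / 100 ≤ ‖y‖) :
    gam s y ≤ CK ∧ (s ^ 2)⁻¹ * ‖y‖ * gam s y ≤ CK ∧ (s ^ 2)⁻¹ * gam s y ≤ CK ∧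
    (s ^ 4)⁻¹ * ‖y‖ ^ 2 * gam s y ≤ CK := by
  have hy0 : 0 < ‖y‖ := by linarith
  set t := ‖y‖ / s with ht
  have ht0 : 0 < t := by positivity
  have hn : ‖s⁻¹ • y‖ = t := by
    rw [norm_smul, norm_inv, Real.norm_of_nonneg hs.le, ht]; field_simp
  have hsi : s⁻¹ = t * ‖y‖⁻¹ := by rw [ht]; field_simp
  have hyi : ‖y‖⁻¹ ≤ 100 := by
    rw [inv_le_comm₀ hy0 (by norm_num)]; linarith
  have hyi0 : 0 < ‖y‖⁻¹ := by positivity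
  have hdec := gauss_decay t ht0.le
  have aux : ∀ z : ℝ, z ≤ 100 ^ 5 * (1 + t) ^ 8 → z * G (s⁻¹ • y) ≤ CK := by
    intro z hz
    have hG := G_pos (s⁻¹ • y)
    calc z * G (s⁻¹ • y) ≤ (100 ^ 5 * (1 + t) ^ 8) * G (s⁻¹ • y) := by gcongr
      _ = c0 * (100 ^ 5 * ((1 + t) ^ 8 * Real.exp (-(t ^ 2) / 2))) := by
        unfold G G0; rw [hn]; ring
      _ ≤ _ := by unfold CK; have := c0_pos; gcongr
  have aux2 : ∀ m n : ℕ, n ≤ 8 → m ≤ 5 → t ^ n * (‖y‖⁻¹) ^ m ≤ 100 ^ 5 * (1 + t) ^ 8 := by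
    intro m n hn hm
    have h1 : t ^ n ≤ (1 + t) ^ 8 := (pow_le_pow_left₀ ht0.le (by linarith) n).trans
      (pow_le_pow_right₀ (by linarith) hn)
    have h2 : (‖y‖⁻¹) ^ m ≤ 100 ^ 5 := (pow_le_pow_left₀ hyi0.le hyi m).trans
      (pow_le_pow_right₀ (by norm_num) hm)
    rw [mul_comm]
    exact mul_le_mul h2 h1 (by positivity) (by positivity)
  have hc : ‖y‖⁻¹ * ‖y‖ = 1 := inv_mul_cancel₀ hy0.ne'
  unfold gam
  simp only [← mul_assoc]
  refine ⟨aux _ ?_, aux _ ?_, aux _ ?_, aux _ ?_⟩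
  · rw [← inv_pow, hsi, mul_pow]; exact aux2 3 3 (by norm_num) (by norm_num)
  · refine le_trans (le_of_eq ?_) (aux2 4 5 (by norm_num) (by norm_num))
    rw [← inv_pow, ← inv_pow, hsi]
    calc _ = t ^ 5 * ‖y‖⁻¹ ^ 4 * (‖y‖⁻¹ * ‖y‖) := by ring
      _ = _ := by rw [hc, mul_one]
  · refine le_trans (le_of_eq ?_) (aux2 5 5 (by norm_num) (by norm_num))
    rw [← inv_pow, ← inv_pow, hsi]; ring
  · refine le_trans (le_of_eq ?_) (aux2 5 7 (by norm_num) (by norm_num))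
    rw [← inv_pow, ← inv_pow, hsi]
    calc _ = t ^ 7 * ‖y‖⁻¹ ^ 5 * (‖y‖⁻¹ * ‖y‖) ^ 2 := by ring
      _ = _ := by rw [hc]; ring

/-- admissible multipliers vanishing near the origin -/
structure Mult (η : E3 → ℝ) (L : ℝ) : Prop where
  smooth : ContDiff ℝ (⊤ : ℕ∞) η
  zero : ∀ y, ‖y‖ < 1 / 100 → η y = 0
  b0 : ∀ y, |η y| ≤ L
  b1 : ∀ y i, |D i η y| ≤ L
  b2 : ∀ y i j, |D j (D i η) y| ≤ L

lemma ker_bound {η : E3 → ℝ} {L : ℝ} (h : Mult η L) {s : ℝ} (hs : 0 < s) (y : E3) (i j : Fin 3) :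
    |D i (fun y => η y * gam s y) y| ≤ 2 * CK * L ∧
    |D j (D i (fun y => η y * gam s y)) y| ≤ 5 * CK * L := by
  have hL : 0 ≤ L := (abs_nonneg _).trans (h.b0 0)
  have hCK := CK_pos
  have dη := smooth_diff h.smooth
  have dg := smooth_diff (gam_smooth s)
  have e1 : D i (fun y => η y * gam s y) = fun y => D i η y * gam s y + η y * D i (gam s) y := by
    ext y; exact D_mul (dη y) (dg y) i
  by_cases hy : ‖y‖ < 1 / 100
  · have hn : ∀ᶠ z in nhds y, ‖z‖ < 1 / 100 := (isOpen_lt continuous_norm continuous_const).mem_nhds hy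
    have h0 : ∀ z, ‖z‖ < 1 / 100 → D i (fun y => η y * gam s y) z = 0 := by
      intro z hz
      have : (fun y => η y * gam s y) =ᶠ[nhds z] fun _ => 0 := by
        filter_upwards [(isOpen_lt continuous_norm continuous_const).mem_nhds hz] with w hw
        rw [h.zero w hw, zero_mul]
      rw [D_congr this]; simp [D]
    have h2 : D j (D i (fun y => η y * gam s y)) y = 0 := by
      have : D i (fun y => η y * gam s y) =ᶠ[nhds y] fun _ => 0 := by
        filter_upwards [hn] with w hw using h0 w hw
      rw [D_congr this]; simp [D]
    rw [h0 y hy, h2, abs_zero]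
    constructor <;> positivity
  · push Not at hy
    obtain ⟨g0, g1, g2, g3⟩ := gam_bounds hs hy
    have gp := gam_pos hs y
    have c0 : |gam s y| ≤ CK := by rwa [abs_of_pos gp]
    have c1 : ∀ i, |D i (gam s) y| ≤ CK := by
      intro i
      rw [gam_D, abs_mul, abs_mul, abs_neg, abs_of_pos gp, abs_of_pos (by positivity)]
      refine le_trans ?_ g1
      rw [mul_assoc]
      gcongr
      exact abs_coord_le y i
    have c2 : |D j (D i (gam s)) y| ≤ 2 * CK := by
      rw [gam_DD, abs_mul, abs_neg, abs_of_pos (by positivity : 0 < (s ^ 2)⁻¹)]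
      have a1 : |(if i = j then 1 else 0) * gam s y| ≤ gam s y := by
        split_ifs <;> simp [abs_of_pos gp, gp.le]
      have a2 : |y i * (-(s ^ 2)⁻¹ * (y j * gam s y))| ≤ ‖y‖ * ((s ^ 2)⁻¹ * (‖y‖ * gam s y)) := by
        rw [abs_mul, abs_mul, abs_mul, abs_neg, abs_of_pos gp, abs_of_pos (by positivity : 0 < (s ^ 2)⁻¹)]
        have := abs_coord_le y i
        have := abs_coord_le y j
        gcongr
      calc _ ≤ (s ^ 2)⁻¹ * (gam s y + ‖y‖ * ((s ^ 2)⁻¹ * (‖y‖ * gam s y))) := by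
            gcongr; exact (abs_add_le _ _).trans (add_le_add a1 a2)
        _ = (s ^ 2)⁻¹ * gam s y + (s ^ 4)⁻¹ * ‖y‖ ^ 2 * gam s y := by field_simp
        _ ≤ _ := by linarith
    have m : ∀ {a b A B : ℝ}, |a| ≤ A → |b| ≤ B → |a * b| ≤ A * B := by
      intro a b A B ha hb
      rw [abs_mul]; exact mul_le_mul ha hb (abs_nonneg _) ((abs_nonneg _).trans ha)
    constructor
    · rw [e1]
      refine (abs_add_le _ _).trans ?_
      have := m (h.b1 y i) c0
      have := m (h.b0 y) (c1 i)
      linarith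
    · rw [e1, D_add ((smooth_diff (smooth_D h.smooth i) y).fun_mul (dg y))
        ((dη y).fun_mul (smooth_diff (smooth_D (gam_smooth s) i) y)),
        D_mul (smooth_diff (smooth_D h.smooth i) y) (dg y),
        D_mul (dη y) (smooth_diff (smooth_D (gam_smooth s) i) y)]
      have t1 := m (h.b2 y i j) c0
      have t2 := m (h.b1 y i) (c1 j)
      have t3 := m (h.b1 y j) (c1 i)
      have t4 := m (h.b0 y) c2
      refine (abs_add_le _ _).trans ((add_le_add (abs_add_le _ _) (abs_add_le _ _)).trans ?_)
      linarith

lemma young {a b : ℝ} (ha : 0 ≤ a) (hb : 0 ≤ b) : a * b ≤ a ^ 3 + b * √b := by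
  have h1 := Real.sq_sqrt hb
  have h0 := Real.sqrt_nonneg b
  set t := √b
  rw [← h1]
  rcases le_total a t with h | h
  · nlinarith [pow_nonneg ha 3, mul_le_mul_of_nonneg_right h (sq_nonneg t)]
  · have : t ^ 2 ≤ a ^ 2 := by gcongr
    nlinarith [pow_nonneg h0 3, mul_le_mul_of_nonneg_left this ha]

lemma prod_le {g f : E3 → ℝ} (hg : Cc g) (hf : Cc f) (sg : Sup1 g) (sf : Sup1 f) :
    (∫ x, |g x|) * (∫ x, |f x|) ≤ V1 * ((∫ x, |g x| ^ 3) + ∫ x, |f x| * √|f x|) := by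
  set B := Metric.closedBall (0 : E3) 1
  have i1 := cube_int hg.cont hg.supp
  have i2 := th_int hf.cont hf.supp
  have hB : volume B ≠ ⊤ := measure_closedBall_lt_top.ne
  have hV : volume.real B = V1 := rfl
  have sub : ∀ {h : E3 → ℝ}, (∀ x, 1 < ‖x‖ → h x = 0) → ∫ x, h x = ∫ x in B, h x := by
    intro h hh
    rw [setIntegral_eq_integral_of_forall_compl_eq_zero]
    intro x hx; exact hh x (by simpa [B] using hx)
  have ic : ∀ c : ℝ, IntegrableOn (fun _ : E3 => c) B := fun c => integrableOn_const hB
  have s1 : ∀ x, |g x| * (∫ y, |f y|) ≤ V1 * |g x| ^ 3 + ∫ y, |f y| * √|f y| := by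
    intro x
    rw [sub (fun y hy => by rw [sf y hy, abs_zero]), sub (h := fun y => |f y| * √|f y|)
      (fun y hy => by rw [sf y hy, abs_zero, zero_mul]), ← integral_const_mul]
    have : V1 * |g x| ^ 3 = ∫ y in B, |g x| ^ 3 := by rw [setIntegral_const]; rfl
    rw [this, ← integral_add (ic _) i2.integrableOn]
    refine integral_mono ((hf.integrable.abs.const_mul _).integrableOn) ((ic _).add i2.integrableOn)
      fun y => young (abs_nonneg _) (abs_nonneg _)
  rw [← integral_mul_const]
  rw [sub (fun y hy => by rw [sg y hy, abs_zero, zero_mul])]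
  refine (integral_mono ((hg.integrable.abs.mul_const _).integrableOn)
    (((i1.const_mul V1).integrableOn).add (ic _)) s1).trans (le_of_eq ?_)
  simp only [Pi.add_apply]
  rw [integral_add (i1.const_mul V1).integrableOn (ic _), integral_const_mul, setIntegral_const,
    ← sub (h := fun x => |g x| ^ 3) (fun y hy => by simp [sg y hy]), mul_add]
  rfl

lemma T_abs_int {g f : E3 → ℝ} (hg : Cc g) (hf : Cc f) :
    ∫ y, |T g 1 f y| ≤ (∫ x, |g x|) * (∫ x, |f x|) := by
  have hT : ∀ a b : E3 → ℝ, T a 1 b =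
      convolution (fun x => a (-x)) b (ContinuousLinearMap.mul ℝ ℝ) volume := by
    intro a b
    ext y
    unfold T convolution
    rw [← integral_neg_eq_self]
    congr 1; ext x; simp [sub_eq_add_neg]
  have ga : Integrable (fun x => |g (-x)|) := hg.integrable.abs.comp_neg
  have e1 : ∫ y, T (fun x => |g x|) 1 (fun x => |f x|) y = (∫ x, |g x|) * (∫ x, |f x|) := by
    rw [hT, integral_convolution (L := ContinuousLinearMap.mul ℝ ℝ) ga hf.integrable.abs]
    simp only [ContinuousLinearMap.mul_apply']
    rw [integral_neg_eq_self (fun x => |g x|)]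
  rw [← e1]
  refine integral_mono_of_nonneg (Filter.Eventually.of_forall fun y => abs_nonneg _) ?_
    (Filter.Eventually.of_forall fun y => ?_)
  · rw [hT]; exact ga.integrable_convolution _ hf.integrable.abs
  · show |∫ x, g x * f (y + (1:ℝ) • x)| ≤ ∫ x, |g x| * |f (y + (1:ℝ) • x)|
    simp only [← abs_mul]
    exact abs_integral_le_integral_abs

end NSC

namespace NSC

/-- data for the pressure estimate -/
structure Dat (π g : E3 → ℝ) (f : Fin 3 → Fin 3 → E3 → ℝ) : Prop where
  hπ : Cc π
  hg : Cc g
  hf : ∀ i j, Cc (f i j)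
  sg : ∀ x, g x ≠ 0 → 8 / 10 ≤ ‖x‖ ∧ ‖x‖ ≤ 9 / 10
  g0 : ∫ x, g x = 0
  sf : ∀ i j, Sup1 (f i j)
  eq : ∀ x, 52 / 100 < ‖x‖ → ‖x‖ < 98 / 100 → ∀ i, D i π x = ∑ j, D j (f i j) x

/-- total size -/
noncomputable def NN (g : E3 → ℝ) (f : Fin 3 → Fin 3 → E3 → ℝ) : ℝ :=
  (∫ x, |g x| ^ 3) + ∑ i, ∑ j, ∫ x, |f i j x| * √|f i j x|

lemma V1_nonneg : 0 ≤ V1 := ENNReal.toReal_nonneg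

lemma th_nonneg (f : E3 → ℝ) : 0 ≤ ∫ x, |f x| * √|f x| :=
  integral_nonneg fun x => by positivity

lemma cube_nonneg (f : E3 → ℝ) : 0 ≤ ∫ x, |f x| ^ 3 :=
  integral_nonneg fun x => by positivity

lemma le_NN (g : E3 → ℝ) (f : Fin 3 → Fin 3 → E3 → ℝ) (i j : Fin 3) :
    (∫ x, |g x| ^ 3) + (∫ x, |f i j x| * √|f i j x|) ≤ NN g f := by
  unfold NN
  have h1 : ∀ i, 0 ≤ ∑ j, ∫ x, |f i j x| * √|f i j x| := fun i =>
    Finset.sum_nonneg fun j _ => th_nonneg _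
  have h2 := Finset.single_le_sum (f := fun i => ∑ j, ∫ x, |f i j x| * √|f i j x|)
    (fun i _ => h1 i) (Finset.mem_univ i)
  have h3 := Finset.single_le_sum (f := fun j => ∫ x, |f i j x| * √|f i j x|)
    (fun j _ => th_nonneg _) (Finset.mem_univ j)
  have := h3.trans h2
  linarith

lemma NN_nonneg (g : E3 → ℝ) (f : Fin 3 → Fin 3 → E3 → ℝ) : 0 ≤ NN g f :=
  (add_nonneg (cube_nonneg _) (th_nonneg _)).trans (le_NN g f 0 0)

lemma Dat.sup1 {π g : E3 → ℝ} {f : Fin 3 → Fin 3 → E3 → ℝ} (h : Dat π g f) : Sup1 g := by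
  intro x hx
  by_contra h0
  linarith [(h.sg x h0).2]

lemma Dat.prod_le {π g : E3 → ℝ} {f : Fin 3 → Fin 3 → E3 → ℝ} (h : Dat π g f) (i j : Fin 3) :
    (∫ x, |g x|) * (∫ x, |f i j x|) ≤ V1 * NN g f :=
  (NSC.prod_le h.hg (h.hf i j) h.sup1 (h.sf i j)).trans
    (mul_le_mul_of_nonneg_left (le_NN g f i j) V1_nonneg)

lemma fderiv_norm_le (c : E3 → ℝ) (x : E3) {B : Fin 3 → ℝ} (hB : ∀ i, |D i c x| ≤ B i) :
    ‖fderiv ℝ c x‖ ≤ ∑ i, B i := by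
  have h0 : ∀ i, 0 ≤ B i := fun i => (abs_nonneg _).trans (hB i)
  refine ContinuousLinearMap.opNorm_le_bound _ (Finset.sum_nonneg fun i _ => h0 i) fun y => ?_
  rw [fderiv_eq_sum, Real.norm_eq_abs, Finset.sum_mul]
  refine (Finset.abs_sum_le_sum_abs _ _).trans (Finset.sum_le_sum fun i _ => ?_)
  rw [abs_mul, mul_comm]
  exact mul_le_mul (hB i) (abs_coord_le y i) (abs_nonneg _) (h0 i)

lemma seg_step {c : E3 → ℝ} (hc : Differentiable ℝ c) {M : ℝ}
    (hM : ∀ x, 54 / 100 < ‖x‖ → ‖x‖ < 96 / 100 → ‖fderiv ℝ c x‖ ≤ M) {x v : E3}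
    (hx : 8 / 10 ≤ ‖x‖) (hx' : ‖x‖ ≤ 9 / 10) (hv : ‖v‖ = 8 / 10) (hxv : 0 ≤ inner ℝ x v) :
    |c v - c x| ≤ 2 * M := by
  have hM0 : 0 ≤ M := (norm_nonneg _).trans (hM x (by linarith) (by linarith))
  have key : ∀ z ∈ segment ℝ x v, 54 / 100 < ‖z‖ ∧ ‖z‖ < 96 / 100 := by
    rintro z ⟨a, b, ha, hb, hab, rfl⟩
    constructor
    · have : ‖a • x + b • v‖ ^ 2 = a ^ 2 * ‖x‖ ^ 2 + 2 * (a * b * inner ℝ x v) + b ^ 2 * ‖v‖ ^ 2 := by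
        rw [norm_add_sq_real, norm_smul, norm_smul, mul_pow, mul_pow, real_inner_smul_left,
          real_inner_smul_right]
        simp only [Real.norm_eq_abs, sq_abs]; ring
      rw [hv] at this
      have h1 : (8 / 10 : ℝ) ^ 2 ≤ ‖x‖ ^ 2 := by gcongr
      have h2 : 0 ≤ a * b * inner ℝ x v := by positivity
      have h3 : a ^ 2 * (8 / 10) ^ 2 ≤ a ^ 2 * ‖x‖ ^ 2 := by gcongr
      have h4 : b = 1 - a := by linarith
      have h5 : (32 / 100 : ℝ) ≤ ‖a • x + b • v‖ ^ 2 := by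
        rw [this]; subst h4; nlinarith [sq_nonneg (a - 1 / 2)]
      by_contra hcon
      push Not at hcon
      have := pow_le_pow_left₀ (norm_nonneg _) hcon 2
      norm_num at this h5
      linarith
    · calc ‖a • x + b • v‖ ≤ ‖a • x‖ + ‖b • v‖ := norm_add_le _ _
        _ = a * ‖x‖ + b * ‖v‖ := by
          rw [norm_smul, norm_smul, Real.norm_of_nonneg ha, Real.norm_of_nonneg hb]
        _ ≤ a * (9 / 10) + b * (9 / 10) := by gcongr; linarith
        _ = 9 / 10 := by rw [← add_mul, hab, one_mul]
        _ < _ := by norm_num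
  have := (convex_segment x v).norm_image_sub_le_of_norm_fderiv_le (𝕜 := ℝ) (f := c) (C := M)
    (fun z _ => hc z) (fun z hz => hM z (key z hz).1 (key z hz).2) (left_mem_segment ℝ x v)
    (right_mem_segment ℝ x v)
  refine this.trans ?_
  have : ‖v - x‖ ≤ 2 := (norm_sub_le _ _).trans (by linarith)
  nlinarith

lemma osc {c : E3 → ℝ} (hc : Differentiable ℝ c) {M : ℝ}
    (hM : ∀ x, 54 / 100 < ‖x‖ → ‖x‖ < 96 / 100 → ‖fderiv ℝ c x‖ ≤ M) :
    ∃ c₁, ∀ x, 8 / 10 ≤ ‖x‖ → ‖x‖ ≤ 9 / 10 → |c x - c₁| ≤ 4 * M := by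
  refine ⟨c ((8 / 10 : ℝ) • e 0), fun x h1 h2 => ?_⟩
  have nv : ∀ (t : ℝ) (i : Fin 3), |t| = 8 / 10 → ‖t • e i‖ = 8 / 10 := by
    intro t i ht; rw [norm_smul, norm_e, Real.norm_eq_abs, ht, mul_one]
  obtain ⟨t, ht, hxt⟩ : ∃ t : ℝ, |t| = 8 / 10 ∧ 0 ≤ inner ℝ x (t • e 1) := by
    rcases le_total 0 (inner ℝ x (e 1)) with h | h
    · refine ⟨8 / 10, by rw [abs_of_pos (by norm_num)], ?_⟩
      rw [real_inner_smul_right]; positivity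
    · refine ⟨-(8 / 10), by rw [abs_neg, abs_of_pos (by norm_num)], ?_⟩
      rw [real_inner_smul_right]; nlinarith
  have s1 := seg_step hc hM h1 h2 (nv t 1 ht) hxt
  have s2 := seg_step hc hM (x := t • e 1) (v := (8 / 10 : ℝ) • e 0) (by rw [nv t 1 ht])
    (by rw [nv t 1 ht]; norm_num) (nv _ 0 (by rw [abs_of_pos (by norm_num)]))
    (by rw [real_inner_smul_left, real_inner_smul_right]; simp [e, EuclideanSpace.inner_single_left])
  have : c x - c ((8 / 10 : ℝ) • e 0) = -(c (t • e 1) - c x) - (c ((8 / 10 : ℝ) • e 0) - c (t • e 1)) := by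
    ring
  rw [this]
  refine (abs_sub _ _).trans ?_
  rw [abs_neg]; linarith

lemma L7 {π g : E3 → ℝ} {f : Fin 3 → Fin 3 → E3 → ℝ} (h : Dat π g f) {ζ : E3 → ℝ} {L : ℝ}
    (hζ : Cc ζ) (sζ : ∀ y, 1 / 50 < ‖y‖ → ζ y = 0) (hL : ∀ y j, |D j ζ y| ≤ L) :
    |∫ y, ζ y * T g 1 π y| ≤ 36 * L * V1 * NN g f := by
  have hL0 : 0 ≤ L := (abs_nonneg _).trans (hL 0 0)
  obtain ⟨B, _, hB⟩ := h.hπ.bdd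
  have hπc := h.hπ.cont
  have gi := h.hg.integrable
  have e1 : ∫ y, ζ y * T g 1 π y = ∫ x, g x * T ζ 1 π x := by
    unfold T
    rw [fub hζ.integrable gi (W := fun y x => π (y + (1:ℝ) • x)) (by fun_prop) (fun y z => hB _)]
    congr 1; ext x; congr 2; ext y; congr 2; simp [add_comm]
  set c := T ζ 1 π with hc
  have dc : Differentiable ℝ c := T_diff hζ.integrable h.hπ 1
  set F := ∑ i, ∑ j, ∫ x, |f i j x| with hF
  have hM : ∀ x, 54 / 100 < ‖x‖ → ‖x‖ < 96 / 100 → ‖fderiv ℝ c x‖ ≤ L * F := by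
    intro x hx1 hx2
    rw [hF, Finset.mul_sum]
    refine fderiv_norm_le c x fun i => ?_
    rw [hc, T_D hζ.integrable h.hπ]
    have e2 : T ζ 1 (D i π) x = ∑ j, T ζ 1 (D j (f i j)) x := by
      unfold T
      rw [← integral_finsetSum _ (fun j _ => T_int hζ.integrable ((h.hf i j).D j) 1 x)]
      congr 1; ext y
      rw [← Finset.mul_sum]
      by_cases hy : 1 / 50 < ‖y‖
      · rw [sζ y hy, zero_mul, zero_mul]
      · push Not at hy
        have n1 : ‖x + (1:ℝ) • y‖ ≤ ‖x‖ + ‖y‖ := by rw [one_smul]; exact norm_add_le _ _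
        have n2 : ‖x‖ - ‖y‖ ≤ ‖x + (1:ℝ) • y‖ := by rw [one_smul]; exact norm_sub_le_norm_add _ _
        rw [h.eq _ (by linarith) (by linarith)]
    rw [e2, Finset.mul_sum]
    refine (Finset.abs_sum_le_sum_abs _ _).trans (Finset.sum_le_sum fun j _ => ?_)
    have hsh : Cc (fun y => f i j (x + y)) := by
      refine ⟨(h.hf i j).smooth.comp (contDiff_const.add contDiff_id), ?_⟩
      exact (h.hf i j).supp.comp_homeomorph (Homeomorph.addLeft x)
    have e3 : T ζ 1 (D j (f i j)) x = - ∫ y, D j ζ y * f i j (x + y) := by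
      rw [← ibp hζ.smooth hsh j]
      unfold T
      congr 1; ext y; congr 1
      simp only [one_smul]
      unfold D
      rw [fderiv_comp_add_left]
    rw [e3, abs_neg]
    have e4 : ∫ y, |f i j y| = ∫ y, |f i j (x + y)| :=
      (integral_add_left_eq_self (fun y => |f i j y|) x).symm
    rw [e4, ← integral_const_mul]
    refine norm_integral_le_of_norm_le (f := fun y => D j ζ y * f i j (x + y))
      (hsh.integrable.abs.const_mul L) (Filter.Eventually.of_forall fun y => ?_)
    rw [norm_mul]
    exact mul_le_mul_of_nonneg_right (hL y j) (abs_nonneg _)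
  obtain ⟨c₁, hc₁⟩ := osc dc hM
  have ic : Integrable (fun x => g x * c x) := by
    have := (T_Cc hζ.cont hζ.supp h.hπ)
    exact (this.mul_left h.hg.smooth).integrable
  have e5 : ∫ x, g x * c x = ∫ x, g x * (c x - c₁) := by
    simp only [mul_sub]
    rw [integral_sub ic (gi.mul_const c₁), integral_mul_const, h.g0]; simp
  rw [e1, e5]
  have e6 : |∫ x, g x * (c x - c₁)| ≤ ∫ x, |g x| * (4 * (L * F)) := by
    refine norm_integral_le_of_norm_le (f := fun x => g x * (c x - c₁))
      (gi.abs.mul_const _) (Filter.Eventually.of_forall fun x => ?_)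
    rw [norm_mul, Real.norm_eq_abs]
    by_cases hx : g x = 0
    · simp [hx]
    · exact mul_le_mul_of_nonneg_left (hc₁ x (h.sg x hx).1 (h.sg x hx).2) (abs_nonneg _)
  refine e6.trans ?_
  rw [integral_mul_const]
  have e7 : (∫ x, |g x|) * F ≤ 9 * (V1 * NN g f) := by
    rw [hF, Finset.mul_sum]
    simp only [Finset.mul_sum]
    refine (Finset.sum_le_sum fun i _ => Finset.sum_le_sum fun j _ => h.prod_le i j).trans ?_
    simp
    linarith
  calc (∫ x, |g x|) * (4 * (L * F)) = 4 * L * ((∫ x, |g x|) * F) := by ring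
    _ ≤ 4 * L * (9 * (V1 * NN g f)) := by gcongr
    _ = _ := by ring

end NSC

namespace NSC

/-- small bump -/
noncomputable def kb : ContDiffBump (0 : E3) := ⟨1 / 100, 1 / 50, by norm_num, by norm_num⟩
/-- small bump function -/
noncomputable def kap (y : E3) : ℝ := kb y

lemma kap_Cc : Cc kap := ⟨kb.contDiff, kb.hasCompactSupport⟩
lemma kap_one {y : E3} (hy : ‖y‖ < 1 / 100) : kap y = 1 :=
  kb.one_of_mem_closedBall (by simpa [kb] using hy.le)
lemma kap_zero {y : E3} (hy : 1 / 50 ≤ ‖y‖) : kap y = 0 :=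
  kb.zero_of_le_dist (by simpa [kb] using hy)

lemma D_const (c : ℝ) (i : Fin 3) (y : E3) : D i (fun _ => c) y = 0 := by simp [D]

lemma nhds_lt {y : E3} {a : ℝ} (hy : ‖y‖ < a) : ∀ᶠ z in nhds y, ‖z‖ < a :=
  (isOpen_lt continuous_norm continuous_const).mem_nhds hy
lemma nhds_gt {y : E3} {a : ℝ} (hy : a < ‖y‖) : ∀ᶠ z in nhds y, a < ‖z‖ :=
  (isOpen_lt continuous_const continuous_norm).mem_nhds hy

lemma D_zero_of {h : E3 → ℝ} {y : E3} {c : ℝ} (hh : ∀ᶠ z in nhds y, h z = c) (i : Fin 3) :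
    D i h y = 0 := by
  have : h =ᶠ[nhds y] fun _ => c := hh
  rw [D_congr this, D_const]

/-- Laplacian of the bump -/
noncomputable def lapk (y : E3) : ℝ := ∑ l, D l (D l kap) y

lemma lapk_Cc : Cc lapk := by
  have h := fun l => (kap_Cc.D l).D l
  have : lapk = fun y => D 0 (D 0 kap) y + D 1 (D 1 kap) y + D 2 (D 2 kap) y := by
    ext y; simp [lapk, Fin.sum_univ_three]
  rw [this]; exact ((h 0).add (h 1)).add (h 2)

lemma Dkap_zero {y : E3} (hy : ‖y‖ < 1 / 100) (i : Fin 3) : D i kap y = 0 := by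
  refine D_zero_of (c := 1) ?_ i
  filter_upwards [nhds_lt hy] with z hz using kap_one hz
lemma Dkap_zero' {y : E3} (hy : 1 / 50 < ‖y‖) (i : Fin 3) : D i kap y = 0 := by
  refine D_zero_of (c := 0) ?_ i
  filter_upwards [nhds_gt hy] with z hz using kap_zero (le_of_lt hz)
lemma lapk_zero {y : E3} (hy : ‖y‖ < 1 / 100) : lapk y = 0 := by
  refine Finset.sum_eq_zero fun l _ => D_zero_of (c := 0) ?_ l
  filter_upwards [nhds_lt hy] with z hz using Dkap_zero hz l
lemma lapk_zero' {y : E3} (hy : 1 / 50 < ‖y‖) : lapk y = 0 := by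
  refine Finset.sum_eq_zero fun l _ => D_zero_of (c := 0) ?_ l
  filter_upwards [nhds_gt hy] with z hz using Dkap_zero' hz l

lemma Cc.bounds {h : E3 → ℝ} (hh : Cc h) : ∃ L, 0 ≤ L ∧ (∀ y, |h y| ≤ L) ∧
    (∀ y i, |NSC.D i h y| ≤ L) ∧ ∀ y i j, |NSC.D j (NSC.D i h) y| ≤ L := by
  obtain ⟨B0, p0, h0⟩ := hh.bdd
  choose B1 p1 h1 using fun i => (hh.D i).bdd
  choose B2 p2 h2 using fun i j => ((hh.D i).D j).bdd
  have s1 : ∀ i, B1 i ≤ ∑ i, B1 i := fun i =>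
    Finset.single_le_sum (f := B1) (fun i _ => p1 i) (Finset.mem_univ i)
  have s2 : ∀ i j, B2 i j ≤ ∑ i, ∑ j, B2 i j := fun i j =>
    (Finset.single_le_sum (f := B2 i) (fun j _ => p2 i j) (Finset.mem_univ j)).trans
    (Finset.single_le_sum (f := fun i => ∑ j, B2 i j)
      (fun i _ => Finset.sum_nonneg fun j _ => p2 i j) (Finset.mem_univ i))
  have q1 : 0 ≤ ∑ i, B1 i := (p1 0).trans (s1 0)
  have q2 : 0 ≤ ∑ i, ∑ j, B2 i j := (p2 0 0).trans (s2 0 0)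
  refine ⟨B0 + ∑ i, B1 i + ∑ i, ∑ j, B2 i j, by positivity, fun y => ?_, fun y i => ?_,
    fun y i j => ?_⟩
  · linarith [h0 y]
  · linarith [h1 i y, s1 i]
  · linarith [h2 i j y, s2 i j]

lemma Mult.mono {η : E3 → ℝ} {L L' : ℝ} (h : Mult η L) (hL : L ≤ L') : Mult η L' :=
  ⟨h.smooth, h.zero, fun y => (h.b0 y).trans hL, fun y i => (h.b1 y i).trans hL,
    fun y i j => (h.b2 y i j).trans hL⟩

lemma exists_mult : ∃ L, 0 ≤ L ∧ Mult (fun y => 1 - kap y) L ∧ (∀ i, Mult (D i kap) L) ∧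
    Mult lapk L ∧ ∀ y j, |D j (fun y => kap y * gam 1 y) y| ≤ L := by
  obtain ⟨L0, p0, a0, a1, a2⟩ := kap_Cc.bounds
  choose L1 p1 b0 b1 b2 using fun i => (kap_Cc.D i).bounds
  obtain ⟨L2, p2, c0, c1, c2⟩ := lapk_Cc.bounds
  obtain ⟨L3, p3, _, d1, _⟩ := (kap_Cc.mul_right (gam_smooth 1)).bounds
  have s1 : ∀ i, L1 i ≤ ∑ i, L1 i := fun i =>
    Finset.single_le_sum (f := L1) (fun i _ => p1 i) (Finset.mem_univ i)
  have q1 : 0 ≤ ∑ i, L1 i := (p1 0).trans (s1 0)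
  have e1 : ∀ i, D i (fun y => 1 - kap y) = fun y => (-1) * D i kap y := by
    intro i; ext y
    rw [D_sub (differentiableAt_const _) (kap_Cc.diff y), D_const]; ring
  refine ⟨(1 + L0) + ∑ i, L1 i + L2 + L3, by positivity, ?_, fun i => ?_, ?_, fun y j => ?_⟩
  · refine Mult.mono (L := 1 + L0) ⟨contDiff_const.sub kap_Cc.smooth, fun y hy => ?_, fun y => ?_,
      fun y i => ?_, fun y i j => ?_⟩ (by linarith)
    · simp [kap_one hy]
    · refine (abs_sub _ _).trans ?_
      rw [abs_one]; linarith [a0 y]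
    · rw [e1, abs_mul, abs_neg, abs_one, one_mul]; linarith [a1 y i]
    · rw [e1, D_const_mul ((kap_Cc.D i).diff y), abs_mul, abs_neg, abs_one, one_mul]
      linarith [a2 y i j]
  · exact Mult.mono (L := L1 i) ⟨(kap_Cc.D i).smooth, fun y hy => Dkap_zero hy i, b0 i, b1 i, b2 i⟩
      (by linarith [s1 i])
  · exact Mult.mono (L := L2) ⟨lapk_Cc.smooth, fun y hy => lapk_zero hy, c0, c1, c2⟩
      (by linarith)
  · linarith [d1 y j]

lemma P_add {a b : E3 → ℝ} (ha : Cc a) (hb : Cc b) (s : ℝ) (x : E3) :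
    P s (fun y => a y + b y) x = P s a x + P s b x := by
  unfold P T
  rw [← integral_add (T_int G_int ha s x) (T_int G_int hb s x)]
  congr 1; ext y; ring

lemma Cc_zero : Cc (fun _ => (0:ℝ)) := ⟨contDiff_const, HasCompactSupport.zero⟩

lemma Cc_sum {a : Fin 3 → E3 → ℝ} (ha : ∀ i, Cc (a i)) : Cc (fun y => ∑ i, a i y) := by
  simp only [Fin.sum_univ_three]
  exact ((ha 0).add (ha 1)).add (ha 2)

lemma P_sum {a : Fin 3 → E3 → ℝ} (ha : ∀ i, Cc (a i)) (s : ℝ) (x : E3) :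
    P s (fun y => ∑ i, a i y) x = ∑ i, P s (a i) x := by
  simp only [Fin.sum_univ_three]
  rw [P_add ((ha 0).add (ha 1)) (ha 2), P_add (ha 0) (ha 1)]

lemma P_cmul (c : ℝ) (a : E3 → ℝ) (s : ℝ) (x : E3) :
    P s (fun y => c * a y) x = c * P s a x := by
  unfold P T
  rw [← integral_const_mul]
  congr 1; ext y; ring

section
variable {π g : E3 → ℝ} {f : Fin 3 → Fin 3 → E3 → ℝ}

lemma Dat.psi (h : Dat π g f) : Cc (T g 1 π) := T_Cc h.hg.cont h.hg.supp h.hπ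
lemma Dat.psif (h : Dat π g f) (i j : Fin 3) : Cc (T g 1 (f i j)) :=
  T_Cc h.hg.cont h.hg.supp (h.hf i j)

lemma Dat.D_psi (h : Dat π g f) {y : E3} (hy : ‖y‖ < 3 / 100) (i : Fin 3) :
    D i (T g 1 π) y = ∑ j, D j (T g 1 (f i j)) y := by
  have gi := h.hg.integrable
  rw [T_D gi h.hπ]
  simp only [T_D gi (h.hf i _)]
  unfold T
  rw [← integral_finsetSum _ (fun j _ => T_int gi ((h.hf i j).D j) 1 y)]
  congr 1; ext x
  rw [← Finset.mul_sum]
  by_cases hx : g x = 0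
  · simp [hx]
  · obtain ⟨h1, h2⟩ := h.sg x hx
    have n1 : ‖y + (1:ℝ) • x‖ ≤ ‖y‖ + ‖x‖ := by rw [one_smul]; exact norm_add_le _ _
    have n2 : ‖x‖ - ‖y‖ ≤ ‖y + (1:ℝ) • x‖ := by
      rw [one_smul, add_comm]; exact norm_sub_le_norm_add _ _
    rw [h.eq _ (by linarith) (by linarith)]

lemma Dat.DD_psi (h : Dat π g f) {y : E3} (hy : ‖y‖ < 3 / 100) (i : Fin 3) :
    D i (D i (T g 1 π)) y = ∑ j, D i (D j (T g 1 (f i j))) y := by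
  have : D i (T g 1 π) =ᶠ[nhds y] fun y => ∑ j, D j (T g 1 (f i j)) y := by
    filter_upwards [nhds_lt hy] with z hz using h.D_psi hz i
  rw [D_congr this, D_sum fun j => ((h.psif i j).D j).diff y]

lemma Dat.decomp (h : Dat π g f) (y : E3) :
    ∑ l, D l (D l (fun y => kap y * T g 1 π y)) y =
      (∑ i, ∑ j, (D i (D j (T g 1 (f i j))) y + ((-1) * ((1 - kap y) * D i (D j (T g 1 (f i j))) y)
        + 2 * (D i kap y * D j (T g 1 (f i j)) y)))) + lapk y * T g 1 π y := by
  by_cases hy : ‖y‖ < 3 / 100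
  · have e1 : ∀ l, D l (D l (fun y => kap y * T g 1 π y)) y =
        D l (D l kap) y * T g 1 π y + 2 * (D l kap y * D l (T g 1 π) y) +
        kap y * D l (D l (T g 1 π)) y := by
      intro l
      have : D l (fun y => kap y * T g 1 π y) = fun y =>
          D l kap y * T g 1 π y + kap y * D l (T g 1 π) y := by
        ext y; exact D_mul (kap_Cc.diff y) (h.psi.diff y) l
      rw [this, D_add (((kap_Cc.D l).diff y).fun_mul (h.psi.diff y))
        ((kap_Cc.diff y).fun_mul ((h.psi.D l).diff y)), D_mul ((kap_Cc.D l).diff y) (h.psi.diff y),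
        D_mul (kap_Cc.diff y) ((h.psi.D l).diff y)]
      ring
    simp only [e1, h.D_psi hy, h.DD_psi hy]
    unfold lapk
    simp only [Fin.sum_univ_three]
    ring
  · have hy' : 1 / 50 < ‖y‖ := by push Not at hy; linarith
    have e1 : ∀ l, D l (D l (fun y => kap y * T g 1 π y)) y = 0 := by
      intro l
      refine D_zero_of (c := 0) ?_ l
      filter_upwards [nhds_gt hy'] with z hz
      refine D_zero_of (c := 0) ?_ l
      filter_upwards [nhds_gt hz] with w hw
      rw [kap_zero (le_of_lt hw), zero_mul]
    simp only [e1, lapk_zero' hy', Dkap_zero' hy', kap_zero hy'.le]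
    simp

end

lemma heat_bound : ∃ C, 0 ≤ C ∧ ∀ (π g : E3 → ℝ) (f : Fin 3 → Fin 3 → E3 → ℝ), Dat π g f →
    (∀ s, 0 < s → |∑ l, P s (D l (D l (fun y => kap y * T g 1 π y))) 0| ≤
      (∑ i, ∑ j, |P s (D i (D j (T g 1 (f i j)))) 0|) + C * NN g f) ∧
    |P 1 (fun y => kap y * T g 1 π y) 0| ≤ C * NN g f := by
  obtain ⟨L, hL0, m1, m2, m3, m4⟩ := exists_mult
  have hCK := CK_pos
  have hV := V1_nonneg
  refine ⟨9 * (5 * CK * L * V1 + 2 * (2 * CK * L * V1)) + 36 * (2 * CK * L) * V1 + 36 * L * V1,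
    by positivity, fun π g f h => ?_⟩
  have hN := NN_nonneg g f
  have gi := h.hg.integrable
  constructor
  · intro s hs
    have c1 : ∀ i j, Cc (D i (D j (T g 1 (f i j)))) := fun i j => ((h.psif i j).D j).D i
    have c2 : ∀ i j, Cc (fun y => (1 - kap y) * D i (D j (T g 1 (f i j))) y) := fun i j =>
      (c1 i j).mul_left m1.smooth
    have c2' : ∀ i j, Cc (fun y => (-1) * ((1 - kap y) * D i (D j (T g 1 (f i j))) y)) := fun i j =>
      (c2 i j).mul_left contDiff_const
    have c3 : ∀ i j, Cc (fun y => D i kap y * D j (T g 1 (f i j)) y) := fun i j =>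
      ((h.psif i j).D j).mul_left (m2 i).smooth
    have c3' : ∀ i j, Cc (fun y => 2 * (D i kap y * D j (T g 1 (f i j)) y)) := fun i j =>
      (c3 i j).mul_left contDiff_const
    have c4 : Cc (fun y => lapk y * T g 1 π y) := h.psi.mul_left lapk_Cc.smooth
    have cc : Cc (fun y => kap y * T g 1 π y) := h.psi.mul_left kap_Cc.smooth
    have eP : ∑ l, P s (D l (D l (fun y => kap y * T g 1 π y))) 0 =
        (∑ i, ∑ j, (P s (D i (D j (T g 1 (f i j)))) 0 +
          ((-1) * P s (fun y => (1 - kap y) * D i (D j (T g 1 (f i j))) y) 0 +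
          2 * P s (fun y => D i kap y * D j (T g 1 (f i j)) y) 0))) +
        P s (fun y => lapk y * T g 1 π y) 0 := by
      rw [← P_sum fun l => (cc.D l).D l]
      simp only [h.decomp]
      have cij := fun i j => (c1 i j).add ((c2' i j).add (c3' i j))
      rw [P_add (Cc_sum fun i => Cc_sum fun j => cij i j) c4, P_sum fun i => Cc_sum fun j => cij i j]
      congr 1
      refine Finset.sum_congr rfl fun i _ => ?_
      rw [P_sum fun j => cij i j]
      refine Finset.sum_congr rfl fun j _ => ?_
      rw [P_add (c1 i j) ((c2' i j).add (c3' i j)), P_add (c2' i j) (c3' i j), P_cmul, P_cmul]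
    have hTi : ∀ i j, ∫ y, |T g 1 (f i j) y| ≤ V1 * NN g f := fun i j =>
      (T_abs_int h.hg (h.hf i j)).trans (h.prod_le i j)
    have gen : ∀ (K : E3 → ℝ) (B : ℝ) (i j : Fin 3), 0 ≤ B → (∀ y, |K y| ≤ B) →
        |∫ y, K y * T g 1 (f i j) y| ≤ B * V1 * NN g f := by
      intro K B i j hB hK
      have : |∫ y, K y * T g 1 (f i j) y| ≤ ∫ y, B * |T g 1 (f i j) y| := by
        refine norm_integral_le_of_norm_le (f := fun y => K y * T g 1 (f i j) y)
          ((h.psif i j).integrable.abs.const_mul B) (Filter.Eventually.of_forall fun y => ?_)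
        rw [norm_mul]
        exact mul_le_mul_of_nonneg_right (hK y) (abs_nonneg _)
      rw [integral_const_mul] at this
      refine this.trans ?_
      rw [mul_assoc]
      exact mul_le_mul_of_nonneg_left (hTi i j) hB
    have b2 : ∀ i j, |P s (fun y => (1 - kap y) * D i (D j (T g 1 (f i j))) y) 0| ≤
        5 * CK * L * V1 * NN g f := by
      intro i j
      have sm : ContDiff ℝ (⊤ : ℕ∞) (fun y => (1 - kap y) * gam s y) := m1.smooth.mul (gam_smooth s)
      have : P s (fun y => (1 - kap y) * D i (D j (T g 1 (f i j))) y) 0 =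
          ∫ y, D j (D i (fun y => (1 - kap y) * gam s y)) y * T g 1 (f i j) y := by
        rw [P_gam hs]
        calc _ = ∫ y, ((1 - kap y) * gam s y) * D i (D j (T g 1 (f i j))) y := by
              congr 1; ext y; ring
          _ = _ := by
            rw [ibp sm ((h.psif i j).D j) i, ibp (smooth_D sm i) (h.psif i j) j, neg_neg]
      rw [this]
      exact gen _ _ i j (by positivity) fun y => (ker_bound m1 hs y i j).2
    have b3 : ∀ i j, |P s (fun y => D i kap y * D j (T g 1 (f i j)) y) 0| ≤
        2 * CK * L * V1 * NN g f := by
      intro i j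
      have sm : ContDiff ℝ (⊤ : ℕ∞) (fun y => D i kap y * gam s y) :=
        (m2 i).smooth.mul (gam_smooth s)
      have : P s (fun y => D i kap y * D j (T g 1 (f i j)) y) 0 =
          - ∫ y, D j (fun y => D i kap y * gam s y) y * T g 1 (f i j) y := by
        rw [P_gam hs, ← ibp sm (h.psif i j) j]
        congr 1; ext y; ring
      rw [this, abs_neg]
      exact gen _ _ i j (by positivity) fun y => (ker_bound (m2 i) hs y j j).1
    have b4 : |P s (fun y => lapk y * T g 1 π y) 0| ≤ 36 * (2 * CK * L) * V1 * NN g f := by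
      have : P s (fun y => lapk y * T g 1 π y) 0 = ∫ y, (lapk y * gam s y) * T g 1 π y := by
        rw [P_gam hs]; congr 1; ext y; ring
      rw [this]
      exact L7 h (lapk_Cc.mul_right (gam_smooth s)) (fun y hy => by rw [lapk_zero' hy, zero_mul])
        (fun y j => (ker_bound m3 hs y j j).1)
    rw [eP]
    refine (abs_add_le _ _).trans ?_
    have b5 : |∑ i, ∑ j, (P s (D i (D j (T g 1 (f i j)))) 0 +
          ((-1) * P s (fun y => (1 - kap y) * D i (D j (T g 1 (f i j))) y) 0 +
          2 * P s (fun y => D i kap y * D j (T g 1 (f i j)) y) 0))| ≤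
        ∑ i, ∑ j, (|P s (D i (D j (T g 1 (f i j)))) 0| +
          (5 * CK * L * V1 * NN g f + 2 * (2 * CK * L * V1 * NN g f))) := by
      refine (Finset.abs_sum_le_sum_abs _ _).trans (Finset.sum_le_sum fun i _ => ?_)
      refine (Finset.abs_sum_le_sum_abs _ _).trans (Finset.sum_le_sum fun j _ => ?_)
      refine (abs_add_le _ _).trans (add_le_add le_rfl ((abs_add_le _ _).trans (add_le_add ?_ ?_)))
      · rw [abs_mul, abs_neg, abs_one, one_mul]; exact b2 i j
      · rw [abs_mul, abs_two]; exact mul_le_mul_of_nonneg_left (b3 i j) zero_le_two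
    have hx : 0 ≤ 36 * L * V1 * NN g f := by positivity
    refine (add_le_add b5 b4).trans ?_
    simp only [Finset.sum_add_distrib, Finset.sum_const, Finset.card_univ, Fintype.card_fin,
      nsmul_eq_mul]
    push_cast
    linarith
  · have : P 1 (fun y => kap y * T g 1 π y) 0 = ∫ y, (kap y * gam 1 y) * T g 1 π y := by
      rw [P_gam zero_lt_one]; congr 1; ext y; ring
    rw [this]
    have := L7 h (kap_Cc.mul_right (gam_smooth 1)) (fun y hy => by rw [kap_zero hy.le, zero_mul]) m4
    refine this.trans (mul_le_mul_of_nonneg_right ?_ hN)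
    have : 0 ≤ 9 * (5 * CK * L * V1 + 2 * (2 * CK * L * V1)) + 36 * (2 * CK * L) * V1 := by
      positivity
    linarith

lemma key_lemma : ∃ C, 0 ≤ C ∧ ∀ (π g : E3 → ℝ) (f : Fin 3 → Fin 3 → E3 → ℝ), Dat π g f →
    |∫ x, g x * π x| ≤ C * NN g f := by
  obtain ⟨C, hC, hb⟩ := heat_bound
  refine ⟨2 * C + 162, by positivity, fun π g f h => ?_⟩
  obtain ⟨h1, h2⟩ := hb π g f h
  have hN := NN_nonneg g f
  set N := NN g f with hNdef
  have cc : Cc (fun y => kap y * T g 1 π y) := h.psi.mul_left kap_Cc.smooth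
  set A : ℝ → ℝ := fun s => P s (fun y => kap y * T g 1 π y) 0 with hA
  have A0 : A 0 = ∫ x, g x * π x := by
    simp only [hA, P_zero]
    rw [kap_one (by simp), one_mul]
    unfold T; simp
  have s0 : (0:ℝ) < √2 := by positivity
  have s2 : (√2 : ℝ) ^ 2 = 2 := Real.sq_sqrt (by norm_num)
  have s1 : 1 ≤ √2 := by rw [Real.one_le_sqrt]; norm_num
  have main : ∀ ε > 0, |A 0| ≤ (2 * C + 162) * N + 162 * V1 * (ε * √ε) := by
    intro ε hε
    have hd : ∀ i j : Fin 3, ∀ s ∈ Set.Icc (0:ℝ) 1, ∃ d, HasDerivAt (Phi ε g (f i j)) d (s / √2) ∧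
        ∀ k l, (s / √2) * |∫ x, P (s / √2) (D k g) x * P (s / √2) (D l (f i j)) x| ≤
          3 / 2 * (-d) := by
      intro i j s hs
      refine Phi_deriv hε h.hg (h.hf i j) (div_nonneg hs.1 s0.le) ?_
      rw [div_lt_iff₀ s0]; linarith [hs.2]
    have hex : ∀ i j : Fin 3, ∃ d : ℝ → ℝ, ∀ s ∈ Set.Icc (0:ℝ) 1,
        HasDerivAt (Phi ε g (f i j)) (d s) (s / √2) ∧
        ∀ k l, (s / √2) * |∫ x, P (s / √2) (D k g) x * P (s / √2) (D l (f i j)) x| ≤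
          3 / 2 * (-(d s)) := by
      intro i j
      have : ∀ s : ℝ, ∃ d : ℝ, s ∈ Set.Icc (0:ℝ) 1 →
        (HasDerivAt (Phi ε g (f i j)) d (s / √2) ∧
        ∀ k l, (s / √2) * |∫ x, P (s / √2) (D k g) x * P (s / √2) (D l (f i j)) x| ≤
          3 / 2 * (-d)) := by
        intro s
        by_cases hs : s ∈ Set.Icc (0:ℝ) 1
        · obtain ⟨d, hd⟩ := hd i j s hs
          exact ⟨d, fun _ => hd⟩
        · exact ⟨0, fun h => absurd h hs⟩
      choose d hd using this
      exact ⟨d, hd⟩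
    choose d hdd using hex
    set Ψ : ℝ → ℝ := fun s => ∑ i, ∑ j, Phi ε g (f i j) (s / √2) with hΨ
    have dΨ : ∀ s ∈ Set.Icc (0:ℝ) 1, HasDerivAt Ψ (∑ i, ∑ j, d i j s * (1 / √2)) s := by
      intro s hs
      refine HasDerivAt.fun_sum fun i _ => HasDerivAt.fun_sum fun j _ => ?_
      have := (hdd i j s hs).1
      have hdiv : HasDerivAt (fun s : ℝ => s / √2) (1 / √2) s := (hasDerivAt_id s).div_const _
      exact HasDerivAt.comp s this hdiv
    have hΨ0 : ∀ s, 0 ≤ Ψ s := fun s =>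
      Finset.sum_nonneg fun i _ => Finset.sum_nonneg fun j _ => Phi_nonneg hε _ _ _
    have hΨ1 : 3 * Ψ 0 ≤ 162 * N + 162 * V1 * (ε * √ε) := by
      have : ∀ i j, Phi ε g (f i j) (0 / √2) ≤ 6 * (N + V1 * (ε * √ε)) := by
        intro i j
        rw [zero_div]
        have := Phi_zero_le hε h.hg (h.hf i j) h.sup1 (h.sf i j)
        have := le_NN g f i j
        linarith
      have := Finset.sum_le_sum (s := Finset.univ) fun i (_ : i ∈ Finset.univ) =>
        Finset.sum_le_sum (s := Finset.univ) fun j (_ : j ∈ Finset.univ) => this i j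
      change Ψ 0 ≤ _ at this
      simp only [Finset.sum_const, Finset.card_univ, Fintype.card_fin, nsmul_eq_mul] at this
      push_cast at this
      linarith
    have dA : ∀ s, HasDerivAt A (s * ∑ l, P s (D l (D l (fun y => kap y * T g 1 π y))) 0) s :=
      fun s => P_hasDeriv cc s 0
    have dAb : ∀ s ∈ Set.Ioo (0:ℝ) 1, |s * ∑ l, P s (D l (D l (fun y => kap y * T g 1 π y))) 0| ≤
        -3 * (∑ i, ∑ j, d i j s * (1 / √2)) + C * N := by
      intro s hs
      have hs' : s ∈ Set.Icc (0:ℝ) 1 := ⟨hs.1.le, hs.2.le⟩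
      rw [abs_mul, abs_of_pos hs.1]
      have t1 := mul_le_mul_of_nonneg_left (h1 s hs.1) hs.1.le
      have t2 : s * ∑ i, ∑ j, |P s (D i (D j (T g 1 (f i j)))) 0| ≤
          -3 * (∑ i, ∑ j, d i j s * (1 / √2)) := by
        simp only [Finset.mul_sum]
        refine Finset.sum_le_sum fun i _ => Finset.sum_le_sum fun j _ => ?_
        have hr : |s / √2| ≤ 2 := by
          rw [abs_of_nonneg (div_nonneg hs.1.le s0.le), div_le_iff₀ s0]; linarith [hs.2]
        have e1 := corr_heat h.hg (h.hf i j) hr i j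
        rw [mul_div_cancel₀ s s0.ne'] at e1
        rw [e1, abs_neg]
        have t3 := (hdd i j s hs').2 i j
        have t4 := mul_le_mul_of_nonneg_left t3 s0.le
        rw [← mul_assoc, mul_div_cancel₀ s s0.ne'] at t4
        refine t4.trans (le_of_eq ?_)
        have : 1 / √2 = √2 / 2 := by rw [div_eq_div_iff s0.ne' two_ne_zero]; nlinarith
        rw [this]; ring
      have t5 : s * (C * N) ≤ C * N := mul_le_of_le_one_left (by positivity) hs.2.le
      rw [mul_add] at t1
      linarith
    have anti : ∀ σ : ℝ, |σ| = 1 → σ * A 1 ≤ σ * A 0 + 3 * Ψ 0 + C * N - 3 * Ψ 1 := by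
      intro σ hσ
      have dh : ∀ s ∈ Set.Icc (0:ℝ) 1, HasDerivAt (fun s => σ * A s + 3 * Ψ s - C * N * s)
          (σ * (s * ∑ l, P s (D l (D l (fun y => kap y * T g 1 π y))) 0) +
            3 * (∑ i, ∑ j, d i j s * (1 / √2)) - C * N * 1) s := fun s hs =>
        (((dA s).const_mul σ).add ((dΨ s hs).const_mul 3)).sub ((hasDerivAt_id s).const_mul (C * N))
      have := antitoneOn_of_deriv_nonpos (convex_Icc (0:ℝ) 1)
        (f := fun s => σ * A s + 3 * Ψ s - C * N * s)
        (fun s hs => (dh s hs).continuousAt.continuousWithinAt)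
        (fun s hs => (dh s (interior_subset hs)).differentiableAt.differentiableWithinAt)
        (fun s hs => by
          rw [(dh s (interior_subset hs)).deriv]
          rw [interior_Icc] at hs
          have t := dAb s hs
          have t' := le_abs_self (σ * (s * ∑ l, P s (D l (D l (fun y => kap y * T g 1 π y))) 0))
          rw [abs_mul, hσ, one_mul] at t'
          linarith)
        (Set.left_mem_Icc.2 zero_le_one) (Set.right_mem_Icc.2 zero_le_one) zero_le_one
      simp only at this
      linarith
    have p1 := anti 1 (by simp)
    have p2 := anti (-1) (by simp)
    have q := hΨ0 1
    have r := abs_le.1 h2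
    change -(C * N) ≤ A 1 ∧ A 1 ≤ C * N at r
    rw [abs_le]
    constructor <;> nlinarith [r.1, r.2]
  rw [← A0]
  have lim : Filter.Tendsto (fun ε : ℝ => (2 * C + 162) * N + 162 * V1 * (ε * √ε))
      (nhdsWithin 0 (Set.Ioi 0)) (nhds ((2 * C + 162) * N + 162 * V1 * (0 * √0))) := by
    refine Filter.Tendsto.mono_left (Continuous.tendsto ?_ 0) nhdsWithin_le_nhds
    fun_prop
  simp only [zero_mul, mul_zero, add_zero] at lim
  exact ge_of_tendsto lim (by filter_upwards [self_mem_nhdsWithin] with ε hε using main ε hε)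

end NSC

namespace NSC

/-- cutoff at 8/10 to 9/10 -/
noncomputable def bp : ContDiffBump (0 : E3) := ⟨8 / 10, 9 / 10, by norm_num, by norm_num⟩
/-- cutoff at 1 to 2 -/
noncomputable def bt : ContDiffBump (0 : E3) := ⟨1, 2, by norm_num, by norm_num⟩
/-- outer cutoff -/
noncomputable def bo : ContDiffBump (0 : E3) := ⟨98 / 100, 99 / 100, by norm_num, by norm_num⟩
/-- inner cutoff -/
noncomputable def bi : ContDiffBump (0 : E3) := ⟨505 / 1000, 51 / 100, by norm_num, by norm_num⟩
/-- annular cutoff -/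
noncomputable def chi (x : E3) : ℝ := bo x * (1 - bi x)

lemma bump_Cc (b : ContDiffBump (0 : E3)) : Cc (b : E3 → ℝ) := ⟨b.contDiff, b.hasCompactSupport⟩

lemma bump_one (b : ContDiffBump (0 : E3)) {x : E3} (hx : ‖x‖ ≤ b.rIn) : b x = 1 :=
  b.one_of_mem_closedBall (by simpa using hx)
lemma bump_zero (b : ContDiffBump (0 : E3)) {x : E3} (hx : b.rOut ≤ ‖x‖) : b x = 0 :=
  b.zero_of_le_dist (by simpa using hx)

lemma chi_Cc : Cc chi :=
  (bump_Cc bo).mul_right (contDiff_const.sub (bump_Cc bi).smooth)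

lemma chi_one {x : E3} (h1 : 52 / 100 < ‖x‖) (h2 : ‖x‖ < 98 / 100) : chi x = 1 := by
  unfold chi
  rw [bump_one bo (show ‖x‖ ≤ 98 / 100 from h2.le),
    bump_zero bi (show (51 / 100 : ℝ) ≤ ‖x‖ by linarith)]
  norm_num

lemma chi_zero {x : E3} (hx : x ∉ annulus 1) : chi x = 0 := by
  unfold chi
  by_cases h : 1 / 2 < ‖x‖
  · have : 1 ≤ ‖x‖ := by
      by_contra h'
      exact hx ⟨h, not_le.mp h'⟩
    rw [bump_zero bo (show (99 / 100 : ℝ) ≤ ‖x‖ by linarith), zero_mul]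
  · rw [bump_one bi (show ‖x‖ ≤ 505 / 1000 by linarith)]; simp

lemma chi_abs (x : E3) : |chi x| ≤ 1 := by
  unfold chi
  have a1 := bo.nonneg' x
  have a2 := bo.le_one (x := x)
  have a3 := bi.nonneg' x
  have a4 := bi.le_one (x := x)
  rw [abs_of_nonneg (mul_nonneg a1 (by linarith))]
  nlinarith

lemma Dbp_zero {x : E3} (j : Fin 3) (hx : D j bp x ≠ 0) : 8 / 10 ≤ ‖x‖ ∧ ‖x‖ ≤ 9 / 10 := by
  constructor
  · by_contra h
    refine hx (D_zero_of (c := 1) ?_ j)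
    filter_upwards [nhds_lt (not_le.mp h)] with z hz
    exact bump_one bp hz.le
  · by_contra h
    refine hx (D_zero_of (c := 0) ?_ j)
    filter_upwards [nhds_gt (not_le.mp h)] with z hz
    exact bump_zero bp hz.le

lemma meas_annulus (R : ℝ) : MeasurableSet (annulus R) :=
  ((isOpen_lt continuous_const continuous_norm).inter
    (isOpen_lt continuous_norm continuous_const)).measurableSet

lemma annulus_sub (R : ℝ) : annulus R ⊆ Metric.closedBall 0 R := fun x hx => by
  simpa using hx.2.le

lemma intOn_annulus {h : E3 → ℝ} (hh : Continuous h) (R : ℝ) : IntegrableOn h (annulus R) :=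
  (hh.continuousOn.integrableOn_compact (isCompact_closedBall (0 : E3) R)).mono_set (annulus_sub R)

/-- the system -/
structure NS (ρ π : E3 → ℝ) (u : E3 → E3) (M : ℝ) : Prop where
  hρ : ContDiff ℝ (⊤ : ℕ∞) ρ
  hu : ContDiff ℝ (⊤ : ℕ∞) u
  hπ : ContDiff ℝ (⊤ : ℕ∞) π
  mom : ∀ x i, -(∑ j, D j (D j (fun z => u z i)) x) + ρ x * (∑ j, u x j * D j (fun z => u z i) x)
    + D i π x = 0
  div : ∀ x, (∑ i, D i (fun z => u z i) x) = 0
  divρ : ∀ x, (∑ i, D i (fun z => ρ z * u z i) x) = 0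
  bd : ∀ x, |ρ x| ≤ M

/-- stress -/
noncomputable def FF (ρ : E3 → ℝ) (u : E3 → E3) (i j : Fin 3) (x : E3) : ℝ :=
  D j (fun z => u z i) x - u x i * (ρ x * u x j)

/-- majorant -/
noncomputable def Nm (u : E3 → E3) (M : ℝ) (x : E3) : ℝ := ‖fderiv ℝ u x‖ + M * ‖u x‖ ^ 2

lemma NS.hM {ρ π : E3 → ℝ} {u : E3 → E3} {M : ℝ} (h : NS ρ π u M) : 0 ≤ M :=
  (abs_nonneg _).trans (h.bd 0)

lemma Nm_nonneg (u : E3 → E3) {M : ℝ} (hM : 0 ≤ M) (x : E3) : 0 ≤ Nm u M x := by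
  unfold Nm; positivity

lemma coord_smooth {u : E3 → E3} (hu : ContDiff ℝ (⊤ : ℕ∞) u) (i : Fin 3) :
    ContDiff ℝ (⊤ : ℕ∞) (fun z => u z i) := by
  exact (contDiff_euclidean.mp hu) i

lemma D_ucoord {u : E3 → E3} (hu : ContDiff ℝ (⊤ : ℕ∞) u) (i j : Fin 3) (x : E3) :
    D j (fun z => u z i) x = (fderiv ℝ u x (e j)) i := by
  have h1 : DifferentiableAt ℝ u x := hu.differentiable (by simp) x
  have := ((EuclideanSpace.proj (𝕜 := ℝ) i : E3 →L[ℝ] ℝ).hasFDerivAt (x := u x)).comp x h1.hasFDerivAt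
  have h2 : fderiv ℝ (fun z => u z i) x =
      (EuclideanSpace.proj (𝕜 := ℝ) i : E3 →L[ℝ] ℝ).comp (fderiv ℝ u x) := this.fderiv
  unfold D
  rw [h2]; rfl

lemma D_ucoord_le {u : E3 → E3} (hu : ContDiff ℝ (⊤ : ℕ∞) u) (i j : Fin 3) (x : E3) :
    |D j (fun z => u z i) x| ≤ ‖fderiv ℝ u x‖ := by
  rw [D_ucoord hu]
  refine (abs_coord_le _ _).trans ((ContinuousLinearMap.le_opNorm _ _).trans ?_)
  rw [norm_e, mul_one]

lemma grad_le {u : E3 → E3} (hu : ContDiff ℝ (⊤ : ℕ∞) u) (x : E3) :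
    ‖fderiv ℝ u x‖ ^ 2 ≤ 9 * ∑ i, ∑ j, (D j (fun z => u z i) x) ^ 2 := by
  have h1 : ‖fderiv ℝ u x‖ ≤ ∑ i, ∑ j, |D j (fun z => u z i) x| := by
    refine ContinuousLinearMap.opNorm_le_bound _ (by positivity) fun y => ?_
    refine (norm_le_sum _).trans ?_
    rw [Finset.sum_mul]
    refine Finset.sum_le_sum fun i _ => ?_
    have : (fderiv ℝ u x y) i = ∑ j, y j * D j (fun z => u z i) x := by
      simp only [D_ucoord hu]
      conv_lhs => rw [sum_e y]
      simp
    rw [this, Finset.sum_mul]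
    refine (Finset.abs_sum_le_sum_abs _ _).trans (Finset.sum_le_sum fun j _ => ?_)
    rw [abs_mul, mul_comm]
    exact mul_le_mul_of_nonneg_left (abs_coord_le _ _) (abs_nonneg _)
  have h2 : ‖fderiv ℝ u x‖ ^ 2 ≤ (∑ i, ∑ j, |D j (fun z => u z i) x|) ^ 2 := by gcongr
  refine h2.trans ?_
  have h3 := sq_sum_le_card_mul_sum_sq (s := (Finset.univ : Finset (Fin 3 × Fin 3)))
    (f := fun q => |D q.2 (fun z => u z q.1) x|)
  rw [Fintype.sum_prod_type, Fintype.sum_prod_type] at h3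
  simpa [sq_abs] using h3

lemma FF_le {ρ π : E3 → ℝ} {u : E3 → E3} {M : ℝ} (h : NS ρ π u M) (i j : Fin 3) (x : E3) :
    |FF ρ u i j x| ≤ Nm u M x := by
  unfold FF Nm
  refine (abs_sub _ _).trans (add_le_add (D_ucoord_le h.hu i j x) ?_)
  rw [abs_mul, abs_mul]
  have := h.hM
  calc |u x i| * (|ρ x| * |u x j|) ≤ ‖u x‖ * (M * ‖u x‖) := by
        gcongr
        · exact abs_coord_le _ _
        · exact h.bd x
        · exact abs_coord_le _ _
    _ = _ := by ring

lemma FF_smooth {ρ π : E3 → ℝ} {u : E3 → E3} {M : ℝ} (h : NS ρ π u M) (i j : Fin 3) :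
    ContDiff ℝ (⊤ : ℕ∞) (FF ρ u i j) :=
  (smooth_D (coord_smooth h.hu i) j).sub
    ((coord_smooth h.hu i).mul (h.hρ.mul (coord_smooth h.hu j)))

lemma D_FF {ρ π : E3 → ℝ} {u : E3 → E3} {M : ℝ} (h : NS ρ π u M) (i j : Fin 3) (x : E3) :
    D j (FF ρ u i j) x = D j (D j (fun z => u z i)) x - (D j (fun z => u z i) x * (ρ x * u x j) +
      u x i * D j (fun z => ρ z * u z j) x) := by
  have s := coord_smooth h.hu
  unfold FF
  rw [D_sub (smooth_diff (smooth_D (s i) j) x)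
    (smooth_diff ((s i).mul (h.hρ.mul (s j))) x),
    D_mul (smooth_diff (s i) x) (smooth_diff (h.hρ.mul (s j)) x)]

lemma grad_pi {ρ π : E3 → ℝ} {u : E3 → E3} {M : ℝ} (h : NS ρ π u M) (i : Fin 3) (x : E3) :
    D i π x = ∑ j, D j (FF ρ u i j) x := by
  simp only [D_FF h]
  have h1 := h.mom x i
  have h2 := h.divρ x
  simp only [Fin.sum_univ_three] at *
  linear_combination h1 + u x i * h2

end NSC

namespace NSC

/-- energy flux -/
noncomputable def WW (ρ π : E3 → ℝ) (u : E3 → E3) (j : Fin 3) (x : E3) : ℝ :=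
  (∑ i, u x i * FF ρ u i j x) - π x * u x j + (1 / 2) * ((∑ i, u x i * u x i) * (ρ x * u x j))

section
variable {ρ π : E3 → ℝ} {u : E3 → E3} {M : ℝ}

lemma sum_smooth {a : Fin 3 → E3 → ℝ} (ha : ∀ i, ContDiff ℝ (⊤ : ℕ∞) (a i)) :
    ContDiff ℝ (⊤ : ℕ∞) (fun y => ∑ i, a i y) := ContDiff.sum fun i _ => ha i

lemma WW_smooth (h : NS ρ π u M) (j : Fin 3) : ContDiff ℝ (⊤ : ℕ∞) (WW ρ π u j) := by
  have s := coord_smooth h.hu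
  exact ((sum_smooth fun i => (s i).mul (FF_smooth h i j)).sub (h.hπ.mul (s j))).add
    (contDiff_const.mul ((sum_smooth fun i => (s i).mul (s i)).mul (h.hρ.mul (s j))))

lemma D_WW (h : NS ρ π u M) (j : Fin 3) (x : E3) : D j (WW ρ π u j) x =
    (∑ i, (D j (fun z => u z i) x * FF ρ u i j x + u x i * D j (FF ρ u i j) x))
    - (D j π x * u x j + π x * D j (fun z => u z j) x)
    + (1 / 2) * ((∑ i, (D j (fun z => u z i) x * u x i + u x i * D j (fun z => u z i) x))
        * (ρ x * u x j) + (∑ i, u x i * u x i) * D j (fun z => ρ z * u z j) x) := by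
  have s := coord_smooth h.hu
  have d := fun i => smooth_diff (s i) x
  have s1 : ∀ i, ContDiff ℝ (⊤ : ℕ∞) (fun z => u z i * FF ρ u i j z) :=
    fun i => (s i).mul (FF_smooth h i j)
  have s2 : ContDiff ℝ (⊤ : ℕ∞) (fun z => π z * u z j) := h.hπ.mul (s j)
  have s3 : ∀ i, ContDiff ℝ (⊤ : ℕ∞) (fun z => u z i * u z i) := fun i => (s i).mul (s i)
  have s4 : ContDiff ℝ (⊤ : ℕ∞) (fun z => ρ z * u z j) := h.hρ.mul (s j)
  have s5 := sum_smooth s3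
  unfold WW
  rw [D_add (smooth_diff ((sum_smooth s1).sub s2) x)
      (smooth_diff (contDiff_const.mul (s5.mul s4)) x),
    D_sub (smooth_diff (sum_smooth s1) x) (smooth_diff s2 x),
    D_const_mul (smooth_diff (s5.mul s4) x),
    D_mul (smooth_diff s5 x) (smooth_diff s4 x),
    D_sum (f := fun i z => u z i * FF ρ u i j z) (fun i => smooth_diff (s1 i) x),
    D_sum (f := fun i z => u z i * u z i) (fun i => smooth_diff (s3 i) x),
    D_mul (smooth_diff h.hπ x) (d j)]
  congr 3
  · exact funext fun i => D_mul (d i) (smooth_diff (FF_smooth h i j) x) j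
  · congr 2
    exact funext fun i => D_mul (d i) (d i) j

lemma div_WW (h : NS ρ π u M) (x : E3) :
    ∑ j, D j (WW ρ π u j) x = ∑ i, ∑ j, (D j (fun z => u z i) x) ^ 2 := by
  simp only [D_WW h]
  have h1 := fun i => grad_pi h i x
  have h2 := h.divρ x
  have h3 := h.div x
  simp only [h1]
  simp only [Fin.sum_univ_three] at *
  simp only [FF] at *
  linear_combination (-π x) * h3 + (1 / 2) * (u x 0 * u x 0 + u x 1 * u x 1 + u x 2 * u x 2) * h2

/-- boundary density -/
noncomputable def gg (u : E3 → E3) (x : E3) : ℝ := ∑ j, u x j * D j bp x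

/-- rest of the boundary density -/
noncomputable def rr (ρ : E3 → ℝ) (u : E3 → E3) (x : E3) : ℝ :=
  ∑ j, D j bp x * ((∑ i, u x i * FF ρ u i j x) + (1 / 2) * ((∑ i, u x i * u x i) * (ρ x * u x j)))

lemma gg_Cc (hu : ContDiff ℝ (⊤ : ℕ∞) u) : Cc (gg u) :=
  Cc_sum fun j => ((bump_Cc bp).D j).mul_left (coord_smooth hu j)

lemma rr_Cc (h : NS ρ π u M) : Cc (rr ρ u) := by
  have s := coord_smooth h.hu
  exact Cc_sum fun j => ((bump_Cc bp).D j).mul_right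
    ((sum_smooth fun i => (s i).mul (FF_smooth h i j)).add
    (contDiff_const.mul ((sum_smooth fun i => (s i).mul (s i)).mul (h.hρ.mul (s j)))))

lemma energy (h : NS ρ π u M) : ∫ x, bp x * ∑ i, ∑ j, (D j (fun z => u z i) x) ^ 2 =
    (∫ x, gg u x * π x) - ∫ x, rr ρ u x := by
  have h1 : ∀ j, ∫ x, WW ρ π u j x * D j bp x = - ∫ x, D j (WW ρ π u j) x * bp x :=
    fun j => ibp (WW_smooth h j) (bump_Cc bp) j
  have i1 : ∀ j, Integrable (fun x => WW ρ π u j x * D j bp x) :=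
    fun j => (((bump_Cc bp).D j).mul_left (WW_smooth h j)).integrable
  have i2 : ∀ j, Integrable (fun x => D j (WW ρ π u j) x * bp x) :=
    fun j => ((bump_Cc bp).mul_left (smooth_D (WW_smooth h j) j)).integrable
  have h2 : ∫ x, ∑ j, WW ρ π u j x * D j bp x = - ∫ x, ∑ j, D j (WW ρ π u j) x * bp x := by
    rw [integral_finsetSum _ (fun j _ => i1 j), integral_finsetSum _ (fun j _ => i2 j),
      ← Finset.sum_neg_distrib]
    exact Finset.sum_congr rfl fun j _ => h1 j
  have h3 : ∀ x, bp x * ∑ i, ∑ j, (D j (fun z => u z i) x) ^ 2 =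
      ∑ j, D j (WW ρ π u j) x * bp x := by
    intro x
    rw [← div_WW h, mul_comm, Finset.sum_mul]
  simp only [h3]
  rw [← integral_sub ((gg_Cc h.hu).mul_right h.hπ).integrable (rr_Cc h).integrable,
    ← neg_inj, ← h2, ← integral_neg]
  congr 1
  ext x
  simp only [gg, rr, WW, Fin.sum_univ_three]
  ring

lemma gg_int (h : NS ρ π u M) : ∫ x, gg u x = 0 := by
  unfold gg
  rw [integral_finsetSum _
    (fun j _ => (((bump_Cc bp).D j).mul_left (coord_smooth h.hu j)).integrable)]
  have : ∀ j, ∫ x, u x j * D j bp x = - ∫ x, D j (fun z => u z j) x * bp x :=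
    fun j => ibp (coord_smooth h.hu j) (bump_Cc bp) j
  simp only [this]
  rw [Finset.sum_neg_distrib, ← integral_finsetSum _
    (fun j _ => ((bump_Cc bp).mul_left (smooth_D (coord_smooth h.hu j) j)).integrable)]
  simp only [← Finset.sum_mul, h.div, zero_mul, integral_zero, neg_zero]

lemma gg_supp {x : E3} (hx : gg u x ≠ 0) : 8 / 10 ≤ ‖x‖ ∧ ‖x‖ ≤ 9 / 10 := by
  unfold gg at hx
  obtain ⟨j, _, hj⟩ := Finset.exists_ne_zero_of_sum_ne_zero hx
  exact Dbp_zero j (right_ne_zero_of_mul hj)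

lemma rr_supp {x : E3} (hx : rr ρ u x ≠ 0) : 8 / 10 ≤ ‖x‖ ∧ ‖x‖ ≤ 9 / 10 := by
  unfold rr at hx
  obtain ⟨j, _, hj⟩ := Finset.exists_ne_zero_of_sum_ne_zero hx
  exact Dbp_zero j (left_ne_zero_of_mul hj)

lemma dat (h : NS ρ π u M) {l : ℝ} : Dat (fun x => l⁻¹ * (bt x * π x))
    (fun x => l * gg u x) (fun i j x => l⁻¹ * (chi x * FF ρ u i j x)) where
  hπ := ((bump_Cc bt).mul_right h.hπ).mul_left contDiff_const
  hg := (gg_Cc h.hu).mul_left contDiff_const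
  hf i j := (chi_Cc.mul_right (FF_smooth h i j)).mul_left contDiff_const
  sg x hx := gg_supp (right_ne_zero_of_mul hx)
  g0 := by rw [integral_const_mul, gg_int h, mul_zero]
  sf i j x hx := by
    show l⁻¹ * (chi x * FF ρ u i j x) = 0
    rw [chi_zero (fun h => by linarith [h.2])]; simp
  eq x h1 h2 i := by
    have e1 : D i (fun x => l⁻¹ * (bt x * π x)) x = l⁻¹ * D i π x := by
      rw [← D_const_mul (smooth_diff h.hπ x)]
      refine D_congr ?_ i
      filter_upwards [nhds_lt h2] with z hz
      rw [bump_one bt (show ‖z‖ ≤ 1 by linarith), one_mul]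
    have e2 : ∀ j, D j (fun x => l⁻¹ * (chi x * FF ρ u i j x)) x = l⁻¹ * D j (FF ρ u i j) x := by
      intro j
      rw [← D_const_mul (smooth_diff (FF_smooth h i j) x)]
      refine D_congr ?_ j
      filter_upwards [nhds_lt h2, nhds_gt h1] with z hz hz'
      rw [chi_one hz' hz, one_mul]
    simp only [e1, e2, grad_pi h i x, Finset.mul_sum]

end
end NSC

namespace NSC

lemma int_le_annulus {a b : E3 → ℝ} (ha : Integrable a) (h0 : ∀ x, x ∉ annulus 1 → a x = 0)
    (hb : Continuous b) (hab : ∀ x, a x ≤ b x) : ∫ x, a x ≤ ∫ x in annulus 1, b x := by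
  rw [← setIntegral_eq_integral_of_forall_compl_eq_zero h0]
  exact setIntegral_mono ha.integrableOn (intOn_annulus hb 1) hab

lemma Nm_cont {u : E3 → E3} (hu : ContDiff ℝ (⊤ : ℕ∞) u) (M : ℝ) : Continuous (Nm u M) := by
  have h1 : Continuous (fderiv ℝ u) := hu.continuous_fderiv (by simp)
  have h2 := hu.continuous
  unfold Nm
  fun_prop

lemma in_ann {x : E3} (h : 8 / 10 ≤ ‖x‖ ∧ ‖x‖ ≤ 9 / 10) : x ∈ annulus 1 :=
  ⟨by linarith [h.1], by linarith [h.2]⟩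

lemma sqrt_scale {m N : ℝ} (hm : 0 < m) : (m ^ 2)⁻¹ * N * √((m ^ 2)⁻¹ * N) =
    (m ^ 3)⁻¹ * (N * √N) := by
  rw [Real.sqrt_mul (by positivity), Real.sqrt_inv, Real.sqrt_sq hm.le]
  field_simp

lemma scale1 : ∃ C, 0 ≤ C ∧ ∀ (ρ π : E3 → ℝ) (u : E3 → E3) (M : ℝ), NS ρ π u M → ∀ m : ℝ, 0 < m →
    ∫ x in Metric.ball (0 : E3) (1 / 2), ‖fderiv ℝ u x‖ ^ 2 ≤
      C * (m ^ 6 * (∫ x in annulus 1, ‖u x‖ ^ 3) +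
        (m ^ 3)⁻¹ * ∫ x in annulus 1, Nm u M x * √(Nm u M x)) := by
  obtain ⟨C, hC, hk⟩ := key_lemma
  obtain ⟨L, hL, hb⟩ := (bump_Cc bp).fbdd
  have hb' : ∀ j x, |D j bp x| ≤ L := fun j x => by
    unfold D
    rw [← Real.norm_eq_abs]
    refine (ContinuousLinearMap.le_opNorm _ _).trans ?_
    rw [norm_e, mul_one]; exact hb x
  refine ⟨9 * (C * (27 * L ^ 3 + 9) + 15 * L), by positivity, fun ρ π u M h m hm => ?_⟩
  have hM := h.hM
  have hu := h.hu
  have cu : Continuous u := hu.continuous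
  have cN := Nm_cont hu M
  have nN := Nm_nonneg u hM
  set a := ∫ x in annulus 1, ‖u x‖ ^ 3
  set b := ∫ x in annulus 1, Nm u M x * √(Nm u M x)
  have ha : 0 ≤ a := integral_nonneg fun x => by positivity
  have hb0 : 0 ≤ b := integral_nonneg fun x => mul_nonneg (nN x) (Real.sqrt_nonneg _)
  have gle : ∀ x, |gg u x| ≤ 3 * L * ‖u x‖ := by
    intro x
    unfold gg
    refine (Finset.abs_sum_le_sum_abs _ _).trans ?_
    calc ∑ j, |u x j * D j bp x| ≤ ∑ j : Fin 3, ‖u x‖ * L := by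
          refine Finset.sum_le_sum fun j _ => ?_
          rw [abs_mul]
          exact mul_le_mul (abs_coord_le _ _) (hb' j x) (abs_nonneg _) (norm_nonneg _)
      _ = _ := by simp; ring
  have rle : ∀ x, |rr ρ u x| ≤ 15 * L * (‖u x‖ * Nm u M x) := by
    intro x
    unfold rr
    refine (Finset.abs_sum_le_sum_abs _ _).trans ?_
    have hN : M * ‖u x‖ ^ 2 ≤ Nm u M x := by
      unfold Nm; linarith [norm_nonneg (fderiv ℝ u x)]
    have n0 := norm_nonneg (u x)
    calc _ ≤ ∑ j : Fin 3, L * (5 * (‖u x‖ * Nm u M x)) := by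
          refine Finset.sum_le_sum fun j _ => ?_
          rw [abs_mul]
          refine mul_le_mul (hb' j x) ?_ (abs_nonneg _) hL
          refine (abs_add_le _ _).trans ?_
          have q1 : |∑ i, u x i * FF ρ u i j x| ≤ 3 * (‖u x‖ * Nm u M x) := by
            refine (Finset.abs_sum_le_sum_abs _ _).trans ?_
            calc _ ≤ ∑ i : Fin 3, ‖u x‖ * Nm u M x := by
                  refine Finset.sum_le_sum fun i _ => ?_
                  rw [abs_mul]
                  exact mul_le_mul (abs_coord_le _ _) (FF_le h i j x) (abs_nonneg _) n0
              _ = _ := by simp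
          have q2 : |∑ i, u x i * u x i| ≤ 3 * ‖u x‖ ^ 2 := by
            refine (Finset.abs_sum_le_sum_abs _ _).trans ?_
            calc _ ≤ ∑ i : Fin 3, ‖u x‖ * ‖u x‖ := by
                  refine Finset.sum_le_sum fun i _ => ?_
                  rw [abs_mul]
                  exact mul_le_mul (abs_coord_le _ _) (abs_coord_le _ _) (abs_nonneg _) n0
              _ = _ := by simp; ring
          have q3 : |(1 / 2) * ((∑ i, u x i * u x i) * (ρ x * u x j))| ≤
              2 * (‖u x‖ * Nm u M x) := by
            rw [abs_mul, abs_mul, abs_mul]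
            calc _ ≤ |(1/2 : ℝ)| * (3 * ‖u x‖ ^ 2 * (M * ‖u x‖)) := by
                  gcongr
                  · exact h.bd x
                  · exact abs_coord_le _ _
              _ = 3 / 2 * (‖u x‖ * (M * ‖u x‖ ^ 2)) := by rw [abs_of_pos (by norm_num)]; ring
              _ ≤ 2 * (‖u x‖ * Nm u M x) := by
                  gcongr
                  norm_num
          linarith
      _ = _ := by simp; ring
  have I3 : Integrable (fun x => |m ^ 2 * gg u x| ^ 3) := by
    have := (gg_Cc hu).mul_left (g := fun _ => m ^ 2) contDiff_const
    exact cube_int this.cont this.supp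
  have B1 : ∫ x, |m ^ 2 * gg u x| ^ 3 ≤ 27 * L ^ 3 * (m ^ 6 * a) := by
    have : 27 * L ^ 3 * (m ^ 6 * a) =
        ∫ x in annulus 1, 27 * L ^ 3 * m ^ 6 * ‖u x‖ ^ 3 := by
      rw [integral_const_mul]; ring
    rw [this]
    refine int_le_annulus I3 (fun x hx => ?_) (by fun_prop) (fun x => ?_)
    · have : gg u x = 0 := by
        by_contra h'; exact hx (in_ann (gg_supp h'))
      rw [this]; simp
    · calc |m ^ 2 * gg u x| ^ 3 = m ^ 6 * |gg u x| ^ 3 := by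
            rw [abs_mul, abs_of_pos (by positivity : 0 < m ^ 2)]; ring
        _ ≤ m ^ 6 * (3 * L * ‖u x‖) ^ 3 := by gcongr; exact gle x
        _ = _ := by ring
  have B2 : ∀ i j, ∫ x, |(m ^ 2)⁻¹ * (chi x * FF ρ u i j x)| *
      √|(m ^ 2)⁻¹ * (chi x * FF ρ u i j x)| ≤ (m ^ 3)⁻¹ * b := by
    intro i j
    have hc := (dat h (l := m ^ 2)).hf i j
    have : (m ^ 3)⁻¹ * b = ∫ x in annulus 1, (m ^ 3)⁻¹ * (Nm u M x * √(Nm u M x)) := by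
      rw [integral_const_mul]
    rw [this]
    refine int_le_annulus (th_int hc.cont hc.supp) (fun x hx => ?_) (by fun_prop) (fun x => ?_)
    · rw [chi_zero hx]; simp
    · rw [← sqrt_scale hm]
      have : |(m ^ 2)⁻¹ * (chi x * FF ρ u i j x)| ≤ (m ^ 2)⁻¹ * Nm u M x := by
        rw [abs_mul, abs_mul, abs_of_pos (by positivity : 0 < (m ^ 2)⁻¹)]
        gcongr
        calc _ ≤ 1 * Nm u M x :=
              mul_le_mul (chi_abs x) (FF_le h i j x) (abs_nonneg _) zero_le_one
          _ = _ := one_mul _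
      exact mul_le_mul this (Real.sqrt_le_sqrt this) (Real.sqrt_nonneg _)
        ((abs_nonneg _).trans this)
  have B3 : |∫ x, gg u x * π x| ≤ C * (27 * L ^ 3 * (m ^ 6 * a) + 9 * ((m ^ 3)⁻¹ * b)) := by
    have e1 : ∫ x, gg u x * π x =
        ∫ x, (m ^ 2 * gg u x) * ((m ^ 2)⁻¹ * (bt x * π x)) := by
      congr 1
      ext x
      by_cases hx : gg u x = 0
      · simp [hx]
      · rw [bump_one bt (show ‖x‖ ≤ 1 by linarith [(gg_supp hx).2])]
        field_simp
    rw [e1]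
    refine (hk _ _ _ (dat h (l := m ^ 2))).trans (mul_le_mul_of_nonneg_left ?_ hC)
    unfold NN
    refine add_le_add B1 ?_
    calc _ ≤ ∑ i : Fin 3, ∑ j : Fin 3, (m ^ 3)⁻¹ * b :=
          Finset.sum_le_sum fun i _ => Finset.sum_le_sum fun j _ => B2 i j
      _ = _ := by simp; ring
  have B4 : |∫ x, rr ρ u x| ≤ 15 * L * (m ^ 6 * a + (m ^ 3)⁻¹ * b) := by
    have e2 : 15 * L * (m ^ 6 * a + (m ^ 3)⁻¹ * b) = ∫ x in annulus 1,
        15 * L * (m ^ 6 * ‖u x‖ ^ 3 + (m ^ 3)⁻¹ * (Nm u M x * √(Nm u M x))) := by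
      rw [integral_const_mul, integral_add (intOn_annulus (by fun_prop) 1)
        (intOn_annulus (by fun_prop) 1), integral_const_mul, integral_const_mul]
    rw [e2]
    refine abs_integral_le_integral_abs.trans ?_
    refine int_le_annulus (rr_Cc h).integrable.abs (fun x hx => ?_) (by fun_prop) (fun x => ?_)
    · have : rr ρ u x = 0 := by
        by_contra h'; exact hx (in_ann (rr_supp h'))
      rw [this]; simp
    · refine (rle x).trans (mul_le_mul_of_nonneg_left ?_ (by positivity))
      have y := young (a := m ^ 2 * ‖u x‖) (b := (m ^ 2)⁻¹ * Nm u M x) (by positivity)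
        (mul_nonneg (by positivity) (nN x))
      rw [sqrt_scale hm] at y
      calc ‖u x‖ * Nm u M x = m ^ 2 * ‖u x‖ * ((m ^ 2)⁻¹ * Nm u M x) := by field_simp
        _ ≤ _ := y
        _ = _ := by ring
  have B5 : ∫ x in Metric.ball (0 : E3) (1 / 2), ‖fderiv ℝ u x‖ ^ 2 ≤
      9 * ∫ x, bp x * ∑ i, ∑ j, (D j (fun z => u z i) x) ^ 2 := by
    have sS : ContDiff ℝ (⊤ : ℕ∞) (fun x => ∑ i, ∑ j, (D j (fun z => u z i) x) ^ 2) :=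
      sum_smooth fun i => sum_smooth fun j => (smooth_D (coord_smooth hu i) j).pow 2
    have cc := ((bump_Cc bp).mul_right sS).integrable
    rw [← integral_const_mul]
    have cf : Continuous (fderiv ℝ u) := hu.continuous_fderiv (by simp)
    have i0 : IntegrableOn (fun x => ‖fderiv ℝ u x‖ ^ 2) (Metric.ball (0 : E3) (1 / 2)) :=
      (((cf.norm.pow 2).continuousOn.integrableOn_compact
        (isCompact_closedBall (0 : E3) (1 / 2)))).mono_set Metric.ball_subset_closedBall
    refine (setIntegral_mono_on i0 (cc.const_mul 9).integrableOn measurableSet_ball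
      (fun x hx => ?_)).trans (setIntegral_le_integral (cc.const_mul 9)
        (Filter.Eventually.of_forall fun x => ?_))
    · rw [bump_one bp (show ‖x‖ ≤ 8 / 10 by
        have : ‖x‖ < 1 / 2 := by simpa using hx
        linarith), one_mul]
      exact grad_le hu x
    · have := bp.nonneg' x
      show 0 ≤ 9 * (bp x * _)
      positivity
  rw [energy h] at B5
  have z1 := le_abs_self (∫ x, gg u x * π x)
  have z2 := neg_abs_le (∫ x, rr ρ u x)
  have p1 : 0 ≤ m ^ 6 * a := by positivity
  have p2 : 0 ≤ (m ^ 3)⁻¹ * b := by positivity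
  have p3 : 0 ≤ C * L ^ 3 * ((m ^ 3)⁻¹ * b) := by positivity
  have p4 : 0 ≤ C * (m ^ 6 * a) := by positivity
  nlinarith

end NSC

namespace NSC

lemma D_scale (R : ℝ) (h : E3 → ℝ) (j : Fin 3) (x : E3) :
    D j (fun z => h (R • z)) x = R * D j h (R • x) := by
  unfold D
  rw [fderiv_comp_smul]; simp

lemma NS.scale {ρ π : E3 → ℝ} {u : E3 → E3} {M : ℝ} (h : NS ρ π u M) {R : ℝ} (hR : 0 < R) :
    NS (fun x => R * ρ (R • x)) (fun x => R * π (R • x)) (fun x => u (R • x)) (R * M) := by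
  have sR : ContDiff ℝ (⊤ : ℕ∞) (fun x : E3 => R • x) := contDiff_const_smul R
  have s := coord_smooth h.hu
  have dS : ∀ {f : E3 → ℝ}, ContDiff ℝ (⊤ : ℕ∞) f → ∀ x, DifferentiableAt ℝ (fun z => f (R • z)) x :=
    fun hf x => smooth_diff (hf.comp sR) x
  have d1 : ∀ i j, D j (fun z => u (R • z) i) = fun x => R * D j (fun z => u z i) (R • x) :=
    fun i j => funext fun x => D_scale R (fun z => u z i) j x
  refine ⟨contDiff_const.mul (h.hρ.comp sR), h.hu.comp sR, contDiff_const.mul (h.hπ.comp sR),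
    fun x i => ?_, fun x => ?_, fun x => ?_, fun x => ?_⟩
  · have d2 : ∀ j, D j (fun x => R * D j (fun z => u z i) (R • x)) x =
        R * (R * D j (D j (fun z => u z i)) (R • x)) := by
      intro j
      rw [D_const_mul (dS (smooth_D (s i) j) x), D_scale R (D j fun z => u z i)]
    have d3 : D i (fun x => R * π (R • x)) x = R * (R * D i π (R • x)) := by
      rw [D_const_mul (dS h.hπ x), D_scale R π]
    have := h.mom (R • x) i
    simp only [d1, d2, d3]
    simp only [Fin.sum_univ_three] at *
    linear_combination R ^ 2 * this
  · have := h.div (R • x)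
    simp only [d1, ← Finset.mul_sum, this, mul_zero]
  · have := h.divρ (R • x)
    have d4 : ∀ i, D i (fun z => R * ρ (R • z) * u (R • z) i) x =
        R * (R * D i (fun z => ρ z * u z i) (R • x)) := by
      intro i
      rw [← D_scale R (fun z => ρ z * u z i), ← D_const_mul (dS (h.hρ.mul (s i)) x)]
      simp only [mul_assoc]
    simp only [d4, ← Finset.mul_sum, this, mul_zero]
  · rw [abs_mul, abs_of_pos hR]
    exact mul_le_mul_of_nonneg_left (h.bd _) hR.le

lemma opt {S C a b : ℝ} (hC : 0 ≤ C) (ha : 0 ≤ a) (hb : 0 ≤ b)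
    (h : ∀ m : ℝ, 0 < m → S ≤ C * (m ^ 6 * a + (m ^ 3)⁻¹ * b)) :
    S ≤ 2 * C * (a ^ (1 / 3 : ℝ) * b ^ (2 / 3 : ℝ)) := by
  have key : ∀ t : ℝ, 0 < t → S ≤ 2 * C * ((a + t) ^ (1 / 3 : ℝ) * (b + t) ^ (2 / 3 : ℝ)) := by
    intro t ht
    have pa : 0 < a + t := by linarith
    have pb : 0 < b + t := by linarith
    set x := (a + t) ^ (1 / 9 : ℝ) with hx
    set y := (b + t) ^ (1 / 9 : ℝ) with hy
    have px : 0 < x := Real.rpow_pos_of_pos pa _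
    have py : 0 < y := Real.rpow_pos_of_pos pb _
    have ex : a + t = x ^ 9 := by
      rw [hx, ← Real.rpow_natCast, ← Real.rpow_mul pa.le]; norm_num
    have ey : b + t = y ^ 9 := by
      rw [hy, ← Real.rpow_natCast, ← Real.rpow_mul pb.le]; norm_num
    have e1 : (a + t) ^ (1 / 3 : ℝ) = x ^ 3 := by
      rw [hx, ← Real.rpow_natCast, ← Real.rpow_mul pa.le]; norm_num
    have e2 : (b + t) ^ (2 / 3 : ℝ) = y ^ 6 := by
      rw [hy, ← Real.rpow_natCast, ← Real.rpow_mul pb.le]; norm_num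
    have h1 := h (y / x) (by positivity)
    rw [e1, e2]
    calc S ≤ C * ((y / x) ^ 6 * a + ((y / x) ^ 3)⁻¹ * b) := h1
      _ ≤ C * ((y / x) ^ 6 * x ^ 9 + ((y / x) ^ 3)⁻¹ * y ^ 9) := by
          gcongr <;> linarith
      _ = _ := by field_simp; ring
  have ct : Continuous (fun t : ℝ => 2 * C * ((a + t) ^ (1 / 3 : ℝ) * (b + t) ^ (2 / 3 : ℝ))) := by
    have c1 : Continuous (fun t : ℝ => (a + t) ^ (1 / 3 : ℝ)) :=
      (continuous_const.add continuous_id).rpow_const fun _ => Or.inr (by norm_num)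
    have c2 : Continuous (fun t : ℝ => (b + t) ^ (2 / 3 : ℝ)) :=
      (continuous_const.add continuous_id).rpow_const fun _ => Or.inr (by norm_num)
    fun_prop
  have lim := (ct.tendsto 0).mono_left (nhdsWithin_le_nhds (s := Set.Ioi 0))
  simp only [add_zero] at lim
  exact ge_of_tendsto lim (by filter_upwards [self_mem_nhdsWithin] with t ht using key t ht)

open scoped Pointwise in
lemma smul_annulus {R : ℝ} (hR : 0 < R) : R • annulus 1 = annulus R := by
  ext x
  rw [Set.mem_smul_set_iff_inv_smul_mem₀ hR.ne']
  simp only [annulus, Set.mem_setOf_eq, norm_smul, norm_inv, Real.norm_eq_abs, abs_of_pos hR]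
  rw [inv_mul_lt_iff₀ hR, lt_inv_mul_iff₀ hR]
  constructor <;> rintro ⟨h1, h2⟩ <;> constructor <;> linarith

open scoped Pointwise in
lemma scaleR : ∃ C, 0 ≤ C ∧ ∀ (ρ π : E3 → ℝ) (u : E3 → E3) (M : ℝ), NS ρ π u M → ∀ R : ℝ, 0 < R →
    ∫ x in Metric.ball (0 : E3) (R / 2), ‖fderiv ℝ u x‖ ^ 2 ≤
      C * (R⁻¹ * ((∫ x in annulus R, ‖u x‖ ^ 3) ^ (1 / 3 : ℝ) *
        (∫ x in annulus R, Nm u M x * √(Nm u M x)) ^ (2 / 3 : ℝ))) := by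
  obtain ⟨C, hC, hs⟩ := scale1
  refine ⟨2 * C, by positivity, fun ρ π u M h R hR => ?_⟩
  have nN := Nm_nonneg u h.hM
  set a := ∫ x in annulus R, ‖u x‖ ^ 3
  set b := ∫ x in annulus R, Nm u M x * √(Nm u M x)
  have ha : 0 ≤ a := integral_nonneg fun x => by positivity
  have hb0 : 0 ≤ b := integral_nonneg fun x => mul_nonneg (nN x) (Real.sqrt_nonneg _)
  have fr : Module.finrank ℝ E3 = 3 := by simp
  have f1 : ∀ x, fderiv ℝ (fun z => u (R • z)) x = R • fderiv ℝ u (R • x) :=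
    fun x => fderiv_comp_smul R
  have eN : ∀ x, Nm (fun z => u (R • z)) (R * M) x = R * Nm u M (R • x) := by
    intro x
    unfold Nm
    rw [f1, norm_smul, Real.norm_eq_abs, abs_of_pos hR]; ring
  have e1 : ∫ x in annulus 1, ‖u (R • x)‖ ^ 3 = (R ^ 3)⁻¹ * a := by
    rw [Measure.setIntegral_comp_smul_of_pos volume (fun x => ‖u x‖ ^ 3) _ hR, smul_annulus hR, fr,
      smul_eq_mul]
  have e2 : ∫ x in annulus 1, Nm (fun z => u (R • z)) (R * M) x *
      √(Nm (fun z => u (R • z)) (R * M) x) = (R * √R) * ((R ^ 3)⁻¹ * b) := by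
    have : ∀ x, Nm (fun z => u (R • z)) (R * M) x * √(Nm (fun z => u (R • z)) (R * M) x) =
        (R * √R) * (fun y => Nm u M y * √(Nm u M y)) (R • x) := by
      intro x
      rw [eN, Real.sqrt_mul hR.le]; ring
    simp only [this]
    rw [integral_const_mul,
      Measure.setIntegral_comp_smul_of_pos volume (fun y => Nm u M y * √(Nm u M y)) _ hR,
      smul_annulus hR, fr, smul_eq_mul]
  have e3 : ∫ x in Metric.ball (0 : E3) (1 / 2), ‖fderiv ℝ (fun z => u (R • z)) x‖ ^ 2 =
      R⁻¹ * ∫ x in Metric.ball (0 : E3) (R / 2), ‖fderiv ℝ u x‖ ^ 2 := by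
    have : ∀ x, ‖fderiv ℝ (fun z => u (R • z)) x‖ ^ 2 =
        R ^ 2 * (fun y => ‖fderiv ℝ u y‖ ^ 2) (R • x) := by
      intro x
      rw [f1, norm_smul, Real.norm_eq_abs, abs_of_pos hR]; ring
    simp only [this]
    rw [integral_const_mul,
      Measure.setIntegral_comp_smul_of_pos volume (fun y => ‖fderiv ℝ u y‖ ^ 2) _ hR,
      smul_ball hR.ne', fr, smul_eq_mul, smul_zero, Real.norm_eq_abs, abs_of_pos hR,
      show R * (1 / 2) = R / 2 by ring]
    field_simp
  have h1 := opt (S := R⁻¹ * ∫ x in Metric.ball (0 : E3) (R / 2), ‖fderiv ℝ u x‖ ^ 2)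
    (a := (R ^ 3)⁻¹ * a) (b := (R * √R) * ((R ^ 3)⁻¹ * b)) hC (by positivity) (by positivity)
    (fun m hm => by
      have := hs _ _ _ _ (h.scale hR) m hm
      rw [e1, e2, e3] at this
      exact this)
  have e4 : ((R ^ 3)⁻¹ * a) ^ (1 / 3 : ℝ) = R⁻¹ * a ^ (1 / 3 : ℝ) := by
    rw [Real.mul_rpow (by positivity) ha, ← inv_pow, ← Real.rpow_natCast,
      ← Real.rpow_mul (by positivity)]
    norm_num
  have e5 : ((R * √R) * ((R ^ 3)⁻¹ * b)) ^ (2 / 3 : ℝ) = R⁻¹ * b ^ (2 / 3 : ℝ) := by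
    have : (R * √R) * ((R ^ 3)⁻¹ * b) = (√R)⁻¹ ^ 3 * b := by
      have h2 := Real.sq_sqrt hR.le
      have h3 : 0 < √R := Real.sqrt_pos.mpr hR
      set t := √R
      rw [← h2]; field_simp
    rw [this, Real.mul_rpow (by positivity) hb0, ← Real.rpow_natCast,
      ← Real.rpow_mul (by positivity)]
    norm_num
    left
    exact Real.sq_sqrt hR.le
  rw [e4, e5] at h1
  rw [inv_mul_le_iff₀ hR] at h1
  refine h1.trans_eq ?_
  field_simp

end NSC

namespace NSC

lemma vol_annulus {R : ℝ} (hR : 0 < R) : volume (annulus R) ≤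
    ENNReal.ofReal (R ^ 3) * volume (Metric.ball (0 : E3) 1) := by
  have fr : Module.finrank ℝ E3 = 3 := by simp
  have := Measure.addHaar_ball (volume : Measure E3) 0 hR.le
  rw [fr] at this
  rw [← this]
  exact measure_mono fun x hx => by simpa using hx.2

lemma holder_part {u : E3 → E3} (hu : ContDiff ℝ (⊤ : ℕ∞) u) {M p R : ℝ} (hM : 0 ≤ M) (hp : 3 ≤ p) :
    ENNReal.ofReal ((∫ x in annulus R, ‖u x‖ ^ 3) ^ (1 / 3 : ℝ)) ≤
      (∫⁻ x in annulus R, ENNReal.ofReal (‖u x‖ ^ p)) ^ (1 / p) *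
        volume (annulus R) ^ (1 / 3 - 1 / p) ∧
    ENNReal.ofReal ((∫ x in annulus R, Nm u M x * √(Nm u M x)) ^ (2 / 3 : ℝ)) ≤
      ENNReal.ofReal (1 + M) * ((∫⁻ x in annulus R, ENNReal.ofReal (‖fderiv ℝ u x‖ ^ (p / 2))) +
          ∫⁻ x in annulus R, ENNReal.ofReal (‖u x‖ ^ p)) ^ (2 / p) *
        volume (annulus R) ^ (2 / 3 - 2 / p) := by
  have p0 : 0 < p := by linarith
  have cu := hu.continuous
  have cf : Continuous (fderiv ℝ u) := hu.continuous_fderiv (by simp)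
  have cN := Nm_cont hu M
  have nN := Nm_nonneg u hM
  set ν := volume.restrict (annulus R)
  have vU : ν Set.univ = volume (annulus R) := by simp [ν]
  have en : ∀ (t q : ℝ), 0 ≤ t → 0 ≤ q → ‖t‖ₑ ^ q = ENNReal.ofReal (t ^ q) := by
    intro t q ht hq
    rw [Real.enorm_eq_ofReal ht, ENNReal.ofReal_rpow_of_nonneg ht hq]
  have en' : ∀ (t : E3) (q : ℝ), 0 ≤ q → ‖t‖ₑ ^ q = ENNReal.ofReal (‖t‖ ^ q) := by
    intro t q hq
    rw [← ofReal_norm, ENNReal.ofReal_rpow_of_nonneg (norm_nonneg _) hq]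
  constructor
  · have h1 : ENNReal.ofReal ((∫ x in annulus R, ‖u x‖ ^ 3) ^ (1 / 3 : ℝ)) = eLpNorm' u 3 ν := by
      rw [← ENNReal.ofReal_rpow_of_nonneg (integral_nonneg fun x => by positivity) (by norm_num),
        ofReal_integral_eq_lintegral_ofReal (intOn_annulus (by fun_prop) R)
          (Filter.Eventually.of_forall fun x => by positivity)]
      unfold eLpNorm'
      congr 1
      refine lintegral_congr fun x => ?_
      rw [en' _ _ (by norm_num)]
      congr 1
      exact_mod_cast (Real.rpow_natCast ‖u x‖ 3).symm
    have h2 : (∫⁻ x in annulus R, ENNReal.ofReal (‖u x‖ ^ p)) ^ (1 / p) = eLpNorm' u p ν := by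
      unfold eLpNorm'
      simp only [en' _ p p0.le]
      rfl
    rw [h1, h2, ← vU]
    exact eLpNorm'_le_eLpNorm'_mul_rpow_measure_univ (by norm_num) hp cu.aestronglyMeasurable
  · have h1 : ENNReal.ofReal ((∫ x in annulus R, Nm u M x * √(Nm u M x)) ^ (2 / 3 : ℝ)) =
        eLpNorm' (Nm u M) (3 / 2) ν := by
      rw [← ENNReal.ofReal_rpow_of_nonneg (integral_nonneg fun x =>
          mul_nonneg (nN x) (Real.sqrt_nonneg _)) (by norm_num),
        ofReal_integral_eq_lintegral_ofReal (intOn_annulus (by fun_prop) R)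
          (Filter.Eventually.of_forall fun x => mul_nonneg (nN x) (Real.sqrt_nonneg _))]
      unfold eLpNorm'
      rw [show (1 / (3 / 2) : ℝ) = 2 / 3 by norm_num]
      congr 1
      refine lintegral_congr fun x => ?_
      rw [en _ _ (nN x) (by norm_num), show (3 / 2 : ℝ) = 1 + 1 / 2 by norm_num,
        Real.rpow_add_of_nonneg (nN x) (by norm_num) (by norm_num), Real.rpow_one,
        Real.sqrt_eq_rpow]
    have h3 := eLpNorm'_le_eLpNorm'_mul_rpow_measure_univ (p := 3 / 2) (q := p / 2) (μ := ν)
      (by norm_num) (by linarith) cN.aestronglyMeasurable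
    rw [vU, show (1 / (3 / 2) - 1 / (p / 2) : ℝ) = 2 / 3 - 2 / p by field_simp] at h3
    rw [h1]
    refine h3.trans (mul_le_mul_left ?_ _)
    have h4 := eLpNorm'_add_le (q := p / 2) (μ := ν) (f := fun x => ‖fderiv ℝ u x‖)
      (g := M • fun x => ‖u x‖ ^ 2) cf.norm.aestronglyMeasurable
      ((cu.norm.pow 2).const_smul M).aestronglyMeasurable (by linarith)
    refine (h4 : eLpNorm' (Nm u M) (p / 2) ν ≤ _).trans ?_
    rw [eLpNorm'_const_smul M (by linarith)]
    set X := ∫⁻ x in annulus R, ENNReal.ofReal (‖fderiv ℝ u x‖ ^ (p / 2))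
    set Y := ∫⁻ x in annulus R, ENNReal.ofReal (‖u x‖ ^ p)
    have h5 : eLpNorm' (fun x => ‖fderiv ℝ u x‖) (p / 2) ν = X ^ (2 / p) := by
      unfold eLpNorm'
      rw [show 1 / (p / 2) = 2 / p by field_simp]
      congr 1
      exact lintegral_congr fun x => en _ _ (norm_nonneg _) (by linarith)
    have h6 : eLpNorm' (fun x => ‖u x‖ ^ 2) (p / 2) ν = Y ^ (2 / p) := by
      unfold eLpNorm'
      rw [show 1 / (p / 2) = 2 / p by field_simp]
      congr 1
      refine lintegral_congr fun x => ?_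
      rw [en _ _ (by positivity) (by linarith)]
      show ENNReal.ofReal ((‖u x‖ ^ 2) ^ (p / 2)) = ENNReal.ofReal (‖u x‖ ^ p)
      rw [← Real.rpow_natCast,
        ← Real.rpow_mul (norm_nonneg _)]
      congr 2
      push_cast; ring
    rw [h5, h6, Real.enorm_eq_ofReal hM, ENNReal.ofReal_add zero_le_one hM, ENNReal.ofReal_one,
      add_mul, one_mul]
    gcongr
    · exact le_self_add
    · exact le_add_self

end NSC

/-- **Caccioppoli-type estimate for the stationary inhomogeneous Navier–Stokes system.**
Let `(ρ, u, π)` be a smooth solution of `−Δu + ρ(u·∇)u + ∇π = 0`, `div u = 0`,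
`div(ρu) = 0` in `ℝ³`, with `ρ ∈ L^∞`, `∇u ∈ L²` and `u ∈ L^p_loc`, `∇u ∈ L^{p/2}_loc`
for some `3 ≤ p < ∞`.  Then there is `C > 0`, independent of `R`, such that for all `R > 1`,
`∫_{B_{R/2}} |∇u|² ≤ C (∫_{C(R/2,R)} |∇u|^{p/2} + ∫_{C(R/2,R)} |u|^p)^{2/p} R^{2-9/p}
(∫_{C(R/2,R)} |u|^p)^{1/p}`. -/
theorem caccioppoli_stationary_inhomogeneous (p : ℝ) (hp : 3 ≤ p)
    (ρ π : EuclideanSpace ℝ (Fin 3) → ℝ)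
    (u : EuclideanSpace ℝ (Fin 3) → EuclideanSpace ℝ (Fin 3))
    (hρ : ContDiff ℝ (⊤ : ℕ∞) ρ) (hu : ContDiff ℝ (⊤ : ℕ∞) u) (hπ : ContDiff ℝ (⊤ : ℕ∞) π)
    (hmom : ∀ x, ∀ i : Fin 3,
      -(∑ j : Fin 3, fderiv ℝ (fun y => fderiv ℝ (fun z => u z i) y (e j)) x (e j)) +
        ρ x * (∑ j : Fin 3, u x j * fderiv ℝ (fun y => u y i) x (e j)) +
        fderiv ℝ π x (e i) = 0)
    (hdiv : ∀ x, (∑ i : Fin 3, fderiv ℝ (fun y => u y i) x (e i)) = 0)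
    (hdivρ : ∀ x, (∑ i : Fin 3, fderiv ℝ (fun y => ρ y * u y i) x (e i)) = 0)
    (hρbdd : ∃ M : ℝ, ∀ x, |ρ x| ≤ M)
    (hgradL2 : (∫⁻ x, ENNReal.ofReal (‖fderiv ℝ u x‖ ^ 2)) < ∞)
    (huloc : ∀ r : ℝ, 0 < r →
      (∫⁻ x in Metric.ball (0 : EuclideanSpace ℝ (Fin 3)) r,
        ENNReal.ofReal (‖u x‖ ^ p)) < ∞)
    (hgradloc : ∀ r : ℝ, 0 < r →
      (∫⁻ x in Metric.ball (0 : EuclideanSpace ℝ (Fin 3)) r,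
        ENNReal.ofReal (‖fderiv ℝ u x‖ ^ (p / 2))) < ∞) :
    ∃ C : ℝ, 0 < C ∧ ∀ R : ℝ, 1 < R →
      (∫⁻ x in Metric.ball (0 : EuclideanSpace ℝ (Fin 3)) (R / 2),
          ENNReal.ofReal (‖fderiv ℝ u x‖ ^ 2)) ≤
        ENNReal.ofReal C *
          ((∫⁻ x in annulus R, ENNReal.ofReal (‖fderiv ℝ u x‖ ^ (p / 2))) +
              (∫⁻ x in annulus R, ENNReal.ofReal (‖u x‖ ^ p))) ^ (2 / p) *
          ENNReal.ofReal (R ^ (2 - 9 / p)) *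
          (∫⁻ x in annulus R, ENNReal.ofReal (‖u x‖ ^ p)) ^ (1 / p) := by
  obtain ⟨M, hM⟩ := hρbdd
  obtain ⟨C, hC, hs⟩ := NSC.scaleR
  have h : NSC.NS ρ π u M := ⟨hρ, hu, hπ, hmom, hdiv, hdivρ, hM⟩
  have hM0 := h.hM
  have p0 : 0 < p := by linarith
  set V := volume (Metric.ball (0 : EuclideanSpace ℝ (Fin 3)) 1) with hV
  have Vt : V ≠ ∞ := measure_ball_lt_top.ne
  have s0 : 0 ≤ 1 - 3 / p := by
    rw [sub_nonneg, div_le_one p0]; exact hp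
  refine ⟨C * (1 + M) * V.toReal ^ (1 - 3 / p) + 1, by positivity, fun R hR => ?_⟩
  have R0 : 0 < R := by linarith
  obtain ⟨k1, k2⟩ := NSC.holder_part (R := R) hu hM0 hp
  have cf : Continuous (fderiv ℝ u) := hu.continuous_fderiv (by simp)
  have i0 : IntegrableOn (fun x => ‖fderiv ℝ u x‖ ^ 2)
      (Metric.ball (0 : EuclideanSpace ℝ (Fin 3)) (R / 2)) :=
    (((cf.norm.pow 2).continuousOn.integrableOn_compact
      (isCompact_closedBall (0 : EuclideanSpace ℝ (Fin 3)) (R / 2)))).mono_set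
        Metric.ball_subset_closedBall
  have k0 := ENNReal.ofReal_le_ofReal (hs ρ π u M h R R0)
  rw [ofReal_integral_eq_lintegral_ofReal i0 (Filter.Eventually.of_forall fun x => by positivity)]
    at k0
  refine k0.trans ?_
  have a0 : 0 ≤ (∫ x in annulus R, ‖u x‖ ^ 3) ^ (1 / 3 : ℝ) :=
    Real.rpow_nonneg (integral_nonneg fun x => by positivity) _
  rw [ENNReal.ofReal_mul hC, ENNReal.ofReal_mul (by positivity), ENNReal.ofReal_mul a0]
  set X := ∫⁻ x in annulus R, ENNReal.ofReal (‖fderiv ℝ u x‖ ^ (p / 2))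
  set Y := ∫⁻ x in annulus R, ENNReal.ofReal (‖u x‖ ^ p)
  set Q := volume (annulus R)
  have s1 : 0 ≤ 1 / 3 - 1 / p := by
    have : 1 / 3 - 1 / p = (1 - 3 / p) / 3 := by field_simp
    rw [this]; positivity
  have s2 : 0 ≤ 2 / 3 - 2 / p := by
    have : 2 / 3 - 2 / p = 2 * (1 - 3 / p) / 3 := by field_simp
    rw [this]; positivity
  have q1 : Q ^ (1 / 3 - 1 / p) * Q ^ (2 / 3 - 2 / p) ≤
      ENNReal.ofReal (R ^ (3 - 9 / p)) * ENNReal.ofReal (V.toReal ^ (1 - 3 / p)) := by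
    rw [← ENNReal.rpow_add_of_nonneg _ _ s1 s2,
      show 1 / 3 - 1 / p + (2 / 3 - 2 / p) = 1 - 3 / p by ring]
    refine (ENNReal.rpow_le_rpow (NSC.vol_annulus R0) s0).trans_eq ?_
    rw [ENNReal.mul_rpow_of_nonneg _ _ s0, ENNReal.ofReal_rpow_of_nonneg (by positivity) s0,
      ← ENNReal.ofReal_rpow_of_nonneg ENNReal.toReal_nonneg s0, ENNReal.ofReal_toReal Vt,
      ← Real.rpow_natCast, ← Real.rpow_mul R0.le]
    congr 3
    push_cast; ring
  have q2 : ENNReal.ofReal R⁻¹ * ENNReal.ofReal (R ^ (3 - 9 / p)) =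
      ENNReal.ofReal (R ^ (2 - 9 / p)) := by
    rw [← ENNReal.ofReal_mul (by positivity), ← Real.rpow_neg_one, ← Real.rpow_add R0]
    congr 2; ring
  calc _ ≤ ENNReal.ofReal C * (ENNReal.ofReal R⁻¹ * ((Y ^ (1 / p) * Q ^ (1 / 3 - 1 / p)) *
        (ENNReal.ofReal (1 + M) * (X + Y) ^ (2 / p) * Q ^ (2 / 3 - 2 / p)))) := by
        gcongr
    _ = ENNReal.ofReal C * ENNReal.ofReal (1 + M) * (X + Y) ^ (2 / p) * ENNReal.ofReal R⁻¹ *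
        Y ^ (1 / p) * (Q ^ (1 / 3 - 1 / p) * Q ^ (2 / 3 - 2 / p)) := by ring
    _ ≤ ENNReal.ofReal C * ENNReal.ofReal (1 + M) * (X + Y) ^ (2 / p) * ENNReal.ofReal R⁻¹ *
        Y ^ (1 / p) *
        (ENNReal.ofReal (R ^ (3 - 9 / p)) * ENNReal.ofReal (V.toReal ^ (1 - 3 / p))) := by
        gcongr
    _ = (ENNReal.ofReal C * ENNReal.ofReal (1 + M) * ENNReal.ofReal (V.toReal ^ (1 - 3 / p))) *
        (X + Y) ^ (2 / p) * (ENNReal.ofReal R⁻¹ * ENNReal.ofReal (R ^ (3 - 9 / p))) *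
        Y ^ (1 / p) := by ring
    _ = ENNReal.ofReal (C * (1 + M) * V.toReal ^ (1 - 3 / p)) *
        (X + Y) ^ (2 / p) * ENNReal.ofReal (R ^ (2 - 9 / p)) * Y ^ (1 / p) := by
        rw [q2, ENNReal.ofReal_mul (by positivity), ENNReal.ofReal_mul hC]
    _ ≤ _ := by
        gcongr
        linarith
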